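/- arXiv:2409.12552 — 2 statements merged into one kernel-verified Lean document; each statement's English description precedes it below -/
import Mathlib

section
/- Let n ≥ 5 and let Ā = A[B_n]/Z(A[B_n]) with canonical projection π : A[B_n] → Ā. For every group endomorphism φ̄ of Ā there exists a group endomorphism φ of A[B_n] such that π ∘ φ = φ̄ ∘ π (i.e., every endomorphism of Ā lifts to an endomorphism of A[B_n]). -/
/-- The defining relators of the Artin group of type `Bₙ`, as elements of the free
group on `n` generators (0-indexed: generator `i` corresponds to `r_{i+1}`). -/
def BnRels (n : ℕ) : Set (FreeGroup (Fin n)) :=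
  {w | (∃ i j : Fin n, (i : ℕ) + 1 = (j : ℕ) ∧ (j : ℕ) + 1 < n ∧
          w = FreeGroup.of i * FreeGroup.of j * FreeGroup.of i *
              (FreeGroup.of j * FreeGroup.of i * FreeGroup.of j)⁻¹) ∨
       (∃ i j : Fin n, (i : ℕ) + 2 = n ∧ (j : ℕ) + 1 = n ∧
          w = FreeGroup.of i * FreeGroup.of j * FreeGroup.of i * FreeGroup.of j *
              (FreeGroup.of j * FreeGroup.of i * FreeGroup.of j * FreeGroup.of i)⁻¹) ∨
       (∃ i j : Fin n, (i : ℕ) + 2 ≤ (j : ℕ) ∧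
          w = FreeGroup.of i * FreeGroup.of j * (FreeGroup.of j * FreeGroup.of i)⁻¹)}

/-- The Artin group `A[Bₙ]` of type `Bₙ`. -/
abbrev ArtinB (n : ℕ) := PresentedGroup (BnRels n)

/-- The standard generator `r_i` (1-indexed, `1 ≤ i ≤ n`). -/
def rB (n i : ℕ) : ArtinB n :=
  if h : i - 1 < n then PresentedGroup.of ⟨i - 1, h⟩ else 1

/-- `ρ_B = r_1 r_2 ⋯ r_n`. -/
def ρB (n : ℕ) : ArtinB n := ((List.range n).map fun i => rB n (i + 1)).prod

/-- `Δ_B = ρ_B ^ n`, the generator of the center. -/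
def ΔB (n : ℕ) : ArtinB n := ρB n ^ n

/-- `t_i` for `i` read modulo `n`: `t_i = r_i` for `1 ≤ i ≤ n-1`,
and `t_0 = ρ_B r_{n-1} ρ_B⁻¹`. -/
def tB (n i : ℕ) : ArtinB n :=
  if i % n = 0 then ρB n * rB n (n - 1) * (ρB n)⁻¹ else rB n (i % n)

/-- `Δ_Y = (t_1⋯t_{n-1})(t_1⋯t_{n-2})⋯(t_1t_2)t_1`, the Garside element of the
parabolic subgroup of type `A_{n-1}`. -/
def ΔY (n : ℕ) : ArtinB n :=
  ((List.range (n - 1)).map fun k =>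
    ((List.range (n - 1 - k)).map fun i => rB n (i + 1)).prod).prod

/-- `ρ_0 = t_1 t_2 ⋯ t_{n-1}`. -/
def ρ₀B (n : ℕ) : ArtinB n := ((List.range (n - 1)).map fun i => rB n (i + 1)).prod

/-- `ρ_1 = t_1⁻¹ t_2⁻¹ ⋯ t_{n-1}⁻¹`. -/
def ρ₁B (n : ℕ) : ArtinB n := ((List.range (n - 1)).map fun i => (rB n (i + 1))⁻¹).prod

/-- `ρ_k` for `k ∈ {0,1}`. -/
def ρkB (n k : ℕ) : ArtinB n := if k = 0 then ρ₀B n else ρ₁B n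

/-- `v_k = ρ_k t_{n-1} ρ_k⁻¹` for `k ∈ {0,1}`. -/
def vB (n k : ℕ) : ArtinB n := ρkB n k * rB n (n - 1) * (ρkB n k)⁻¹

/-- `δ = r_{n-1} r_{n-2} ⋯ r_2 r_1² r_2 ⋯ r_{n-2} r_{n-1}`. -/
def δB (n : ℕ) : ArtinB n :=
  ((List.range (n - 2)).map fun i => rB n (n - 1 - i)).prod * rB n 1 ^ 2 *
  ((List.range (n - 2)).map fun i => rB n (i + 2)).prod

/-- The quotient `Ā = A[Bₙ]/Z(A[Bₙ])`. -/
abbrev AbarB (n : ℕ) := ArtinB n ⧸ Subgroup.center (ArtinB n)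

/-- The canonical projection `π : A[Bₙ] → Ā`. -/
def πB (n : ℕ) : ArtinB n →* AbarB n := QuotientGroup.mk' (Subgroup.center (ArtinB n))

/-- `t̄_i = π(t_i)`. -/
def tbar (n i : ℕ) : AbarB n := πB n (tB n i)

/-- `ρ̄_B = π(ρ_B)`. -/
def ρbar (n : ℕ) : AbarB n := πB n (ρB n)

/-- The composition `conj_x ∘ φ` of an endomorphism with an inner automorphism. -/
def conjComp {G : Type*} [Group G] (x : G) (φ : G →* G) : G →* G :=
  (MulAut.conj x).toMonoidHom.comp φ

/-- Type (1): there are commuting `g, h` with `φ(t_i) = g` for all `0 ≤ i ≤ n-1`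
and `φ(ρ_B) = h`. -/
def IsType1 (n : ℕ) (φ : ArtinB n →* ArtinB n) : Prop :=
  ∃ g h : ArtinB n, g * h = h * g ∧ (∀ i < n, φ (tB n i) = g) ∧ φ (ρB n) = h

/-- Type (2a) with parameters `ε ∈ {1,-1}`, `p q : ℤ`. -/
def IsType2a (n : ℕ) (ε p q : ℤ) (φ : ArtinB n →* ArtinB n) : Prop :=
  (ε = 1 ∨ ε = -1) ∧ (∀ i < n, φ (tB n i) = tB n i ^ ε * ΔB n ^ p) ∧
    φ (ρB n) = ρB n * ΔB n ^ q

/-- Type (2b) with parameters `ε ∈ {1,-1}`, `p q : ℤ`. -/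
def IsType2b (n : ℕ) (ε p q : ℤ) (φ : ArtinB n →* ArtinB n) : Prop :=
  (ε = 1 ∨ ε = -1) ∧ (∀ i < n, φ (tB n i) = tB n (n - i) ^ ε * ΔB n ^ p) ∧
    φ (ρB n) = (ρB n)⁻¹ * ΔB n ^ q

/-- Type (3) with parameters `ε ∈ {1,-1}`, `k ∈ {0,1}`, `p q r s : ℤ`. -/
def IsType3 (n : ℕ) (ε : ℤ) (k : ℕ) (p q r s : ℤ) (φ : ArtinB n →* ArtinB n) : Prop :=
  (ε = 1 ∨ ε = -1) ∧ (k = 0 ∨ k = 1) ∧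
    (∀ i, 1 ≤ i → i ≤ n - 1 → φ (tB n i) = tB n i ^ ε * ΔY n ^ (2 * p) * ΔB n ^ q) ∧
    φ (tB n 0) = vB n k ^ ε * ΔY n ^ (2 * p) * ΔB n ^ q ∧
    φ (ρB n) = ρkB n k * ΔY n ^ (2 * r) * ΔB n ^ s

/-! The kernel `Z` of `πB` meets the commutator subgroup of `A[Bₙ]` trivially, so `A[Bₙ]` is the
fibre product of `Ā` and its own abelianization over the abelianization of `Ā`. Hence lifting a
homomorphism into `Ā` reduces to lifting a homomorphism into an abelian group, and the latter is
possible because the abelianization of the source is free abelian.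

That `Z` meets the commutator subgroup trivially is seen on the decomposition of `A[B_{m+1}]` into
point pushes, forming a free group `⟨x_0, …, x_m⟩`, and braids, acting on it by Artin's
automorphisms. If `w b` is central, with `w` a point push and `b` a braid, then `b` acts as
conjugation by `w⁻¹`. Braids fix `x_m ⋯ x_0`, so `w` commutes with it; a commutator has no total
exponent in the `x_i`, which forces `w = 1`. Then `b` acts trivially, and `b = 1` because Artin's
action is faithful.

Faithfulness is proved by induction on the number of strands: a braid acting trivially does not move
the last strand, so it lies in the subgroup generated by the other generators and the square of the
last one, which again consists of products of point pushes and braids on fewer strands. -/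

open FreeGroup (of)

section FreeGroup

variable {α : Type*}

theorem eq_of_commute_freeGroup_of {i j : α} (h : Commute (of i) (of j)) : i = j := by
  classical
  by_contra hij
  have hswap := h.map (FreeGroup.lift fun k =>
    if k = i then Equiv.swap (0 : Fin 3) 1 else Equiv.swap 1 2)
  simp only [FreeGroup.lift_apply_of, if_neg (Ne.symm hij)] at hswap
  exact absurd hswap.eq (by decide)

theorem eq_of_isConj_freeGroup_of {i j : α} (h : IsConj (of i) (of j)) : i = j :=
  FreeAbelianGroup.of_injective <|
    congrArg Additive.ofMul (isConj_iff_eq.1 (Abelianization.of.map_isConj h))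

theorem isCyclic_of_isFreeGroup (G : Type*) [Group G] [IsFreeGroup G] [IsMulCommutative G] :
    IsCyclic G := by
  let e := IsFreeGroup.toFreeGroup G
  have : Subsingleton (IsFreeGroup.Generators G) := ⟨fun a b => eq_of_commute_freeGroup_of <| by
    simpa using (show Commute (e.symm (of a)) (e.symm (of b)) from mul_comm' _ _).map e⟩
  rcases isEmpty_or_nonempty (IsFreeGroup.Generators G) with hempty | hne
  · have := e.toEquiv.subsingleton
    infer_instance
  · have := uniqueOfSubsingleton hne.some
    exact isCyclic_of_surjective e.symm e.symm.surjective

theorem exists_zpow_eq_of_commute_freeGroup {u v : FreeGroup α} (h : Commute u v) :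
    ∃ (d : FreeGroup α) (a b : ℤ), d ^ a = u ∧ d ^ b = v := by
  have : IsMulCommutative (Subgroup.closure {u, v}) :=
    Subgroup.isMulCommutative_closure (by
      rintro x (rfl | rfl) y (rfl | rfl)
      exacts [rfl, h, h.symm, rfl])
  obtain ⟨d, hd⟩ := (isCyclic_of_isFreeGroup (Subgroup.closure {u, v})).exists_generator
  obtain ⟨a, ha⟩ := hd ⟨u, Subgroup.subset_closure (by simp)⟩
  obtain ⟨b, hb⟩ := hd ⟨v, Subgroup.subset_closure (by simp)⟩
  exact ⟨d, a, b, congrArg Subtype.val ha, congrArg Subtype.val hb⟩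

theorem map_eq_one_of_commute_freeGroup {T : Type*} [Group T] [IsMulTorsionFree T]
    (ψ : FreeGroup α →* T) {u v : FreeGroup α} (h : Commute u v) (hv : v ≠ 1)
    (hψ : ψ v = 1) : ψ u = 1 := by
  obtain ⟨d, a, b, rfl, rfl⟩ := exists_zpow_eq_of_commute_freeGroup h
  have hb : b ≠ 0 := by
    rintro rfl
    exact hv (zpow_zero d)
  have hd : ψ d = 1 := by
    rw [map_zpow] at hψ
    exact (IsMulTorsionFree.zpow_eq_one_iff_left hb).1 hψ
  rw [map_zpow, hd, one_zpow]

theorem mulAut_freeGroup_ext {f g : MulAut (FreeGroup α)} (h : ∀ k, f (of k) = g (of k)) :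
    f = g :=
  MulEquiv.toMonoidHom_injective (FreeGroup.ext_hom _ _ h)

end FreeGroup

section BraidAut

/-- The Artin automorphism `x_{i+1} ↦ x_i`, `x_i ↦ x_i⁻¹ x_{i+1} x_i` by which the `i`-th standard
generator of a braid group acts. A free group on infinitely many generators serves all numbers of
strands at once. -/
def braidAut (i : ℕ) : MulAut (FreeGroup ℕ) :=
  MonoidHom.toMulEquiv
    (FreeGroup.lift fun k => if k = i then (of i)⁻¹ * of (i + 1) * of i
      else if k = i + 1 then of i else of k)
    (FreeGroup.lift fun k => if k = i then of (i + 1)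
      else if k = i + 1 then of (i + 1) * of i * (of (i + 1))⁻¹ else of k)
    (by
      ext k
      rcases eq_or_ne k i with rfl | hi
      · simp [mul_assoc]
      rcases eq_or_ne k (i + 1) with rfl | hi'
      · simp
      · simp [hi, hi'])
    (by
      ext k
      rcases eq_or_ne k i with rfl | hi
      · simp
      rcases eq_or_ne k (i + 1) with rfl | hi'
      · simp [mul_assoc]
      · simp [hi, hi'])

@[simp] theorem braidAut_of_self (i : ℕ) :
    braidAut i (of i) = (of i)⁻¹ * of (i + 1) * of i := by
  simp [braidAut]

@[simp] theorem braidAut_of_succ (i : ℕ) : braidAut i (of (i + 1)) = of i := by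
  simp [braidAut]

theorem braidAut_of_of_ne {i k : ℕ} (h : k ≠ i) (h' : k ≠ i + 1) :
    braidAut i (of k) = of k := by
  simp [braidAut, h, h']

theorem braidAut_braid (i : ℕ) :
    braidAut i * braidAut (i + 1) * braidAut i =
      braidAut (i + 1) * braidAut i * braidAut (i + 1) := by
  refine mulAut_freeGroup_ext fun k => ?_
  have hi : braidAut (i + 1) (of i) = of i := braidAut_of_of_ne (by lia) (by lia)
  have hi2 : braidAut i (of (i + 1 + 1)) = of (i + 1 + 1) :=
    braidAut_of_of_ne (by lia) (by lia)
  rcases eq_or_ne k i with rfl | h0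
  · simp [hi, hi2, mul_assoc]
  rcases eq_or_ne k (i + 1) with rfl | h1
  · simp [hi, hi2, mul_assoc]
  rcases eq_or_ne k (i + 1 + 1) with rfl | h2
  · simp [hi, hi2]
  simp [braidAut_of_of_ne h0 h1, braidAut_of_of_ne h1 h2]

theorem braidAut_commute {i j : ℕ} (h : i + 2 ≤ j) : Commute (braidAut i) (braidAut j) := by
  refine mulAut_freeGroup_ext fun k => ?_
  by_cases hk : k ≤ i + 1
  · have hfix : ∀ l ≤ i + 1, braidAut j (of l) = of l :=
      fun l hl => braidAut_of_of_ne (by lia) (by lia)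
    rcases eq_or_ne k i with rfl | h0
    · simp [hfix]
    rcases eq_or_ne k (i + 1) with rfl | h1
    · simp [hfix]
    simp [braidAut_of_of_ne h0 h1, hfix k hk]
  · have hfix : ∀ l, i + 1 < l → braidAut i (of l) = of l :=
      fun l hl => braidAut_of_of_ne (by lia) (by lia)
    rcases eq_or_ne k j with rfl | h0
    · simp [hfix k (by lia), hfix (k + 1) (by lia)]
    rcases eq_or_ne k (j + 1) with rfl | h1
    · simp [hfix j (by lia), hfix (j + 1) (by lia)]
    simp [braidAut_of_of_ne h0 h1, hfix k (by lia)]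

/-- The endomorphism of the free group killing the generators `x_i` with `i > m`: a retraction onto
the free group of the strands `0, …, m`. -/
def truncHom (m : ℕ) : FreeGroup ℕ →* FreeGroup ℕ :=
  FreeGroup.lift fun k => if k ≤ m then of k else 1

theorem truncHom_of_le {m k : ℕ} (h : k ≤ m) : truncHom m (of k) = of k := by
  simp [truncHom, h]

theorem truncHom_of_lt {m k : ℕ} (h : m < k) : truncHom m (of k) = 1 := by
  simp [truncHom, h]

theorem truncHom_braidAut {m j : ℕ} (h : j < m) (x : FreeGroup ℕ) :
    truncHom m (braidAut j x) = braidAut j (truncHom m x) := by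
  suffices (truncHom m).comp (braidAut j).toMonoidHom =
      (braidAut j).toMonoidHom.comp (truncHom m) from DFunLike.congr_fun this x
  refine FreeGroup.ext_hom _ _ fun k => ?_
  rcases eq_or_ne k j with rfl | h0
  · simp [truncHom_of_le h.le, truncHom_of_le h]
  rcases eq_or_ne k (j + 1) with rfl | h1
  · simp [truncHom_of_le h.le, truncHom_of_le h]
  rcases le_or_gt k m with hk | hk
  · simp [braidAut_of_of_ne h0 h1, truncHom_of_le hk]
  · simp [braidAut_of_of_ne h0 h1, truncHom_of_lt hk]

theorem truncHom_braidAut_sq (m : ℕ) (x : FreeGroup ℕ) :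
    truncHom m ((braidAut m ^ 2) x) = truncHom m x := by
  suffices (truncHom m).comp (braidAut m ^ 2).toMonoidHom = truncHom m from
    DFunLike.congr_fun this x
  refine FreeGroup.ext_hom _ _ fun k => ?_
  have hkill := truncHom_of_lt m.lt_succ_self
  rcases eq_or_ne k m with rfl | h0
  · simp [hkill, pow_two]
  rcases eq_or_ne k (m + 1) with rfl | h1
  · simp [hkill, pow_two]
  simp [braidAut_of_of_ne h0 h1, pow_two]

/-- The product `x_{k-1} ⋯ x_1 x_0`, the loop around the first `k` points, which braids on these
points fix. -/
def descProd : ℕ → FreeGroup ℕ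
  | 0 => 1
  | k + 1 => of k * descProd k

theorem braidAut_descProd_of_le {j k : ℕ} (h : k ≤ j) :
    braidAut j (descProd k) = descProd k := by
  induction k with
  | zero => simp [descProd]
  | succ k ih =>
    rw [descProd, map_mul, ih (by lia), braidAut_of_of_ne (by lia) (by lia)]

theorem braidAut_descProd_of_lt {j k : ℕ} (h : j + 1 < k) :
    braidAut j (descProd k) = descProd k := by
  induction k with
  | zero => simp at h
  | succ k ih =>
    rcases (show j + 1 < k ∨ k = j + 1 by lia) with hk | rfl
    · rw [descProd, map_mul, ih hk, braidAut_of_of_ne (by lia) (by lia)]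
    · simp [descProd, braidAut_descProd_of_le, mul_assoc]

theorem truncHom_descProd {m k : ℕ} (h : k ≤ m + 1) :
    truncHom m (descProd k) = descProd k := by
  induction k with
  | zero => simp [descProd]
  | succ k ih => rw [descProd, map_mul, ih (by lia), truncHom_of_le (by lia)]

end BraidAut

section PointPush

/-- After killing `x_{m+1}, x_{m+2}, …`, the automorphism `α` acts trivially and `w⁻¹` conjugates
`x_{m+1}` to its image: `α` pushes the point of `x_{m+1}` around the loop `w` in the plane punctured
at the points of `x_0, …, x_m`. -/
structure IsPointPush (m : ℕ) (α : MulAut (FreeGroup ℕ)) (w : FreeGroup ℕ) : Prop where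
  truncHom_apply : ∀ x, truncHom m (α x) = truncHom m x
  exists_conj : ∃ c, truncHom m c = w⁻¹ ∧ α (of (m + 1)) = c * of (m + 1) * c⁻¹

namespace IsPointPush

variable {m : ℕ} {α β : MulAut (FreeGroup ℕ)} {v w : FreeGroup ℕ}

theorem one : IsPointPush m 1 1 :=
  ⟨fun _ => rfl, 1, by simp⟩

theorem mul (hα : IsPointPush m α v) (hβ : IsPointPush m β w) :
    IsPointPush m (α * β) (v * w) := by
  obtain ⟨c, hc, hcα⟩ := hα.exists_conj
  obtain ⟨d, hd, hdβ⟩ := hβ.exists_conj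
  refine ⟨fun x => by rw [MulAut.mul_apply, hα.truncHom_apply, hβ.truncHom_apply],
    α d * c, ?_, ?_⟩
  · rw [map_mul, hα.truncHom_apply, hc, hd, mul_inv_rev]
  · simp [hcα, hdβ, mul_assoc]

theorem inv (hα : IsPointPush m α w) : IsPointPush m α⁻¹ w⁻¹ := by
  obtain ⟨c, hc, hcα⟩ := hα.exists_conj
  have htrunc : ∀ x, truncHom m (α⁻¹ x) = truncHom m x := fun x => by
    rw [← hα.truncHom_apply, MulAut.apply_inv_self]
  refine ⟨htrunc, (α⁻¹ c)⁻¹, by rw [map_inv, htrunc, hc], α.injective ?_⟩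
  simp [hcα, mul_assoc]

theorem conj (hα : IsPointPush m α w) (hβ : ∀ x, truncHom m (β x) = β (truncHom m x))
    (hfix : β (of (m + 1)) = of (m + 1)) : IsPointPush m (β * α * β⁻¹) (β w) := by
  obtain ⟨c, hc, hcα⟩ := hα.exists_conj
  have hfix' : β⁻¹ (of (m + 1)) = of (m + 1) :=
    β.injective (by rw [MulAut.apply_inv_self, hfix])
  refine ⟨fun x => ?_, β c, by rw [hβ, hc, map_inv], by simp [hfix, hfix', hcα]⟩
  rw [MulAut.mul_apply, MulAut.mul_apply, hβ, hα.truncHom_apply, ← hβ, MulAut.apply_inv_self]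

theorem braidAut_sq (m : ℕ) : IsPointPush m (braidAut m ^ 2) (of m) :=
  ⟨truncHom_braidAut_sq m, (of m)⁻¹, by rw [map_inv, truncHom_of_le le_rfl], by simp [pow_two]⟩

theorem eq_one (hα : IsPointPush m α w) (hfix : α (of (m + 1)) = of (m + 1)) : w = 1 := by
  obtain ⟨c, hc, hcα⟩ := hα.exists_conj
  have hcomm : Commute c (of (m + 1)) := mul_inv_eq_iff_eq_mul.1 (hcα.symm.trans hfix)
  have hone : truncHom m c = 1 :=
    map_eq_one_of_commute_freeGroup _ hcomm (FreeGroup.of_ne_one _) (truncHom_of_lt m.lt_succ_self)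
  exact inv_eq_one.1 (hc.symm.trans hone)

end IsPointPush

end PointPush

section BraidSystem

variable {G : Type*} [Group G]

/-- `σ_0, …, σ_{m-1}` satisfy the relations of the braid group on `m + 1` strands. -/
structure IsBraidSystem (m : ℕ) (σ : ℕ → G) : Prop where
  braid : ∀ i, i + 1 < m → σ i * σ (i + 1) * σ i = σ (i + 1) * σ i * σ (i + 1)
  commute : ∀ i j, i + 2 ≤ j → j < m → Commute (σ i) (σ j)

/-- `σ_0, …, σ_{m-1}, ρ` satisfy the relations of the standard generators of `A[B_{m+1}]`. -/
structure IsTypeBSystem (m : ℕ) (σ : ℕ → G) (ρ : G) : Prop extends IsBraidSystem m σ where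
  commute_last : ∀ i, i + 1 < m → Commute (σ i) ρ
  four : ∀ i, i + 1 = m → σ i * ρ * σ i * ρ = ρ * σ i * ρ * σ i

/-- The subgroup generated by `σ_0, …, σ_{m-1}`. -/
abbrev braidSubgroup (σ : ℕ → G) (m : ℕ) : Subgroup G := Subgroup.closure (σ '' Set.Iio m)

/-- The subgroup generated by `σ_0, …, σ_{m-1}, ρ`. -/
abbrev typeBSubgroup (σ : ℕ → G) (ρ : G) (m : ℕ) : Subgroup G :=
  Subgroup.closure (insert ρ (σ '' Set.Iio m))

theorem mem_braidSubgroup (σ : ℕ → G) {m i : ℕ} (hi : i < m) : σ i ∈ braidSubgroup σ m :=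
  Subgroup.subset_closure ⟨i, hi, rfl⟩

theorem braidSubgroup_le_typeBSubgroup (σ : ℕ → G) (ρ : G) (m : ℕ) :
    braidSubgroup σ m ≤ typeBSubgroup σ ρ m :=
  Subgroup.closure_mono (Set.subset_insert _ _)

theorem last_mem_typeBSubgroup (σ : ℕ → G) (ρ : G) (m : ℕ) : ρ ∈ typeBSubgroup σ ρ m :=
  Subgroup.subset_closure (Set.mem_insert _ _)

theorem IsBraidSystem.mono {m k : ℕ} {σ : ℕ → G} (h : IsBraidSystem m σ) (hk : k ≤ m) :
    IsBraidSystem k σ :=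
  ⟨fun i hi => h.braid i (by lia), fun i j hij hj => h.commute i j hij (by lia)⟩

theorem IsBraidSystem.map {H : Type*} [Group H] {m : ℕ} {σ : ℕ → G} (h : IsBraidSystem m σ)
    (φ : G →* H) : IsBraidSystem m fun i => φ (σ i) where
  braid i hi := by simpa only [map_mul] using congrArg φ (h.braid i hi)
  commute i j hij hj := (h.commute i j hij hj).map φ

theorem isBraidSystem_braidAut (m : ℕ) : IsBraidSystem m braidAut :=
  ⟨fun i _ => braidAut_braid i, fun _ _ hij _ => braidAut_commute hij⟩

theorem four_of_braid {s t : G} (h : s * t * s = t * s * t) :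
    s * t ^ 2 * s * t ^ 2 = t ^ 2 * s * t ^ 2 * s := by
  have hcomm : Commute (s * t ^ 2 * s) t :=
    calc s * t ^ 2 * s * t = s * t * (t * s * t) := by simp only [pow_two, mul_assoc]
      _ = (s * t * s) * t * s := by rw [← h]; simp only [mul_assoc]
      _ = t * (s * t ^ 2 * s) := by rw [h]; simp only [pow_two, mul_assoc]
  simpa only [mul_assoc] using (hcomm.pow_right 2).eq

theorem IsBraidSystem.isTypeBSystem_sq {m : ℕ} {σ : ℕ → G} (h : IsBraidSystem (m + 1) σ) :
    IsTypeBSystem m σ (σ m ^ 2) where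
  toIsBraidSystem := h.mono m.le_succ
  commute_last i hi := (h.commute i m hi m.lt_succ_self).pow_right 2
  four := by
    rintro i rfl
    exact four_of_braid (h.braid i (by lia))

theorem isTypeBSystem_const {A : Type*} [CommGroup A] (m : ℕ) (a b : A) :
    IsTypeBSystem m (fun _ => a) b :=
  ⟨⟨fun _ _ => rfl, fun _ _ _ _ => Commute.refl a⟩, fun _ _ => Commute.all a b,
    fun _ _ => by ac_rfl⟩

theorem IsBraidSystem.apply_eq_apply_zero_of_comm {A : Type*} [CommGroup A] {m : ℕ} {σ : ℕ → A}
    (h : IsBraidSystem m σ) {i : ℕ} (hi : i < m) : σ i = σ 0 := by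
  induction i with
  | zero => rfl
  | succ i ih =>
    have hb := h.braid i hi
    rw [mul_comm (σ (i + 1)) (σ i)] at hb
    exact (mul_left_cancel hb).symm.trans (ih (by lia))

end BraidSystem

section AscProd

variable {G : Type*} [Group G] {m : ℕ} {σ : ℕ → G}

/-- The product `σ_i σ_{i+1} ⋯ σ_{m-1}`, which carries the last strand to the `i`-th one. -/
def ascProd (σ : ℕ → G) (m i : ℕ) : G := ((List.range' i (m - i)).map σ).prod

@[simp] theorem ascProd_self (σ : ℕ → G) (m : ℕ) : ascProd σ m m = 1 := by simp [ascProd]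

theorem ascProd_of_lt (σ : ℕ → G) {m i : ℕ} (h : i < m) :
    ascProd σ m i = σ i * ascProd σ m (i + 1) := by
  obtain ⟨d, rfl⟩ := Nat.exists_eq_add_of_lt h
  rw [ascProd, ascProd, show i + d + 1 - i = d + 1 by lia,
    show i + d + 1 - (i + 1) = d by lia, List.range'_succ, List.map_cons, List.prod_cons]

theorem ascProd_mem {i : ℕ} (hi : i ≤ m) : ascProd σ m i ∈ braidSubgroup σ m := by
  induction hi using Nat.decreasingInduction with
  | self => simp
  | of_succ i hi ih =>
    rw [ascProd_of_lt σ hi]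
    exact mul_mem (mem_braidSubgroup σ hi) ih

theorem IsBraidSystem.commute_ascProd (h : IsBraidSystem m σ) {j i : ℕ} (hj : j + 1 < i)
    (hi : i ≤ m) : Commute (σ j) (ascProd σ m i) := by
  induction hi using Nat.decreasingInduction with
  | self => simp
  | of_succ i hi ih =>
    rw [ascProd_of_lt σ hi]
    exact (h.commute j i (by lia) hi).mul_right (ih (by lia))

theorem IsBraidSystem.semiconjBy_ascProd (h : IsBraidSystem m σ) {j i : ℕ} (hj : i ≤ j)
    (hm : j + 1 < m) : SemiconjBy (ascProd σ m i) (σ j) (σ (j + 1)) := by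
  induction hj using Nat.decreasingInduction with
  | self =>
    have hbraid : SemiconjBy (σ j * σ (j + 1)) (σ j) (σ (j + 1)) := by
      simpa only [SemiconjBy, mul_assoc] using h.braid j hm
    have hcomm := (h.commute_ascProd (show j + 1 < j + 2 by lia) hm).symm
    rw [ascProd_of_lt σ (show j < m by lia), ascProd_of_lt σ hm, ← mul_assoc]
    exact hbraid.mul_left hcomm
  | of_succ i hi ih =>
    rw [ascProd_of_lt σ (show i < m by lia)]
    exact (h.commute i (j + 1) (by lia) hm).semiconjBy.mul_left ih

theorem IsBraidSystem.ascProd_inv_mul_mul_ascProd (h : IsBraidSystem (m + 1) σ) {i : ℕ}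
    (hi : i ≤ m) : (ascProd σ (m + 1) (i + 1))⁻¹ * σ i * ascProd σ (m + 1) (i + 1) =
      ascProd σ m i * σ m * (ascProd σ m i)⁻¹ := by
  induction hi using Nat.decreasingInduction with
  | self => simp
  | of_succ i hi ih =>
    have hcomm := h.commute_ascProd (show i + 1 < i + 1 + 1 by lia)
      (show i + 1 + 1 ≤ m + 1 by lia)
    have hbraid : (σ (i + 1))⁻¹ * σ i * σ (i + 1) = σ i * σ (i + 1) * (σ i)⁻¹ := by
      rw [eq_mul_inv_iff_mul_eq, mul_assoc, mul_assoc, inv_mul_eq_iff_eq_mul, ← mul_assoc,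
        h.braid i (by lia)]
      simp only [mul_assoc]
    rw [ascProd_of_lt σ (show i + 1 < m + 1 by lia), ascProd_of_lt σ hi]
    generalize ascProd σ (m + 1) (i + 1 + 1) = e at *
    calc (σ (i + 1) * e)⁻¹ * σ i * (σ (i + 1) * e)
        = e⁻¹ * ((σ (i + 1))⁻¹ * σ i * σ (i + 1)) * e := by group
      _ = (e⁻¹ * σ i) * σ (i + 1) * ((σ i)⁻¹ * e) := by rw [hbraid]; group
      _ = σ i * (e⁻¹ * σ (i + 1) * e) * (σ i)⁻¹ := by
        rw [← hcomm.inv_right.eq, hcomm.inv_left.eq]; group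
      _ = σ i * ascProd σ m (i + 1) * σ m * (σ i * ascProd σ m (i + 1))⁻¹ := by rw [ih]; group

end AscProd

section PushHom

variable {G : Type*} [Group G] {m : ℕ} {σ : ℕ → G} {ρ : G}

/-- The element `a_i = (σ_i ⋯ σ_{m-1}) ρ (σ_i ⋯ σ_{m-1})⁻¹` for `i ≤ m`, and `1` for `i > m`.
These are the point pushes around the generating loops `x_i`. -/
def pushGen (σ : ℕ → G) (ρ : G) (m i : ℕ) : G :=
  if i ≤ m then ascProd σ m i * ρ * (ascProd σ m i)⁻¹ else 1

theorem pushGen_of_le (σ : ℕ → G) (ρ : G) {m i : ℕ} (h : i ≤ m) :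
    pushGen σ ρ m i = ascProd σ m i * ρ * (ascProd σ m i)⁻¹ :=
  if_pos h

theorem pushGen_of_gt (σ : ℕ → G) (ρ : G) {m i : ℕ} (h : m < i) : pushGen σ ρ m i = 1 :=
  if_neg h.not_ge

theorem pushGen_self (σ : ℕ → G) (ρ : G) (m : ℕ) : pushGen σ ρ m m = ρ := by
  simp [pushGen_of_le]

theorem pushGen_of_lt (σ : ℕ → G) (ρ : G) {m i : ℕ} (h : i < m) :
    pushGen σ ρ m i = σ i * pushGen σ ρ m (i + 1) * (σ i)⁻¹ := by
  rw [pushGen_of_le σ ρ h.le, pushGen_of_le σ ρ h, ascProd_of_lt σ h]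
  group

theorem IsTypeBSystem.commute_pushGen_gt (h : IsTypeBSystem m σ ρ) {j i : ℕ} (hj : j + 1 < i) :
    Commute (σ j) (pushGen σ ρ m i) := by
  rcases le_or_gt i m with hi | hi
  · have hasc := h.commute_ascProd hj hi
    rw [pushGen_of_le σ ρ hi]
    exact (hasc.mul_right (h.commute_last j (by lia))).mul_right hasc.inv_right
  · rw [pushGen_of_gt σ ρ hi]
    exact Commute.one_right _

theorem IsTypeBSystem.commute_pushGen_lt (h : IsTypeBSystem m σ ρ) {j i : ℕ} (hi : i < j)
    (hj : j < m) : Commute (σ j) (pushGen σ ρ m i) := by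
  obtain ⟨j, rfl⟩ := Nat.exists_eq_succ_of_ne_zero (Nat.ne_zero_of_lt hi)
  have hasc := h.semiconjBy_ascProd (show i ≤ j by lia) hj
  have hlast : SemiconjBy ρ (σ j) (σ j) := (h.commute_last j hj).symm
  rw [pushGen_of_le σ ρ (by lia)]
  exact ((hasc.mul_left hlast).mul_left hasc.inv_symm_left).symm

theorem IsTypeBSystem.four_pushGen (h : IsTypeBSystem (m + 1) σ ρ) {j : ℕ} (hj : j ≤ m) :
    σ j * pushGen σ ρ (m + 1) (j + 1) * σ j * pushGen σ ρ (m + 1) (j + 1) =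
      pushGen σ ρ (m + 1) (j + 1) * σ j * pushGen σ ρ (m + 1) (j + 1) * σ j := by
  induction hj using Nat.decreasingInduction with
  | self =>
    rw [pushGen_self]
    exact h.four m rfl
  | of_succ i hi ih =>
    have hcomm := h.commute_pushGen_gt (show i + 1 < i + 1 + 1 by lia)
    have hbraid := h.braid i (by lia)
    rw [pushGen_of_lt σ ρ (show i + 1 < m + 1 by lia)]
    generalize pushGen σ ρ (m + 1) (i + 1 + 1) = b at *
    generalize σ (i + 1) = t at *
    generalize σ i = s at *
    -- Conjugation by `t * s` turns the relation for `t` and `b` into the one for `s` and `t b t⁻¹`.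
    have hs : s = (t * s) * t * (t * s)⁻¹ := by
      rw [eq_mul_inv_iff_mul_eq, ← mul_assoc, hbraid]
    have hb : t * b * t⁻¹ = (t * s) * b * (t * s)⁻¹ := by
      rw [mul_assoc t s b, hcomm.eq]; group
    rw [hb]
    generalize t * s = g at *
    subst hs
    calc _ = g * (t * b * t * b) * g⁻¹ := by group
      _ = _ := by rw [ih]; group

theorem IsTypeBSystem.conj_pushGen_self (h : IsTypeBSystem m σ ρ) {j : ℕ} (hj : j < m) :
    σ j * pushGen σ ρ m j * (σ j)⁻¹ =
      (pushGen σ ρ m j)⁻¹ * pushGen σ ρ m (j + 1) * pushGen σ ρ m j := by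
  obtain ⟨m, rfl⟩ := Nat.exists_eq_succ_of_ne_zero (Nat.ne_zero_of_lt hj)
  have hfour := h.four_pushGen (Nat.lt_succ_iff.1 hj)
  rw [pushGen_of_lt σ ρ hj]
  generalize pushGen σ ρ (m + 1) (j + 1) = b at *
  rw [mul_assoc _⁻¹ b, eq_comm, inv_mul_eq_iff_eq_mul]
  calc b * (σ j * b * (σ j)⁻¹) = b * σ j * b * σ j * (σ j)⁻¹ * (σ j)⁻¹ := by group
    _ = _ := by rw [← hfour]; group

/-- The point-pushing homomorphism `x_i ↦ a_i`. -/
def pushHom (σ : ℕ → G) (ρ : G) (m : ℕ) : FreeGroup ℕ →* G :=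
  FreeGroup.lift (pushGen σ ρ m)

theorem pushHom_of (σ : ℕ → G) (ρ : G) (m i : ℕ) : pushHom σ ρ m (of i) = pushGen σ ρ m i := by
  simp [pushHom]

theorem IsTypeBSystem.pushHom_braidAut (h : IsTypeBSystem m σ ρ) {j : ℕ} (hj : j < m)
    (x : FreeGroup ℕ) : pushHom σ ρ m (braidAut j x) = σ j * pushHom σ ρ m x * (σ j)⁻¹ := by
  suffices (pushHom σ ρ m).comp (braidAut j).toMonoidHom =
      (MulAut.conj (σ j)).toMonoidHom.comp (pushHom σ ρ m) by
    simpa using DFunLike.congr_fun this x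
  refine FreeGroup.ext_hom _ _ fun k => ?_
  rcases eq_or_ne k j with rfl | h0
  · simpa [pushHom_of] using (h.conj_pushGen_self hj).symm
  rcases eq_or_ne k (j + 1) with rfl | h1
  · simp [pushHom_of, pushGen_of_lt σ ρ hj]
  have hcomm : Commute (σ j) (pushGen σ ρ m k) := by
    rcases lt_or_gt_of_ne h0 with hk | hk
    · exact h.commute_pushGen_lt hk hj
    · exact h.commute_pushGen_gt (by lia)
  simp [braidAut_of_of_ne h0 h1, pushHom_of, hcomm.eq]

end PushHom

section ArtinAction

variable {G : Type*} [Group G] {m : ℕ} {σ : ℕ → G} {ρ : G} {f : G →* MulAut (FreeGroup ℕ)}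

theorem truncHom_map (hf : ∀ i < m, f (σ i) = braidAut i) {g : G} (hg : g ∈ braidSubgroup σ m)
    (x : FreeGroup ℕ) : truncHom m (f g x) = f g (truncHom m x) := by
  induction hg using Subgroup.closure_induction generalizing x with
  | mem g hg =>
    obtain ⟨j, hj, rfl⟩ := hg
    rw [hf j hj, truncHom_braidAut hj]
  | one => simp
  | mul g k _ _ hg hk => simp [hg, hk]
  | inv g _ hg =>
    apply (f g).injective
    rw [← hg, map_inv, MulAut.apply_inv_self, MulAut.apply_inv_self]

theorem map_apply_eq_of_braidAut_eq (hf : ∀ i < m, f (σ i) = braidAut i) {g : G}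
    (hg : g ∈ braidSubgroup σ m) {x : FreeGroup ℕ} (hx : ∀ i < m, braidAut i x = x) :
    f g x = x := by
  suffices braidSubgroup σ m ≤ (MulAction.stabilizer (MulAut (FreeGroup ℕ)) x).comap f from
    this hg
  rw [Subgroup.closure_le]
  rintro _ ⟨i, hi, rfl⟩
  change f (σ i) x = x
  rw [hf i hi, hx i hi]

theorem map_apply_of_of_gt (hf : ∀ i < m, f (σ i) = braidAut i) {g : G}
    (hg : g ∈ braidSubgroup σ m) {k : ℕ} (hk : m < k) : f g (of k) = of k :=
  map_apply_eq_of_braidAut_eq hf hg fun _ _ => braidAut_of_of_ne (by lia) (by lia)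

theorem map_ascProd_apply_of (hf : ∀ i < m, f (σ i) = braidAut i) {i : ℕ} (hi : i ≤ m) :
    f (ascProd σ m i) (of m) = of i := by
  induction hi using Nat.decreasingInduction with
  | self => simp
  | of_succ i hi ih => simp [ascProd_of_lt σ hi, ih, hf i hi]

theorem IsTypeBSystem.pushHom_map (h : IsTypeBSystem m σ ρ) (hf : ∀ i < m, f (σ i) = braidAut i)
    {g : G} (hg : g ∈ braidSubgroup σ m) (x : FreeGroup ℕ) :
    pushHom σ ρ m (f g x) = g * pushHom σ ρ m x * g⁻¹ := by
  induction hg using Subgroup.closure_induction generalizing x with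
  | mem g hg =>
    obtain ⟨j, hj, rfl⟩ := hg
    rw [hf j hj, h.pushHom_braidAut hj]
  | one => simp
  | mul g k _ _ hg hk => simp [hg, hk, mul_assoc]
  | inv g _ hg =>
    have hinv := hg ((f g)⁻¹ x)
    rw [MulAut.apply_inv_self] at hinv
    rw [map_inv, hinv]
    group

theorem IsTypeBSystem.exists_pushHom_mul_eq (h : IsTypeBSystem m σ ρ)
    (hf : ∀ i < m, f (σ i) = braidAut i) {g : G} (hg : g ∈ typeBSubgroup σ ρ m) :
    ∃ w, truncHom m w = w ∧ ∃ b ∈ braidSubgroup σ m, pushHom σ ρ m w * b = g := by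
  induction hg using Subgroup.closure_induction with
  | mem g hg =>
    rcases hg with rfl | hg
    · exact ⟨of m, truncHom_of_le le_rfl, 1, one_mem _, by simp [pushHom_of, pushGen_self]⟩
    · exact ⟨1, map_one _, g, Subgroup.subset_closure hg, by simp⟩
  | one => exact ⟨1, map_one _, 1, one_mem _, by simp⟩
  | mul g k _ _ hg hk =>
    obtain ⟨v, hv, b, hb, rfl⟩ := hg
    obtain ⟨w, hw, c, hc, rfl⟩ := hk
    refine ⟨v * f b w, by rw [map_mul, truncHom_map hf hb, hv, hw], b * c, mul_mem hb hc, ?_⟩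
    rw [map_mul, h.pushHom_map hf hb]
    group
  | inv g _ hg =>
    obtain ⟨w, hw, b, hb, rfl⟩ := hg
    refine ⟨f b⁻¹ w⁻¹, by rw [truncHom_map hf (inv_mem hb), map_inv (truncHom m), hw], b⁻¹,
      inv_mem hb, ?_⟩
    rw [h.pushHom_map hf (inv_mem hb), map_inv]
    group

theorem isPointPush_map_pushHom (hf : ∀ i < m, f (σ i) = braidAut i)
    (hρ : f ρ = braidAut m ^ 2) (w : FreeGroup ℕ) :
    IsPointPush m (f (pushHom σ ρ m w)) (truncHom m w) := by
  induction w using FreeGroup.induction_on with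
  | C1 => simpa using IsPointPush.one
  | of i =>
    rw [pushHom_of]
    rcases le_or_gt i m with hi | hi
    · have hmem := ascProd_mem (σ := σ) hi
      rw [truncHom_of_le hi, ← map_ascProd_apply_of hf hi, pushGen_of_le σ ρ hi, map_mul, map_mul,
        map_inv, hρ]
      exact (IsPointPush.braidAut_sq m).conj (truncHom_map hf hmem)
        (map_apply_of_of_gt hf hmem m.lt_succ_self)
    · rw [truncHom_of_lt hi, pushGen_of_gt σ ρ hi, map_one]
      exact IsPointPush.one
  | inv_of i ih => simpa only [map_inv] using ih.inv
  | mul v w hv hw => simpa only [map_mul] using hv.mul hw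

theorem truncHom_eq_one_of_map_pushHom (hf : ∀ i < m, f (σ i) = braidAut i)
    (hρ : f ρ = braidAut m ^ 2) {w : FreeGroup ℕ}
    (hw : f (pushHom σ ρ m w) (of (m + 1)) = of (m + 1)) : truncHom m w = 1 :=
  (isPointPush_map_pushHom hf hρ w).eq_one hw

theorem IsTypeBSystem.eq_one_of_map_eq_one (h : IsTypeBSystem m σ ρ)
    (hf : ∀ i < m, f (σ i) = braidAut i) (hρ : f ρ = braidAut m ^ 2)
    (hfaithful : ∀ g ∈ braidSubgroup σ m, f g = 1 → g = 1) {g : G}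
    (hg : g ∈ typeBSubgroup σ ρ m) (hfg : f g = 1) : g = 1 := by
  obtain ⟨w, hw, b, hb, rfl⟩ := h.exists_pushHom_mul_eq hf hg
  have hfix : f (pushHom σ ρ m w) (of (m + 1)) = of (m + 1) := by
    have := DFunLike.congr_fun hfg (of (m + 1))
    rwa [map_mul, MulAut.mul_apply, map_apply_of_of_gt hf hb m.lt_succ_self] at this
  have hw1 : w = 1 := hw.symm.trans (truncHom_eq_one_of_map_pushHom hf hρ hfix)
  rw [hw1, map_one, one_mul] at hfg ⊢
  exact hfaithful b hb hfg

end ArtinAction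

section Faithful

variable {G : Type*} [Group G] {m : ℕ} {σ : ℕ → G} {f : G →* MulAut (FreeGroup ℕ)} {g g' : G}
  {k l p : ℕ}

/-- The braid `g` on the strands `0, …, m + 1` carries the strand `k` to the strand `l`. Besides
the effect of `g` on free generators up to conjugacy, this records that the Schreier generator of
`g`, with respect to the transversal `ascProd σ (m + 1)`, lies in the subgroup generated by
`σ_0, …, σ_{m-1}, σ_m ^ 2`. -/
structure CarriesStrand (σ : ℕ → G) (f : G →* MulAut (FreeGroup ℕ)) (m : ℕ) (g : G) (k l : ℕ) :
    Prop where
  isConj : IsConj (f g (of k)) (of l)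
  mem : (ascProd σ (m + 1) l)⁻¹ * g * ascProd σ (m + 1) k ∈ typeBSubgroup σ (σ m ^ 2) m

theorem CarriesStrand.one : CarriesStrand σ f m 1 k k :=
  ⟨by rw [map_one, MulAut.one_apply], by simp⟩

theorem CarriesStrand.mul (h : CarriesStrand σ f m g l p) (h' : CarriesStrand σ f m g' k l) :
    CarriesStrand σ f m (g * g') k p where
  isConj := by
    rw [map_mul, MulAut.mul_apply]
    exact ((f g).toMonoidHom.map_isConj h'.isConj).trans h.isConj
  mem := by
    convert mul_mem h.mem h'.mem using 1
    group

theorem CarriesStrand.inv (h : CarriesStrand σ f m g k l) : CarriesStrand σ f m g⁻¹ l k where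
  isConj := by simpa using (f g)⁻¹.toMonoidHom.map_isConj h.isConj.symm
  mem := by
    convert inv_mem h.mem using 1
    group

theorem IsBraidSystem.carriesStrand_self (h : IsBraidSystem (m + 1) σ) {i : ℕ}
    (hf : f (σ i) = braidAut i) (hi : i ≤ m) : CarriesStrand σ f m (σ i) i (i + 1) where
  isConj := by
    rw [hf, braidAut_of_self]
    exact isConj_iff.2 ⟨of i, by group⟩
  mem := by
    have hasc := braidSubgroup_le_typeBSubgroup σ (σ m ^ 2) m (ascProd_mem hi)
    have hconj : (ascProd σ (m + 1) (i + 1))⁻¹ * σ i * (σ i * ascProd σ (m + 1) (i + 1)) =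
        ascProd σ m i * σ m ^ 2 * (ascProd σ m i)⁻¹ := by
      rw [← conj_pow, ← h.ascProd_inv_mul_mul_ascProd hi, pow_two]
      group
    rw [ascProd_of_lt σ (Nat.lt_succ_of_le hi), hconj]
    exact mul_mem (mul_mem hasc (last_mem_typeBSubgroup _ _ _)) (inv_mem hasc)

theorem carriesStrand_succ {i : ℕ} (hf : f (σ i) = braidAut i) (hi : i ≤ m) :
    CarriesStrand σ f m (σ i) (i + 1) i where
  isConj := by rw [hf, braidAut_of_succ]
  mem := by
    rw [ascProd_of_lt σ (Nat.lt_succ_of_le hi), mul_assoc, inv_mul_cancel]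
    exact one_mem _

theorem IsBraidSystem.carriesStrand_of_ne (h : IsBraidSystem (m + 1) σ) {i : ℕ}
    (hf : f (σ i) = braidAut i) (hi : i ≤ m) (hk : k ≤ m + 1) (hki : k ≠ i) (hki' : k ≠ i + 1) :
    CarriesStrand σ f m (σ i) k k where
  isConj := by rw [hf, braidAut_of_of_ne hki hki']
  mem := by
    have hgen : ∀ j < m, σ j ∈ typeBSubgroup σ (σ m ^ 2) m := fun j hj =>
      braidSubgroup_le_typeBSubgroup σ (σ m ^ 2) m (mem_braidSubgroup σ hj)
    rcases lt_or_gt_of_ne hki with hlt | hgt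
    · obtain ⟨i, rfl⟩ := Nat.exists_eq_succ_of_ne_zero (Nat.ne_zero_of_lt hlt)
      rw [mul_assoc, ← (h.semiconjBy_ascProd (by lia) (by lia)).eq, inv_mul_cancel_left]
      exact hgen i (by lia)
    · rw [mul_assoc, (h.commute_ascProd (show i + 1 < k by lia) hk).eq, inv_mul_cancel_left]
      exact hgen i (by lia)

theorem IsBraidSystem.carriesStrand_swap (h : IsBraidSystem (m + 1) σ) {i : ℕ}
    (hf : f (σ i) = braidAut i) (hi : i ≤ m) (hk : k ≤ m + 1) :
    CarriesStrand σ f m (σ i) k (Equiv.swap i (i + 1) k) := by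
  rcases eq_or_ne k i with rfl | hki
  · rw [Equiv.swap_apply_left]
    exact h.carriesStrand_self hf hi
  rcases eq_or_ne k (i + 1) with rfl | hki'
  · rw [Equiv.swap_apply_right]
    exact carriesStrand_succ hf hi
  rw [Equiv.swap_apply_of_ne_of_ne hki hki']
  exact h.carriesStrand_of_ne hf hi hk hki hki'

theorem IsBraidSystem.exists_perm_carriesStrand (h : IsBraidSystem (m + 1) σ)
    (hf : ∀ i < m + 1, f (σ i) = braidAut i) (hg : g ∈ braidSubgroup σ (m + 1)) :
    ∃ τ : Equiv.Perm ℕ, (∀ k, τ k ≤ m + 1 ↔ k ≤ m + 1) ∧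
      ∀ k ≤ m + 1, CarriesStrand σ f m g k (τ k) := by
  induction hg using Subgroup.closure_induction with
  | mem g hg =>
    obtain ⟨i, hi : i < m + 1, rfl⟩ := hg
    refine ⟨Equiv.swap i (i + 1), fun k => ?_,
      fun k hk => h.carriesStrand_swap (hf i hi) (Nat.lt_succ_iff.1 hi) hk⟩
    rw [Equiv.swap_apply_def]
    split_ifs <;> lia
  | one => exact ⟨1, fun _ => Iff.rfl, fun _ _ => .one⟩
  | mul g g' _ _ hg hg' =>
    obtain ⟨τ, hτ, hgτ⟩ := hg
    obtain ⟨τ', hτ', hgτ'⟩ := hg'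
    exact ⟨τ * τ', fun k => (hτ _).trans (hτ' k),
      fun k hk => (hgτ _ ((hτ' k).2 hk)).mul (hgτ' k hk)⟩
  | inv g _ hg =>
    obtain ⟨τ, hτ, hgτ⟩ := hg
    have hτ_inv : ∀ k, τ⁻¹ k ≤ m + 1 ↔ k ≤ m + 1 := fun k => by
      simpa using (hτ (τ⁻¹ k)).symm
    refine ⟨τ⁻¹, hτ_inv, fun k hk => ?_⟩
    simpa using (hgτ _ ((hτ_inv k).2 hk)).inv

theorem IsBraidSystem.mem_typeBSubgroup_of_map_eq_one (h : IsBraidSystem (m + 1) σ)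
    (hf : ∀ i < m + 1, f (σ i) = braidAut i) (hg : g ∈ braidSubgroup σ (m + 1))
    (hfg : f g = 1) : g ∈ typeBSubgroup σ (σ m ^ 2) m := by
  obtain ⟨τ, -, hτ⟩ := h.exists_perm_carriesStrand hf hg
  have hlast := hτ (m + 1) le_rfl
  have hfix : m + 1 = τ (m + 1) := eq_of_isConj_freeGroup_of (by simpa [hfg] using hlast.isConj)
  simpa [← hfix] using hlast.mem

theorem IsBraidSystem.eq_one_of_map_eq_one (h : IsBraidSystem m σ)
    (hf : ∀ i < m, f (σ i) = braidAut i) (hg : g ∈ braidSubgroup σ m) (hfg : f g = 1) :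
    g = 1 := by
  induction m generalizing g with
  | zero => simpa [braidSubgroup] using hg
  | succ m ih =>
    have hf' : ∀ i < m, f (σ i) = braidAut i := fun i hi => hf i (by lia)
    exact h.isTypeBSystem_sq.eq_one_of_map_eq_one hf' (by rw [map_pow, hf m m.lt_succ_self])
      (fun g hg => ih (h.mono m.le_succ) hf' hg)
      (h.mem_typeBSubgroup_of_map_eq_one hf hg hfg) hfg

end Faithful

section Center

variable {G : Type*} [Group G] {m : ℕ} {σ : ℕ → G} {ρ : G} {f : G →* MulAut (FreeGroup ℕ)}

theorem IsTypeBSystem.conj_map_truncHom_of_mem_center (h : IsTypeBSystem m σ ρ)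
    (hf : ∀ i < m, f (σ i) = braidAut i) (hρ : f ρ = braidAut m ^ 2) {w : FreeGroup ℕ}
    (hw : truncHom m w = w) {b : G} (hb : b ∈ braidSubgroup σ m)
    (hz : pushHom σ ρ m w * b ∈ Subgroup.center G) (x : FreeGroup ℕ) :
    w * f b (truncHom m x) * w⁻¹ = truncHom m x := by
  have hpush : pushHom σ ρ m (w * f b x * w⁻¹ * x⁻¹) = 1 := by
    have hcomm := Subgroup.mem_center_iff.1 hz (pushHom σ ρ m x)
    simp only [map_mul, map_inv, h.pushHom_map hf hb]
    rw [mul_inv_eq_one, mul_inv_eq_iff_eq_mul, ← mul_assoc, ← mul_assoc,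
      mul_inv_eq_iff_eq_mul, ← hcomm, mul_assoc]
  have htrunc := truncHom_eq_one_of_map_pushHom hf hρ (by rw [hpush, map_one, MulAut.one_apply])
  rwa [map_mul, map_mul, map_mul, map_inv, map_inv, hw, truncHom_map hf hb, mul_inv_eq_one]
    at htrunc

variable {χ : G →* Multiplicative ℤ}

theorem map_eq_one_of_mem_braidSubgroup (hχ : ∀ i < m, χ (σ i) = 1) {g : G}
    (hg : g ∈ braidSubgroup σ m) : χ g = 1 := by
  suffices braidSubgroup σ m ≤ χ.ker from this hg
  rw [Subgroup.closure_le]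
  rintro _ ⟨i, hi, rfl⟩
  exact hχ i hi

theorem map_pushHom_descProd (hχ : ∀ i < m, χ (σ i) = 1) {k : ℕ} (hk : k ≤ m + 1) :
    χ (pushHom σ ρ m (descProd k)) = χ ρ ^ k := by
  induction k with
  | zero => simp [descProd]
  | succ k ih =>
    have hasc := map_eq_one_of_mem_braidSubgroup hχ (ascProd_mem (show k ≤ m by lia))
    rw [descProd, map_mul, map_mul, ih (by lia), pushHom_of, pushGen_of_le σ ρ (by lia),
      map_mul, map_mul, map_inv, hasc, one_mul, inv_one, mul_one, pow_succ']

theorem IsTypeBSystem.eq_one_of_mem_center (h : IsTypeBSystem m σ ρ)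
    (hf : ∀ i < m, f (σ i) = braidAut i) (hρ : f ρ = braidAut m ^ 2)
    (hχ : ∀ i < m, χ (σ i) = 1) (hχρ : χ ρ ≠ 1) {z : G} (hzmem : z ∈ typeBSubgroup σ ρ m)
    (hz : z ∈ Subgroup.center G) (hχz : χ z = 1) : z = 1 := by
  obtain ⟨w, hw, b, hb, rfl⟩ := h.exists_pushHom_mul_eq hf hzmem
  have hconj := h.conj_map_truncHom_of_mem_center hf hρ hw hb hz
  have hw1 : w = 1 := by
    by_contra hne
    have hcomm : Commute (descProd (m + 1)) w := by
      have := hconj (descProd (m + 1))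
      rw [truncHom_descProd le_rfl, map_apply_eq_of_braidAut_eq hf hb
        fun i hi => braidAut_descProd_of_lt (by lia)] at this
      exact (mul_inv_eq_iff_eq_mul.1 this).symm
    have hχw : χ (pushHom σ ρ m w) = 1 := by
      rwa [map_mul, map_eq_one_of_mem_braidSubgroup hχ hb, mul_one] at hχz
    have hdesc : χ (pushHom σ ρ m (descProd (m + 1))) = 1 :=
      map_eq_one_of_commute_freeGroup (χ.comp (pushHom σ ρ m)) hcomm hne hχw
    rw [map_pushHom_descProd hχ le_rfl] at hdesc
    exact hχρ ((pow_eq_one_iff_left m.succ_ne_zero).1 hdesc)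
  rw [hw1, map_one, one_mul]
  refine h.toIsBraidSystem.eq_one_of_map_eq_one hf hb (mulAut_freeGroup_ext fun k => ?_)
  rcases le_or_gt k m with hk | hk
  · simpa [hw1, truncHom_of_le hk] using hconj (of k)
  · simpa using map_apply_of_of_gt hf hb hk

end Center

section ArtinB

/-- The generator `r_{i+1}` of `A[B_n]`, indexed from `0` like the members of a type `B` system. -/
def artinGen (n i : ℕ) : ArtinB n := rB n (i + 1)

theorem artinGen_of_lt {n i : ℕ} (h : i < n) : artinGen n i = PresentedGroup.of ⟨i, h⟩ := by
  simp [artinGen, rB, h]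

theorem isTypeBSystem_artinGen (m : ℕ) :
    IsTypeBSystem m (artinGen (m + 1)) (artinGen (m + 1) m) := by
  have hcomm : ∀ i j, i + 2 ≤ j → j < m + 1 →
      Commute (artinGen (m + 1) i) (artinGen (m + 1) j) := by
    intro i j hij hj
    rw [artinGen_of_lt (show i < m + 1 by lia), artinGen_of_lt hj]
    have := PresentedGroup.one_of_mem (rels := BnRels (m + 1))
      (Or.inr (Or.inr ⟨⟨i, by lia⟩, ⟨j, hj⟩, hij, rfl⟩))
    simp only [map_mul, map_inv, mul_inv_eq_one] at this
    exact this
  refine ⟨⟨fun i hi => ?_, fun i j hij hj => hcomm i j hij (by lia)⟩,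
    fun i hi => hcomm i m (by lia) m.lt_succ_self, ?_⟩
  · rw [artinGen_of_lt (show i < m + 1 by lia), artinGen_of_lt (show i + 1 < m + 1 by lia)]
    have := PresentedGroup.one_of_mem (rels := BnRels (m + 1))
      (Or.inl ⟨⟨i, by lia⟩, ⟨i + 1, by lia⟩, rfl, by simpa using hi, rfl⟩)
    simp only [map_mul, map_inv, mul_inv_eq_one] at this
    exact this
  · rintro i rfl
    rw [artinGen_of_lt (show i < i + 1 + 1 by lia), artinGen_of_lt (show i + 1 < i + 1 + 1 by lia)]
    have := PresentedGroup.one_of_mem (rels := BnRels (i + 1 + 1))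
      (Or.inr (Or.inl ⟨⟨i, by lia⟩, ⟨i + 1, by lia⟩, rfl, rfl, rfl⟩))
    simp only [map_mul, map_inv, mul_inv_eq_one] at this
    exact this

theorem typeBSubgroup_artinGen (m : ℕ) :
    typeBSubgroup (artinGen (m + 1)) (artinGen (m + 1) m) m = ⊤ := by
  rw [eq_top_iff, ← PresentedGroup.closure_range_of, Subgroup.closure_le]
  rintro _ ⟨⟨i, hi⟩, rfl⟩
  rw [← artinGen_of_lt hi]
  rcases (Nat.lt_succ_iff.1 hi).lt_or_eq with hi | rfl
  · exact braidSubgroup_le_typeBSubgroup _ _ _ (mem_braidSubgroup _ hi)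
  · exact last_mem_typeBSubgroup _ _ _

theorem ArtinB.exists_hom {G : Type*} [Group G] {m : ℕ} {τ : ℕ → G} {ρ : G}
    (h : IsTypeBSystem m τ ρ) :
    ∃ φ : ArtinB (m + 1) →* G,
      (∀ i < m, φ (artinGen (m + 1) i) = τ i) ∧ φ (artinGen (m + 1) m) = ρ := by
  let val : Fin (m + 1) → G := fun i => if (i : ℕ) < m then τ i else ρ
  have hrel : ∀ r ∈ BnRels (m + 1), FreeGroup.lift val r = 1 := by
    rintro r (⟨⟨i, hi⟩, ⟨j, hj⟩, hij, hlt, rfl⟩ | ⟨⟨i, hi⟩, ⟨j, hj⟩, hi', hj', rfl⟩ |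
      ⟨⟨i, hi⟩, ⟨j, hj⟩, hij, rfl⟩) <;>
    simp only [map_mul, map_inv, FreeGroup.lift_apply_of, mul_inv_eq_one, val] at *
    · obtain rfl : i + 1 = j := hij
      rw [if_pos (by lia), if_pos (by lia)]
      exact h.braid i (by lia)
    · obtain rfl : j = m := by lia
      rw [if_pos (by lia), if_neg (by lia)]
      exact h.four i (by lia)
    · rw [if_pos (by lia)]
      rcases (Nat.lt_succ_iff.1 hj).lt_or_eq with hj' | rfl
      · rw [if_pos hj']
        exact (h.commute i j hij hj').eq
      · rw [if_neg (lt_irrefl j)]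
        exact (h.commute_last i (by lia)).eq
  refine ⟨PresentedGroup.toGroup hrel, fun i hi => ?_, ?_⟩
  · rw [artinGen_of_lt (by lia), PresentedGroup.toGroup.of]
    exact if_pos hi
  · rw [artinGen_of_lt m.lt_succ_self, PresentedGroup.toGroup.of]
    exact if_neg (lt_irrefl m)

theorem ArtinB.hom_ext {M : Type*} [Monoid M] {m : ℕ} {φ ψ : ArtinB (m + 1) →* M}
    (h : ∀ i < m, φ (artinGen (m + 1) i) = ψ (artinGen (m + 1) i))
    (hlast : φ (artinGen (m + 1) m) = ψ (artinGen (m + 1) m)) : φ = ψ := by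
  refine MonoidHom.eq_of_eqOn_dense (typeBSubgroup_artinGen m) ?_
  rintro _ (rfl | ⟨i, hi, rfl⟩)
  exacts [hlast, h i hi]

theorem ArtinB.subsingleton_hom_zero {M : Type*} [Monoid M] : Subsingleton (ArtinB 0 →* M) :=
  ⟨fun _ _ => MonoidHom.eq_of_eqOn_dense (PresentedGroup.closure_range_of _)
    (by rintro _ ⟨i, -⟩; exact i.elim0)⟩

theorem ArtinB.disjoint_center_commutator (n : ℕ) :
    Disjoint (Subgroup.center (ArtinB n)) (commutator (ArtinB n)) := by
  rw [Subgroup.disjoint_def]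
  intro z hz hzc
  cases n with
  | zero =>
    have := ArtinB.subsingleton_hom_zero (M := ArtinB 0)
    exact DFunLike.congr_fun (Subsingleton.elim (MonoidHom.id (ArtinB 0)) 1) z
  | succ m =>
    obtain ⟨f, hf, hρ⟩ := ArtinB.exists_hom (isBraidSystem_braidAut (m + 1)).isTypeBSystem_sq
    obtain ⟨χ, hχ, hχρ⟩ :=
      ArtinB.exists_hom (isTypeBSystem_const m 1 (Multiplicative.ofAdd (1 : ℤ)))
    exact (isTypeBSystem_artinGen m).eq_one_of_mem_center hf hρ hχ (by rw [hχρ]; decide)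
      (typeBSubgroup_artinGen m ▸ Subgroup.mem_top z) hz
      (Abelianization.commutator_subset_ker χ hzc)

theorem ArtinB.exists_lift_of_comm {A B : Type*} [CommGroup A] [CommGroup B] {p : A →* B}
    (hp : Function.Surjective p) {n : ℕ} (φ : ArtinB n →* B) :
    ∃ ψ : ArtinB n →* A, p.comp ψ = φ := by
  cases n with
  | zero => exact ⟨1, ArtinB.subsingleton_hom_zero.elim _ _⟩
  | succ m =>
    obtain ⟨a, ha⟩ := hp (φ (artinGen (m + 1) 0))
    obtain ⟨b, hb⟩ := hp (φ (artinGen (m + 1) m))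
    have hφ := (isTypeBSystem_artinGen m).toIsBraidSystem.map φ
    obtain ⟨ψ, hψ, hψlast⟩ := ArtinB.exists_hom (isTypeBSystem_const m a b)
    refine ⟨ψ, ArtinB.hom_ext (fun i hi => ?_) ?_⟩
    · rw [MonoidHom.comp_apply, hψ i hi, ha, hφ.apply_eq_apply_zero_of_comm hi]
    · rw [MonoidHom.comp_apply, hψlast, hb]

end ArtinB

section Lifting

variable {A G H : Type*} [Group A] [Group G] [Group H] {π : G →* H}

theorem abelianization_map_surjective (hπ : Function.Surjective π) :
    Function.Surjective (Abelianization.map π) := by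
  intro b
  obtain ⟨x, rfl⟩ := QuotientGroup.mk_surjective b
  obtain ⟨g, rfl⟩ := hπ x
  exact ⟨Abelianization.of g, Abelianization.map_of π g⟩

theorem exists_map_eq_and_of_eq (hπ : Function.Surjective π) {x : H} {a : Abelianization G}
    (h : Abelianization.map π a = Abelianization.of x) :
    ∃ g, π g = x ∧ Abelianization.of g = a := by
  obtain ⟨g, rfl⟩ := QuotientGroup.mk_surjective a
  have hmem : (π g)⁻¹ * x ∈ (commutator G).map π := by
    rw [commutator_def, Subgroup.map_commutator, Subgroup.map_top_of_surjective π hπ]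
    exact QuotientGroup.eq.1 h
  obtain ⟨c, hc, hcx⟩ := hmem
  refine ⟨g * c, by rw [map_mul, hcx, mul_inv_cancel_left], ?_⟩
  have hc1 : Abelianization.of c = 1 := by rwa [← MonoidHom.mem_ker, Abelianization.ker_of]
  rw [map_mul, hc1, mul_one]
  rfl

theorem exists_lift_of_lift_abelianization (hπ : Function.Surjective π)
    (hdisj : Disjoint π.ker (commutator G)) {φ : A →* H} {χ : A →* Abelianization G}
    (h : (Abelianization.map π).comp χ = Abelianization.of.comp φ) :
    ∃ ψ : A →* G, π.comp ψ = φ := by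
  let ι : G →* H × Abelianization G := π.prod Abelianization.of
  have hι : Function.Injective ι := by
    rw [← MonoidHom.ker_eq_bot_iff, MonoidHom.ker_prod, Abelianization.ker_of]
    exact hdisj.eq_bot
  have hrange : ∀ a, φ.prod χ a ∈ ι.range := fun a => by
    obtain ⟨g, hg, hg'⟩ := exists_map_eq_and_of_eq hπ (DFunLike.congr_fun h a)
    exact ⟨g, Prod.ext hg hg'⟩
  refine ⟨(MonoidHom.ofInjective hι).symm.toMonoidHom.comp ((φ.prod χ).codRestrict _ hrange),
    MonoidHom.ext fun a => ?_⟩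
  exact congrArg Prod.fst (MonoidHom.apply_ofInjective_symm hι ⟨_, hrange a⟩)

theorem ArtinB.exists_lift (hπ : Function.Surjective π) (hdisj : Disjoint π.ker (commutator G))
    {n : ℕ} (φ : ArtinB n →* H) : ∃ ψ : ArtinB n →* G, π.comp ψ = φ := by
  obtain ⟨χ, hχ⟩ := ArtinB.exists_lift_of_comm (abelianization_map_surjective hπ)
    (Abelianization.of.comp φ)
  exact exists_lift_of_lift_abelianization hπ hdisj hχ

end Lifting

theorem endomorphism_lifts_general (m n : ℕ) (φ : ArtinB m →* AbarB n) :
    ∃ ψ : ArtinB m →* ArtinB n, (πB n).comp ψ = φ := by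
  have hsurj : Function.Surjective (πB n) := QuotientGroup.mk'_surjective _
  have hdisj : Disjoint (πB n).ker (commutator (ArtinB n)) := by
    rw [πB, QuotientGroup.ker_mk']
    exact ArtinB.disjoint_center_commutator n
  exact ArtinB.exists_lift hsurj hdisj φ

/-- every endomorphism of `Ā = A[Bₙ]/Z(A[Bₙ])` lifts to an endomorphism
of `A[Bₙ]`, for `n ≥ 5`. -/
theorem endomorphism_lifts (n : ℕ) (hn : 5 ≤ n) (φbar : AbarB n →* AbarB n) :
    ∃ φ : ArtinB n →* ArtinB n, (πB n).comp φ = φbar.comp (πB n) :=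
  endomorphism_lifts_general n n (φbar.comp (πB n))
end

section
/- Let n ≥ 5, Ā = A[B_n]/Z(A[B_n]), and let H be the subgroup of Ā generated by t̄_0, t̄_1, …, t̄_{n−1}. Then H is characteristic in Ā (for every automorphism φ of Ā one has φ(H) = H), but H is not fully characteristic in Ā (there exists a group endomorphism ψ of Ā with ψ(H) not contained in H). -/
/-!
The quotient of `Ā` by the subgroup `H` generated by the `t̄_i` is `ℤ/n`, the projection being the
exponent sum of `r_n` modulo `n`. Since the `t_i` are conjugate, `H` is preserved by a surjective
endomorphism `φ` of `Ā` as soon as the exponent sum of `r_n` in a lift of `φ(t̄_1)` is divisible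
by `n`.

`A[Bₙ]` is a group of braids on `n` free strands and one pure strand. Following `φ` by the
permutation of the free strands gives a surjection `A[Bₙ] → Sₙ`; on `t_1, …, t_{n-1}` it is
conjugate to the standard one, unless `n = 6` and `t_1` goes to the cube of a six-cycle
(E. Artin's theorem). The linking numbers of the strands, together with triple invariants of the
strands (the next nilpotent quotient of the pure braid group), show in the standard case that
commutation of `φ(t̄_1)²` with `φ(t̄_3)²` modulo the centre forces all free strands to have the same
linking number with the pure strand; the sum of these numbers is a multiple of the exponent sum
of `r_n`. In the exceptional case the linking numbers are equal by transitivity, and the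
divisibility follows from a parity argument.

`H` is not fully characteristic because `t̄_i ↦ ρ̄`, `ρ̄ ↦ 1` defines an endomorphism of `Ā`.
-/

/-! ### Braid sequences -/

theorem eq_of_commute_of_braid {G : Type*} [Group G] {a b : G} (h : Commute a b)
    (hab : a * b * a = b * a * b) : a = b := by
  rw [h.eq, mul_assoc, mul_assoc] at hab
  exact mul_left_cancel (mul_left_cancel hab)

theorem eq_of_braid_of_commute_mul_inv {G : Type*} [Group G] {a b c : G} (hab : Commute a b)
    (hac : Commute a c) (h : Commute (b * a⁻¹) (c * a⁻¹)) (hbc : b * c * b = c * b * c) :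
    b = c := by
  refine eq_of_commute_of_braid ?_ hbc
  have hb : Commute (b * a⁻¹) a := hab.symm.mul_left (Commute.refl a).inv_left
  have hc : Commute (c * a⁻¹) a := hac.symm.mul_left (Commute.refl a).inv_left
  simpa using (h.mul_left hc.symm).mul_right (hb.mul_left (Commute.refl a))

/-- The terms `c 0, …, c (m - 1)` satisfy the relations of the braid group on `m + 1` strands;
the later terms of `c` are unconstrained. -/
structure IsBraidSeq {G : Type*} [Group G] (m : ℕ) (c : ℕ → G) : Prop where
  braid : ∀ i, i + 1 < m → c i * c (i + 1) * c i = c (i + 1) * c i * c (i + 1)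
  comm : ∀ i j, i + 2 ≤ j → j < m → Commute (c i) (c j)

theorem semiconjBy_pow_of_shift {G : Type*} [Group G] {m : ℕ} {c : ℕ → G} {r : G}
    (hr : ∀ i, i + 1 < m → SemiconjBy r (c i) (c (i + 1))) {i k : ℕ} (hik : i + k < m) :
    SemiconjBy (r ^ k) (c i) (c (i + k)) := by
  induction k with
  | zero => simp
  | succ k ih => exact pow_succ' r k ▸ (hr (i + k) hik).mul_left (ih (by omega))

namespace IsBraidSeq

variable {G H : Type*} [Group G] [Group H] {m : ℕ} {c : ℕ → G}

theorem map (h : IsBraidSeq m c) (f : G →* H) : IsBraidSeq m fun i => f (c i) where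
  braid i hi := by simpa using congrArg f (h.braid i hi)
  comm i j hij hj := (h.comm i j hij hj).map f

theorem shift (h : IsBraidSeq m c) (k : ℕ) : IsBraidSeq (m - k) fun i => c (i + k) where
  braid i hi := by simpa only [add_right_comm] using h.braid (i + k) (by omega)
  comm i j hij hj := h.comm _ _ (by omega) (by omega)

theorem reverse (h : IsBraidSeq m c) : IsBraidSeq m fun i => c (m - 1 - i) where
  braid i hi := by
    have := h.braid (m - 1 - (i + 1)) (by omega)
    rw [show m - 1 - (i + 1) + 1 = m - 1 - i by omega] at this
    exact this.symm
  comm i j hij hj := (h.comm _ _ (by omega) (by omega)).symm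

theorem exists_subgroup_lift (h : IsBraidSeq m c) {K : Subgroup G} (hK : ∀ i < m, c i ∈ K) :
    ∃ g : ℕ → K, IsBraidSeq m g ∧ ∀ i < m, (g i : G) = c i := by
  classical
  let g : ℕ → K := fun i => if hi : i < m then ⟨c i, hK i hi⟩ else 1
  have hg : ∀ i < m, (g i : G) = c i := fun i hi => by simp [g, hi]
  refine ⟨g, ⟨fun i hi => Subtype.ext ?_, fun i j hij hj => Subtype.ext ?_⟩, hg⟩
  · simpa only [Subgroup.coe_mul, hg i (by omega), hg (i + 1) hi] using h.braid i hi
  · simpa only [Subgroup.coe_mul, hg i (by omega), hg j hj] using (h.comm i j hij hj).eq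

theorem isConj_head (h : IsBraidSeq m c) {i : ℕ} (hi : i < m) : IsConj (c 0) (c i) := by
  induction i with
  | zero => rfl
  | succ i ih =>
    refine (ih (by omega)).trans (isConj_iff.2 ⟨c i * c (i + 1), mul_inv_eq_iff_eq_mul.2 ?_⟩)
    rw [h.braid i hi, mul_assoc]

theorem eq_head_of_eq_succ (h : IsBraidSeq m c) {i j : ℕ} (hi : i + 1 < m) (hj : j < m)
    (hc : c i = c (i + 1)) : c j = c 0 := by
  have h01 : c 0 = c 1 := by
    clear hj
    induction i with
    | zero => exact hc
    | succ i ih =>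
      refine ih (by omega) (eq_of_commute_of_braid ?_ (h.braid i (by omega)))
      exact hc ▸ h.comm _ _ le_rfl hi
  have hsucc : ∀ k, k + 1 < m → c k = c (k + 1) := by
    intro k hk
    induction k with
    | zero => exact h01
    | succ k ih =>
      refine eq_of_commute_of_braid ?_ (h.braid (k + 1) hk)
      exact ih (by omega) ▸ h.comm _ _ le_rfl hk
  induction j with
  | zero => rfl
  | succ j ih => rw [← hsucc j hj, ih (by omega)]

theorem map_eq_map_head_of_ker_comm {P : Type*} [Group P] (h : IsBraidSeq m c) (hm : 4 ≤ m)
    (f : G →* P) (s : G →* H) (hs : ∀ u ∈ f.ker, ∀ v ∈ f.ker, Commute (s u) (s v))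
    (hf : f (c 0) = f (c 1)) {j : ℕ} (hj : j < m) : s (c j) = s (c 0) := by
  have hker : ∀ i < m, c i * (c 0)⁻¹ ∈ f.ker := fun i hi => by
    rw [MonoidHom.mem_ker, map_mul, map_inv, mul_inv_eq_one]
    exact (h.map f).eq_head_of_eq_succ (i := 0) (by omega) hi hf
  refine (h.map s).eq_head_of_eq_succ (i := 2) (by omega) hj ?_
  refine eq_of_braid_of_commute_mul_inv ((h.map s).comm 0 2 le_rfl (by omega))
    ((h.map s).comm 0 3 (by omega) (by omega)) ?_ ((h.map s).braid 2 (by omega))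
  simpa only [map_mul, map_inv] using hs _ (hker 2 (by omega)) _ (hker 3 (by omega))

theorem semiconjBy_zero_two (h : IsBraidSeq m c) (hm : 3 ≤ m) :
    SemiconjBy (c 1 * c 0 * c 2 * c 1) (c 0) (c 2) := by
  have h01 := h.braid 0 (by omega)
  have h12 := h.braid 1 (by omega)
  have h02 := (h.comm 0 2 le_rfl hm).eq
  rw [zero_add] at h01
  rw [one_add_one_eq_two] at h12
  calc c 1 * c 0 * c 2 * c 1 * c 0 = c 1 * (c 0 * c 2) * c 1 * c 0 := by simp only [mul_assoc]
    _ = c 1 * c 2 * (c 0 * c 1 * c 0) := by rw [h02]; simp only [mul_assoc]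
    _ = c 1 * c 2 * c 1 * c 0 * c 1 := by rw [h01]; simp only [mul_assoc]
    _ = c 2 * c 1 * (c 2 * c 0) * c 1 := by rw [h12]; simp only [mul_assoc]
    _ = c 2 * (c 1 * c 0 * c 2 * c 1) := by rw [← h02]; simp only [mul_assoc]

theorem commute_prod_range (h : IsBraidSeq m c) {k j : ℕ} (hkj : k < j) (hj : j < m) :
    Commute ((List.range k).map c).prod (c j) := by
  refine Commute.list_prod_left _ _ fun x hx => ?_
  obtain ⟨i, hi, rfl⟩ := List.mem_map.1 hx
  exact h.comm i j (by have := List.mem_range.1 hi; omega) hj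

theorem prod_range_semiconjBy (h : IsBraidSeq m c) {k i : ℕ} (hik : i + 1 < k) (hk : k ≤ m) :
    SemiconjBy ((List.range k).map c).prod (c i) (c (i + 1)) := by
  induction k, hik using Nat.le_induction with
  | base =>
    have hpre := (h.commute_prod_range (k := i) (j := i + 1) (by omega) (by omega)).eq
    rw [List.prod_range_succ, List.prod_range_succ, SemiconjBy, mul_assoc, mul_assoc,
      ← mul_assoc (c i), h.braid i (by omega)]
    simp only [← mul_assoc, hpre]
  | succ k hk' ih =>
    rw [List.prod_range_succ]
    exact (ih (by omega)).mul_left (h.comm i k (by omega) (by omega)).symm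

end IsBraidSeq

section

open Equiv Equiv.Perm MulAction
open scoped Pointwise

/-! ### Permutations of few points -/

variable {X : Type*}

theorem commute_of_card_le_two [Fintype X] (hX : Fintype.card X ≤ 2) (a b : Perm X) :
    Commute a b := by
  have key : ∀ a b : Perm (Fin 2), a * b = b * a := by decide
  obtain ⟨ι⟩ := Function.Embedding.nonempty_of_card_le (hX.trans_eq (Fintype.card_fin 2).symm)
  refine viaEmbeddingHom_injective ι ?_
  simp only [map_mul, key]

theorem sq_eq_one_of_card_le_two [Fintype X] (hX : Fintype.card X ≤ 2) (a : Perm X) :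
    a ^ 2 = 1 := by
  have key : ∀ a : Perm (Fin 2), a ^ 2 = 1 := by decide
  obtain ⟨ι⟩ := Function.Embedding.nonempty_of_card_le (hX.trans_eq (Fintype.card_fin 2).symm)
  refine viaEmbeddingHom_injective ι ?_
  simp only [map_pow, map_one, key]

theorem eq_of_braid_of_pow_three_eq_one [Fintype X] (hX : Fintype.card X ≤ 3) {a b : Perm X}
    (hab : a * b * a = b * a * b) (ha : a ^ 3 = 1) : a = b := by
  have key : ∀ a b : Perm (Fin 3), a * b * a = b * a * b → a ^ 3 = 1 → a = b := by
    decide +kernel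
  obtain ⟨ι⟩ := Function.Embedding.nonempty_of_card_le (hX.trans_eq (Fintype.card_fin 3).symm)
  refine viaEmbeddingHom_injective ι (key _ _ ?_ ?_)
  · simp only [← map_mul, hab]
  · rw [← map_pow, ha, map_one]

theorem two_mul_card_cycleFactorsFinset_le [Fintype X] [DecidableEq X] (c : Perm X) :
    2 * c.cycleFactorsFinset.card ≤ c.support.card := by
  have h := Multiset.card_nsmul_le_sum (s := c.cycleType) (a := 2) fun _ => two_le_of_mem_cycleType
  rw [sum_cycleType, cycleType_def, Multiset.card_map, smul_eq_mul] at h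
  rw [mul_comm]
  exact h

/-! ### Permutations commuting with a given one -/

theorem mul_apply_eq_of_sameCycle {a b c : Perm X} (ha : Commute c a) (hb : Commute c b) {x : X}
    (hax : c.SameCycle x (a x)) (hbx : c.SameCycle x (b x)) : a (b x) = b (a x) := by
  obtain ⟨k, hk⟩ := hax
  obtain ⟨l, hl⟩ := hbx
  have hak : a ((c ^ l) x) = (c ^ l) (a x) := DFunLike.congr_fun (ha.zpow_left l).eq.symm x
  have hbl : b ((c ^ k) x) = (c ^ k) (b x) := DFunLike.congr_fun (hb.zpow_left k).eq.symm x
  rw [← hl, hak, ← hk, hbl, ← hl, ← mul_apply, ← mul_apply, ← zpow_add, ← zpow_add, add_comm]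

theorem sameCycle_of_commute_cycleOf {a c : Perm X} [DecidableRel c.SameCycle] {x : X}
    (hx : c x ≠ x) (h : Commute a (c.cycleOf x)) : c.SameCycle x (a x) := by
  by_contra hn
  have := DFunLike.congr_fun h.eq x
  rw [mul_apply, mul_apply, cycleOf_apply_self, cycleOf_apply_of_not_sameCycle hn] at this
  exact hx (a.injective this)

/-- Restriction of permutations to an invariant set. -/
def restrictHom (s : Set X) : stabilizer (Perm X) s →* Perm s :=
  toPermHom _ _

theorem restrictHom_eq_iff {s : Set X} {a b : stabilizer (Perm X) s} :
    restrictHom s a = restrictHom s b ↔ ∀ x ∈ s, (a : Perm X) x = (b : Perm X) x :=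
  ⟨fun e x hx => congrArg Subtype.val (DFunLike.congr_fun e (⟨x, hx⟩ : s)),
    fun e => Equiv.ext fun y => Subtype.ext (e y y.2)⟩

theorem centralizer_le_stabilizer_fixed (c : Perm X) :
    Subgroup.centralizer {c} ≤ stabilizer (Perm X) (Function.fixedPoints c) := by
  refine fun a ha => mem_stabilizer_set.2 fun x => ?_
  rw [Function.mem_fixedPoints_iff, Function.mem_fixedPoints_iff, Perm.smul_def, ← mul_apply,
    ← Subgroup.mem_centralizer_singleton_iff.1 ha, mul_apply, a.injective.eq_iff]

theorem centralizer_le_stabilizer_moved (c : Perm X) :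
    Subgroup.centralizer {c} ≤ stabilizer (Perm X) {x | c x ≠ x} :=
  (centralizer_le_stabilizer_fixed c).trans_eq (stabilizer_compl (Perm X) X).symm

/-- The action of the centralizer of `c` on the points moved by `c`. -/
def movedHom (c : Perm X) : Subgroup.centralizer {c} →* Perm {x | c x ≠ x} :=
  (restrictHom _).comp (Subgroup.inclusion (centralizer_le_stabilizer_moved c))

theorem movedHom_eq_iff {c : Perm X} {a b : Subgroup.centralizer {c}} :
    movedHom c a = movedHom c b ↔ ∀ x, c x ≠ x → (a : Perm X) x = (b : Perm X) x :=
  restrictHom_eq_iff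

variable [Fintype X] [DecidableEq X]

theorem commute_movedHom {c : Perm X} {a b : Subgroup.centralizer {c}}
    (ha : a ∈ (OnCycleFactors.toPermHom c).ker) (hb : b ∈ (OnCycleFactors.toPermHom c).ker) :
    Commute (movedHom c a) (movedHom c b) := by
  have hsame : ∀ u ∈ (OnCycleFactors.toPermHom c).ker, ∀ x, c x ≠ x →
      c.SameCycle x ((u : Perm X) x) := fun u hu x hx =>
    sameCycle_of_commute_cycleOf hx ((OnCycleFactors.mem_ker_toPermHom_iff c u).1 hu _
      (cycleOf_mem_cycleFactorsFinset_iff.2 (mem_support.2 hx)))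
  have hcomm : ∀ u : Subgroup.centralizer {c}, Commute c u := fun u =>
    (Subgroup.mem_centralizer_singleton_iff.1 u.2).symm
  rw [Commute, SemiconjBy, ← map_mul, ← map_mul, movedHom_eq_iff]
  exact fun x hx =>
    mul_apply_eq_of_sameCycle (hcomm a) (hcomm b) (hsame a ha x hx) (hsame b hb x hx)

/-! ### Braid relations on at most six points -/

theorem card_cycleFactorsFinset_le_two (hX : Fintype.card X ≤ 6) {c : Perm X} (hc : c ^ 2 ≠ 1) :
    c.cycleFactorsFinset.card ≤ 2 := by
  obtain ⟨k, hk, hk3⟩ : ∃ k ∈ c.cycleType, 3 ≤ k := by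
    by_contra! h
    refine hc (orderOf_dvd_iff_pow_eq_one.1 (c.lcm_cycleType ▸ Multiset.lcm_dvd.2 fun k hk => ?_))
    rw [le_antisymm (Nat.le_of_lt_succ (h k hk)) (two_le_of_mem_cycleType hk)]
  obtain ⟨s, hs⟩ := Multiset.exists_cons_of_mem hk
  have hle := Multiset.card_nsmul_le_sum (s := s) (a := 2) fun i hi =>
    two_le_of_mem_cycleType (hs ▸ Multiset.mem_cons_of_mem hi)
  have hsum := c.sum_cycleType
  have hcard := congrArg Multiset.card hs
  have := c.support.card_le_univ
  rw [hs, Multiset.sum_cons] at hsum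
  rw [cycleType_def, Multiset.card_map, Multiset.card_cons, Finset.card_val] at hcard
  rw [smul_eq_mul] at hle
  omega

theorem pow_three_eq_one_of_card_support_eq (hX : Fintype.card X ≤ 6) {c d d' : Perm X}
    (hc : c ^ 2 ≠ 1) (hd : d ∈ c.cycleFactorsFinset) (hd' : d' ∈ c.cycleFactorsFinset)
    (hne : d ≠ d') (hcard : d'.support.card = d.support.card) : c ^ 3 = 1 := by
  have hpair : c.cycleFactorsFinset = {d, d'} := by
    refine (Finset.eq_of_subset_of_card_le (by simp [Finset.insert_subset_iff, hd, hd']) ?_).symm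
    rw [Finset.card_pair hne]
    exact card_cycleFactorsFinset_le_two hX hc
  have htype : c.cycleType = {d.support.card, d.support.card} := by
    rw [cycleType_def, hpair, Finset.insert_val_of_notMem (by simpa using hne)]
    simp [hcard]
  have horder : orderOf c = d.support.card := by simp [← lcm_cycleType, htype]
  have hsum := c.sum_cycleType
  have := c.support.card_le_univ
  have := two_le_of_mem_cycleType (σ := c) (n := d.support.card) (by simp [htype])
  simp only [htype, Multiset.insert_eq_cons, Multiset.sum_cons, Multiset.sum_singleton] at hsum
  obtain h | h : orderOf c = 2 ∨ orderOf c = 3 := by omega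
  · exact absurd (h ▸ pow_orderOf_eq_one c) hc
  · exact h ▸ pow_orderOf_eq_one c

theorem mem_ker_toPermHom_of_isConj (hX : Fintype.card X ≤ 6) {c : Perm X} (hc : c ^ 2 ≠ 1)
    (a : Subgroup.centralizer {c}) (hca : IsConj c (a : Perm X)) :
    a ∈ (OnCycleFactors.toPermHom c).ker := by
  rw [MonoidHom.mem_ker]
  by_contra hne
  obtain ⟨d, hd⟩ : ∃ d, OnCycleFactors.toPermHom c a d ≠ d := by
    contrapose! hne
    exact Equiv.ext hne
  have hc3 : c ^ 3 = 1 := by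
    refine pow_three_eq_one_of_card_support_eq hX hc d.2 (Subtype.prop _)
      (fun h => hd (Subtype.ext h.symm)) ?_
    rw [OnCycleFactors.coe_toPermHom, card_support_conj]
  have ha3 : (a : Perm X) ^ 3 = 1 := by
    obtain ⟨g, hg⟩ := isConj_iff.1 hca
    rw [← hg, conj_pow, hc3, mul_one, mul_inv_cancel]
  refine hne ?_
  have h2 := sq_eq_one_of_card_le_two
    ((Fintype.card_coe _).trans_le (card_cycleFactorsFinset_le_two hX hc))
    (OnCycleFactors.toPermHom c a)
  have h3 : OnCycleFactors.toPermHom c a ^ 3 = 1 := by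
    rw [← map_pow, show a ^ 3 = 1 from Subtype.ext ha3, map_one]
  rwa [pow_succ, h2, one_mul] at h3

theorem sq_eq_one_of_braid {X : Type*} [Fintype X] (hX : Fintype.card X ≤ 6) {a b c : Perm X}
    (hca : Commute c a) (hcb : Commute c b) (hab : a * b * a = b * a * b) (hne : a ≠ b)
    (hconja : IsConj c a) (hconjb : IsConj c b) : c ^ 2 = 1 := by
  classical
  by_contra hc
  let a' : Subgroup.centralizer {c} := ⟨a, Subgroup.mem_centralizer_singleton_iff.2 hca.eq.symm⟩
  let b' : Subgroup.centralizer {c} := ⟨b, Subgroup.mem_centralizer_singleton_iff.2 hcb.eq.symm⟩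
  have hab' : a' * b' * a' = b' * a' * b' := Subtype.ext hab
  have hmoved : ∀ x, c x ≠ x → a x = b x :=
    movedHom_eq_iff.1 <| eq_of_commute_of_braid
      (commute_movedHom (mem_ker_toPermHom_of_isConj hX hc a' hconja)
        (mem_ker_toPermHom_of_isConj hX hc b' hconjb))
      (by simp only [← map_mul, hab'])
  let f := (restrictHom _).comp (Subgroup.inclusion (centralizer_le_stabilizer_fixed c))
  have hbraid : f a' * f b' * f a' = f b' * f a' * f b' := by simp only [← map_mul, hab']
  have hfixed : f a' ≠ f b' := fun h => hne <| Equiv.ext fun x => by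
    by_cases hx : c x = x
    · exact restrictHom_eq_iff.1 h x hx
    · exact hmoved x hx
  have hcard := c.card_fixedPoints
  rw [sum_cycleType] at hcard
  have := c.support.card_le_univ
  have hsupp : 3 ≤ c.support.card := by
    have h1 : c.support.card ≠ 1 := c.card_support_ne_one
    have h0 : c.support.card ≠ 0 := fun h => hc (by simp [card_support_eq_zero.1 h])
    have h2 : c.support.card ≠ 2 := fun h => by
      obtain ⟨x, y, -, rfl⟩ := card_support_eq_two.1 h
      exact hc (by simp [sq])
    omega
  obtain hT | hT : Fintype.card (Function.fixedPoints c) ≤ 2 ∨ c.support.card = 3 := by omega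
  · exact hfixed (eq_of_commute_of_braid (commute_of_card_le_two hT _ _) hbraid)
  · refine hfixed (eq_of_braid_of_pow_three_eq_one (by omega) hbraid ?_)
    have ha3 : a ^ 3 = 1 := by
      obtain ⟨g, rfl⟩ := isConj_iff.1 hconja
      rw [conj_pow, ← (card_support_eq_three_iff.1 hT).orderOf, pow_orderOf_eq_one]
      simp
    rw [← map_pow, show a' ^ 3 = 1 from Subtype.ext ha3, map_one]

/-- The image of a transposition under the outer automorphism of the symmetric group on six
points, presented as the cube of a six-cycle `e`. -/
structure IsExotic (c e : Perm X) : Prop where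
  card_eq : Fintype.card X = 6
  isCycle : e.IsCycle
  support_eq : e.support = Finset.univ
  pow_three : e ^ 3 = c

theorem isCycle_of_pow_six_eq_one (hX : Fintype.card X ≤ 6) {e : Perm X} (he : e ^ 6 = 1) {x : X}
    (h2 : (e ^ 2) x ≠ x) (h3 : (e ^ 3) x ≠ x) :
    Fintype.card X = 6 ∧ e.IsCycle ∧ e.support = Finset.univ := by
  have hx : e x ≠ x := fun h => h2 (by rw [sq, mul_apply, h, h])
  have hcyc : (e.cycleOf x).IsCycle := isCycle_cycleOf e hx
  have hpow : ∀ k, e.cycleOf x ^ k = 1 ↔ (e ^ k) x = x := fun k => by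
    rw [hcyc.pow_eq_one_iff' ((cycleOf_apply_self e x).trans_ne hx), cycleOf_pow_apply_self]
  have horder : orderOf (e.cycleOf x) = 6 := by
    have h6 := orderOf_dvd_of_pow_eq_one ((hpow 6).2 (by rw [he, one_apply]))
    have hmem := Nat.mem_divisors.2 ⟨h6, by norm_num⟩
    rw [show Nat.divisors 6 = {1, 2, 3, 6} by decide] at hmem
    simp only [Finset.mem_insert, Finset.mem_singleton] at hmem
    rcases hmem with h | h | h | h
    · exact absurd ((hpow 1).1 (h ▸ pow_orderOf_eq_one _)) hx
    · exact absurd ((hpow 2).1 (h ▸ pow_orderOf_eq_one _)) h2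
    · exact absurd ((hpow 3).1 (h ▸ pow_orderOf_eq_one _)) h3
    · exact h
  have hsupp : (e.cycleOf x).support = Finset.univ :=
    Finset.eq_univ_of_card _ (by
      have := (e.cycleOf x).support.card_le_univ
      rw [← hcyc.orderOf] at *
      omega)
  have heq : e.cycleOf x = e := Equiv.ext fun y =>
    ((mem_support_cycleOf_iff' hx).1 (hsupp ▸ Finset.mem_univ y)).cycleOf_apply
  rw [heq] at hsupp hcyc horder
  exact ⟨by rw [← horder, hcyc.orderOf, hsupp, Finset.card_univ], hcyc, hsupp⟩

theorem isSwap_or_isExotic_of_commute (hX : Fintype.card X ≤ 6) {c d : Perm X} (h : Commute c d)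
    (hc1 : c ≠ 1) (hc : c ^ 2 = 1) (hd : d ^ 3 = 1) (hd1 : d ≠ 1) :
    c.IsSwap ∧ 5 ≤ Fintype.card X ∨ IsExotic c (c * d) := by
  obtain ⟨x, hx⟩ : ∃ x, d x ≠ x := by
    by_contra! h
    exact hd1 (Equiv.ext h)
  have hx2 : d (d x) ≠ x := fun h2 => hx <| by
    simpa [pow_succ, h2] using DFunLike.congr_fun hd x
  by_cases hcx : c x = x
  · left
    have hcd : ∀ y, c (d y) = d (c y) := DFunLike.congr_fun h.eq
    have hfix : ({x, d x, d (d x)} : Finset X) ⊆ c.supportᶜ := by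
      simp [Finset.insert_subset_iff, hcd, hcx]
    have hle := Finset.card_le_card hfix
    rw [Finset.card_eq_three.2 ⟨x, d x, d (d x), hx.symm, hx2.symm, (d.injective.ne hx).symm, rfl⟩,
      Finset.card_compl] at hle
    have hdvd := two_dvd_card_support hc
    have h0 := card_support_eq_zero.not.2 hc1
    exact ⟨card_support_eq_two.1 (by omega), by omega⟩
  · right
    have h2 : (c * d) ^ 2 = d ^ 2 := by rw [h.mul_pow, hc, one_mul]
    have h3 : (c * d) ^ 3 = c := by rw [h.mul_pow, hd, mul_one, pow_succ, hc, one_mul]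
    have h6 : (c * d) ^ 6 = 1 := by rw [show 6 = 3 * 2 by rfl, pow_mul, h3, hc]
    obtain ⟨hcard, hcycle, hsupp⟩ :=
      isCycle_of_pow_six_eq_one hX h6 (x := x) (by simpa [h2, sq] using hx2) (by rwa [h3])
    exact ⟨hcard, hcycle, hsupp, h3⟩

theorem isSwap_or_isExotic_of_braid (hX : Fintype.card X ≤ 6) {a b c : Perm X}
    (hca : Commute c a) (hcb : Commute c b) (hab : a * b * a = b * a * b) (hne : a ≠ b)
    (hconja : IsConj c a) (hconjb : IsConj c b) :
    c.IsSwap ∧ 5 ≤ Fintype.card X ∨ IsExotic c (c * (a * b)) := by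
  have hc2 := sq_eq_one_of_braid hX hca hcb hab hne hconja hconjb
  have hsq : ∀ g, IsConj c g → g * g = 1 := fun g hg => by
    obtain ⟨k, rfl⟩ := isConj_iff.1 hg
    rw [← sq, conj_pow, hc2, mul_one, mul_inv_cancel]
  refine isSwap_or_isExotic_of_commute hX (hca.mul_right hcb) ?_ hc2 ?_ fun h => hne ?_
  · rintro rfl
    exact hne ((isConj_one_right.1 hconja).trans (isConj_one_right.1 hconjb).symm)
  · calc (a * b) ^ 3 = (a * b * a) * (b * a * b) := by simp only [pow_succ, pow_zero]; group
      _ = a * b * (a * a) * b * a := by rw [← hab]; group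
      _ = 1 := by rw [hsq a hconja, mul_one, mul_assoc a, hsq b hconjb, mul_one, hsq a hconja]
  · exact (mul_eq_one_iff_eq_inv.1 h).trans (eq_inv_of_mul_eq_one_left (hsq b hconjb)).symm

/-! ### Braid sequences of permutations -/

universe u

/-- Every homomorphism from the braid group on `m + 1` strands to the symmetric group on at most
`k` points has cyclic image. -/
def BraidCollapse (m k : ℕ) : Prop :=
  ∀ (X : Type u) [Fintype X] (c : ℕ → Perm X), IsBraidSeq m c → Fintype.card X ≤ k → c 0 = c 1

theorem IsBraidSeq.isSwap_or_isExotic_of_card_le_six {X : Type*} [Fintype X] [DecidableEq X]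
    {m : ℕ} {c : ℕ → Perm X} (h : IsBraidSeq m c) (hm : 4 ≤ m) (hX : Fintype.card X ≤ 6)
    (h01 : c 0 ≠ c 1) :
    (c 0).IsSwap ∧ 5 ≤ Fintype.card X ∨ IsExotic (c 0) (c 0 * (c 2 * c 3)) :=
  isSwap_or_isExotic_of_braid hX (h.comm 0 2 le_rfl (by omega)) (h.comm 0 3 (by omega) (by omega))
    (h.braid 2 (by omega))
    (fun h23 => h01 (h.eq_head_of_eq_succ (i := 2) (by omega) (by omega) h23).symm)
    (h.isConj_head (by omega)) (h.isConj_head (by omega))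

theorem braidCollapse_of_le_five {m : ℕ} (hm : 4 ≤ m) (hm5 : m ≤ 5) :
    BraidCollapse.{u} m ((m + 3) / 2) := by
  intro X _ c h hX
  classical
  by_contra h01
  rcases h.isSwap_or_isExotic_of_card_le_six hm (by omega) h01 with ⟨-, h5⟩ | hexotic
  · omega
  · have := hexotic.card_eq
    omega

section Collapse

variable {X : Type u} [Fintype X] {m : ℕ} {c : ℕ → Perm X}

theorem IsBraidSeq.apply_eq_of_apply_zero_ne (h : IsBraidSeq m c) (hm : 6 ≤ m)
    (hcol : BraidCollapse.{u} (m - 2) ((m + 1) / 2)) (hX : Fintype.card X ≤ m + 1) {j : ℕ}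
    (hj : 2 ≤ j) (hjm : j < m) {x : X} (hx : c 0 x ≠ x) : c j x = c 2 x := by
  classical
  obtain ⟨g, hg, hgc⟩ := (h.shift 2).exists_subgroup_lift (K := Subgroup.centralizer {c 0})
    fun i hi => Subgroup.mem_centralizer_singleton_iff.2
      (h.comm 0 (i + 2) (by omega) (by omega)).eq.symm
  have hcycles : OnCycleFactors.toPermHom (c 0) (g 0) = OnCycleFactors.toPermHom (c 0) (g 1) := by
    refine hcol _ _ (hg.map (OnCycleFactors.toPermHom (c 0))) ?_
    have := two_mul_card_cycleFactorsFinset_le (c 0)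
    have := (c 0).support.card_le_univ
    rw [Fintype.card_coe]
    omega
  have hmoved := hg.map_eq_map_head_of_ker_comm (by omega) _ (movedHom (c 0))
    (fun _ hu _ hv => commute_movedHom hu hv) hcycles (j := j - 2) (by omega)
  simpa [hgc _ (show j - 2 < m - 2 by omega), hgc 0 (by omega), Nat.sub_add_cancel hj] using
    movedHom_eq_iff.1 hmoved x hx

theorem IsBraidSeq.apply_eq_apply_zero (h : IsBraidSeq m c) (hm : 6 ≤ m)
    (hcol : BraidCollapse.{u} (m - 2) ((m + 1) / 2)) (hX : Fintype.card X ≤ m + 1) {j : ℕ}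
    (hjm : j < m) {x : X} (hx0 : c 0 x ≠ x) (hx2 : c 2 x ≠ x) : c j x = c 0 x := by
  have hlow : ∀ j, 2 ≤ j → j < m → c j x = c 2 x := fun j hj hjm =>
    h.apply_eq_of_apply_zero_ne hm hcol hX hj hjm hx0
  have hhigh : ∀ j, j + 2 < m → c j x = c (m - 3) x := fun j hj => by
    have hlast : c (m - 1 - 0) x ≠ x := by rwa [hlow _ (by omega) (by omega)]
    have := h.reverse.apply_eq_of_apply_zero_ne hm hcol hX (j := m - 1 - j) (by omega) (by omega)
      hlast
    rwa [show m - 1 - (m - 1 - j) = j by omega, show m - 1 - 2 = m - 3 by omega] at this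
  rcases Nat.lt_or_ge (j + 2) m with hj | hj
  · rw [hhigh j hj, hhigh 0 (by omega)]
  · rw [hlow j (by omega) hjm, hhigh 2 (by omega), hhigh 0 (by omega)]

theorem card_support_mul_le [DecidableEq X] {r : Perm X}
    (hr : ∀ i, i + 1 < m → SemiconjBy r (c i) (c (i + 1)))
    (hdisj : ∀ j, 2 ≤ j → j < m → Perm.Disjoint (c 0) (c j)) :
    (m + 1) / 2 * (c 0).support.card ≤ Fintype.card X := by
  have hconj : ∀ i j, i + j < m → r ^ i * c j * (r ^ i)⁻¹ = c (j + i) := fun i j hij =>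
    mul_inv_eq_iff_eq_mul.2 (semiconjBy_pow_of_shift hr (by omega)).eq
  have hdisj' : ∀ i j, i + 2 ≤ j → j < m → Perm.Disjoint (c i) (c j) := fun i j hij hj => by
    have := (hdisj (j - i) (by omega) (by omega)).conj (r ^ i)
    rwa [hconj i 0 (by omega), hconj i (j - i) (by omega), zero_add,
      Nat.sub_add_cancel (by omega)] at this
  have hcard : ∀ i < m, (c i).support.card = (c 0).support.card := fun i hi => by
    rw [← zero_add i, ← hconj i 0 (by omega), card_support_conj]
  have hunion := Finset.card_biUnion (s := Finset.range ((m + 1) / 2))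
    (t := fun i => (c (2 * i)).support) fun i hi j hj hij => by
      rw [Finset.mem_coe, Finset.mem_range] at hi hj
      rcases lt_or_gt_of_ne hij with h | h
      · exact (hdisj' (2 * i) (2 * j) (by omega) (by omega)).disjoint_support
      · exact (hdisj' (2 * j) (2 * i) (by omega) (by omega)).disjoint_support.symm
  rw [Finset.sum_congr rfl fun i hi => hcard (2 * i) (by rw [Finset.mem_range] at hi; omega),
    Finset.sum_const, Finset.card_range, smul_eq_mul] at hunion
  exact hunion ▸ Finset.card_le_univ _

theorem mem_stabilizer_commonMoved {X : Type*} [Finite X] {c : ℕ → Perm X} {i : ℕ}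
    (heq : ∀ x, c 0 x ≠ x → c 2 x ≠ x → c i x = c 0 x ∧ c 2 x = c 0 x) :
    c i ∈ stabilizer (Perm X) {x | c 0 x ≠ x ∧ c 2 x ≠ x} := by
  rw [mem_stabilizer_set_iff_smul_set_subset (Set.toFinite _)]
  rintro _ ⟨x, ⟨hx0, hx2⟩, rfl⟩
  obtain ⟨hi, h2⟩ := heq x hx0 hx2
  change c 0 (c i x) ≠ c i x ∧ c 2 (c i x) ≠ c i x
  refine ⟨?_, ?_⟩
  · rw [hi]
    exact (c 0).injective.ne hx0
  · rw [hi, ← h2]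
    exact (c 2).injective.ne hx2

theorem mem_stabilizer_commonMoved_of_shift {X : Type*} [Finite X] {c : ℕ → Perm X} {r : Perm X}
    (hr : ∀ i, i + 1 < m → SemiconjBy r (c i) (c (i + 1))) (hm : 4 ≤ m)
    (heq : ∀ x, c 0 x ≠ x → c 2 x ≠ x → c 1 x = c 0 x ∧ c 3 x = c 0 x) :
    r ∈ stabilizer (Perm X) {x | c 0 x ≠ x ∧ c 2 x ≠ x} := by
  rw [← inv_mem_iff, mem_stabilizer_set_iff_smul_set_subset (Set.toFinite _)]
  have happly : ∀ i, i + 1 < m → ∀ y, c (i + 1) (r y) ≠ r y → c i y ≠ y := fun i hi y hy h =>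
    hy (by simpa only [mul_apply, h] using (Perm.ext_iff.1 (hr i hi) y).symm)
  rintro _ ⟨x, ⟨hx0, hx2⟩, rfl⟩
  obtain ⟨y, rfl⟩ := r.surjective x
  obtain ⟨h1, h3⟩ := heq (r y) hx0 hx2
  simpa using And.intro (happly 0 (by omega) y (h1 ▸ hx0)) (happly 2 (by omega) y (h3 ▸ hx0))

theorem IsBraidSeq.disjoint_of_commonMoved_eq_empty (h : IsBraidSeq m c) (hm : 6 ≤ m)
    (hcol : BraidCollapse.{u} (m - 2) ((m + 1) / 2)) (hX : Fintype.card X ≤ m + 1)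
    (hempty : ∀ x, ¬ (c 0 x ≠ x ∧ c 2 x ≠ x)) {j : ℕ} (hj : 2 ≤ j) (hjm : j < m) :
    Perm.Disjoint (c 0) (c j) := fun x => by
  by_cases hx : c 0 x = x
  · exact Or.inl hx
  · rw [h.apply_eq_of_apply_zero_ne hm hcol hX hj hjm hx]
    exact Or.inr (not_not.1 fun h2 => hempty x ⟨hx, h2⟩)

end Collapse

theorem braidCollapse_step {m : ℕ} (hm : 6 ≤ m) (hcol : BraidCollapse.{u} (m - 2) ((m + 1) / 2)) :
    BraidCollapse.{u} m ((m + 3) / 2) := by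
  intro X _ c h hX
  induction hN : Fintype.card X using Nat.strong_induction_on generalizing X with
  | _ N ih =>
  subst hN
  classical
  have hX' : Fintype.card X ≤ m + 1 := by omega
  have heq : ∀ j < m, ∀ x, c 0 x ≠ x → c 2 x ≠ x → c j x = c 0 x := fun j hj x hx0 hx2 =>
    h.apply_eq_apply_zero hm hcol hX' hj hx0 hx2
  by_cases hY : ∃ x, c 0 x ≠ x ∧ c 2 x ≠ x
  · obtain ⟨y, hy⟩ := hY
    obtain ⟨g, hg, hgc⟩ := h.exists_subgroup_lift
      (K := stabilizer (Perm X) {x | c 0 x ≠ x ∧ c 2 x ≠ x}ᶜ) fun i hi => by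
        rw [stabilizer_compl]
        exact mem_stabilizer_commonMoved fun x hx0 hx2 =>
          ⟨heq i hi x hx0 hx2, heq 2 (by omega) x hx0 hx2⟩
    have hlt : Fintype.card ({x | c 0 x ≠ x ∧ c 2 x ≠ x}ᶜ : Set X) < Fintype.card X :=
      Fintype.card_subtype_lt (x := y) (not_not.2 hy)
    have hrestrict := restrictHom_eq_iff.1 (ih _ hlt _ _ (hg.map (restrictHom _)) (by omega) rfl)
    rw [hgc 0 (by omega), hgc 1 (by omega)] at hrestrict
    ext x
    by_cases hx : c 0 x ≠ x ∧ c 2 x ≠ x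
    · exact (heq 1 (by omega) x hx.1 hx.2).symm
    · exact hrestrict x hx
  · have hle := card_support_mul_le (m := m) (c := c) (r := ((List.range m).map c).prod)
      (fun i hi => h.prod_range_semiconjBy hi le_rfl)
      fun j hj hjm => h.disjoint_of_commonMoved_eq_empty hm hcol hX' (not_exists.1 hY) hj hjm
    have h0 : c 0 = 1 := by
      by_contra h0
      have := Nat.mul_le_mul_left ((m + 1) / 2) (two_le_card_support_of_ne_one h0)
      omega
    exact h0.trans (isConj_one_right.1 (h0 ▸ h.isConj_head (i := 1) (by omega))).symm

theorem braidCollapse {m : ℕ} (hm : 4 ≤ m) : BraidCollapse.{u} m ((m + 3) / 2) := by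
  induction m using Nat.strong_induction_on with
  | _ m ih =>
  rcases Nat.lt_or_ge m 6 with h | h
  · exact braidCollapse_of_le_five hm (by omega)
  · refine braidCollapse_step h ?_
    simpa only [show m - 2 + 3 = m + 1 by omega] using ih (m - 2) (by omega) (by omega)

theorem eq_univ_of_closure_eq_top {X : Type*} {S : Set (Perm X)} (hS : Subgroup.closure S = ⊤)
    {s : Set X} (hs : s.Nonempty) (hst : S ⊆ stabilizer (Perm X) s) : s = Set.univ := by
  classical
  obtain ⟨x, hx⟩ := hs
  refine Set.eq_univ_of_forall fun y => ?_
  have hmem : swap x y ∈ stabilizer (Perm X) s :=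
    (Subgroup.closure_le _).2 hst (hS ▸ Subgroup.mem_top _)
  simpa using (mem_stabilizer_set.1 hmem x).2 hx

theorem ne_of_closure_eq_top {X : Type*} [Fintype X] (hX : 3 ≤ Fintype.card X) {r a b : Perm X}
    (hr : SemiconjBy r a b) (hgen : Subgroup.closure {r, a} = ⊤) : a ≠ b := by
  classical
  rintro rfl
  have hcomm := Subgroup.isMulCommutative_closure (k := {r, a}) (by
    rintro x (rfl | rfl) y (rfl | rfl)
    exacts [rfl, hr.eq, hr.eq.symm, rfl])
  rw [hgen] at hcomm
  obtain ⟨x, y, z, hxy, hxz, hyz⟩ := Fintype.two_lt_card_iff.1 hX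
  have hswap := congrArg Subtype.val (hcomm.is_comm.comm
    (⟨swap x y, Subgroup.mem_top _⟩ : (⊤ : Subgroup (Perm X))) ⟨swap y z, Subgroup.mem_top _⟩)
  have := Perm.ext_iff.1 hswap x
  simp [swap_apply_of_ne_of_ne, hxy, hxz, hyz] at this

variable {n : ℕ} {X : Type u} [Fintype X] [DecidableEq X] {c : ℕ → Perm X} {r : Perm X}

theorem IsBraidSeq.isSwap_or_isExotic (hn : 5 ≤ n) (hX : Fintype.card X = n)
    (h : IsBraidSeq (n - 1) c) (hr : ∀ i, i + 1 < n - 1 → SemiconjBy r (c i) (c (i + 1)))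
    (hgen : Subgroup.closure {r, c 0} = ⊤) :
    (c 0).IsSwap ∨ IsExotic (c 0) (c 0 * (c 2 * c 3)) := by
  have h01 : c 0 ≠ c 1 := ne_of_closure_eq_top (by omega) (hr 0 (by omega)) hgen
  rcases Nat.lt_or_ge n 7 with h7 | h7
  · exact (h.isSwap_or_isExotic_of_card_le_six (by omega) (by omega) h01).imp_left And.left
  left
  have hcol : BraidCollapse.{u} (n - 1 - 2) ((n - 1 + 1) / 2) := by
    simpa only [show n - 1 - 2 + 3 = n - 1 + 1 by omega] using
      braidCollapse.{u} (m := n - 1 - 2) (by omega)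
  have hX' : Fintype.card X ≤ n - 1 + 1 := by omega
  have heq : ∀ j < n - 1, ∀ x, c 0 x ≠ x → c 2 x ≠ x → c j x = c 0 x := fun j hj x hx0 hx2 =>
    h.apply_eq_apply_zero (by omega) hcol hX' hj hx0 hx2
  have hempty : ∀ x, ¬ (c 0 x ≠ x ∧ c 2 x ≠ x) := by
    intro x hx
    have huniv := eq_univ_of_closure_eq_top hgen (s := {x | c 0 x ≠ x ∧ c 2 x ≠ x}) ⟨x, hx⟩
      (Set.pair_subset
        (mem_stabilizer_commonMoved_of_shift hr (by omega) fun x hx0 hx2 =>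
          ⟨heq 1 (by omega) x hx0 hx2, heq 3 (by omega) x hx0 hx2⟩)
        (mem_stabilizer_commonMoved fun x hx0 hx2 => ⟨rfl, heq 2 (by omega) x hx0 hx2⟩))
    refine h01 (Equiv.ext fun x => ?_)
    obtain ⟨hx0, hx2⟩ := huniv.ge (Set.mem_univ x)
    exact (heq 1 (by omega) x hx0 hx2).symm
  have hle := card_support_mul_le hr fun j hj hjm =>
    h.disjoint_of_commonMoved_eq_empty (by omega) hcol hX' hempty hj hjm
  have h0 : c 0 ≠ 1 := fun h0 =>
    h01 (h0.trans (isConj_one_right.1 (h0 ▸ h.isConj_head (i := 1) (by omega))).symm)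
  refine card_support_eq_two.1 (le_antisymm ?_ (two_le_card_support_of_ne_one h0))
  by_contra! h3
  have := Nat.mul_le_mul_left ((n - 1 + 1) / 2) (Nat.succ_le_of_lt h3)
  omega

theorem eq_of_commute_swap {X : Type*} [DecidableEq X] {p q q' : X} (hq : q ≠ p) (hq' : q' ≠ p)
    (h : Commute (swap p q) (swap p q')) : q = q' := by
  by_contra hqq
  have := Perm.ext_iff.1 h.eq p
  simp only [mul_apply, swap_apply_left, swap_apply_of_ne_of_ne hq hqq,
    swap_apply_of_ne_of_ne hq' (Ne.symm hqq)] at this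
  exact hqq this.symm

theorem IsBraidSeq.head_ne_two {G : Type*} [Group G] {m : ℕ} {c : ℕ → G} (h : IsBraidSeq m c)
    (hm : 4 ≤ m) (h01 : c 0 ≠ c 1) : c 0 ≠ c 2 := fun h02 => by
  have h23 : c 2 = c 3 := eq_of_commute_of_braid (h02 ▸ h.comm 0 3 (by omega) (by omega))
    (h.braid 2 (by omega))
  exact h01 (h.eq_head_of_eq_succ (i := 2) (j := 1) (by omega) (by omega) h23).symm

section Coordinates

variable {X : Type*} [DecidableEq X] {m : ℕ} {c : ℕ → Perm X} {r : Perm X}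

theorem eq_swap_pow_apply (hr : ∀ i, i + 1 < m → SemiconjBy r (c i) (c (i + 1))) {p q : X}
    (hc : c 0 = swap p q) {i : ℕ} (hi : i < m) : c i = swap ((r ^ i) p) ((r ^ i) q) := by
  have := semiconjBy_pow_of_shift hr (i := 0) (k := i) (by omega)
  rw [zero_add, hc] at this
  exact mul_right_cancel (this.eq.symm.trans (mul_swap_eq_swap_mul _ _ _))

theorem IsBraidSeq.apply_ne_of_head_eq_swap (h : IsBraidSeq m c) (hm : 4 ≤ m)
    (hr : ∀ i, i + 1 < m → SemiconjBy r (c i) (c (i + 1))) (h01 : c 0 ≠ c 1) {p q : X}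
    (hpq : p ≠ q) (hc : c 0 = swap p q) : r p ≠ p := by
  intro hp
  have hp2 : (r ^ 2) p = p := by rw [pow_two, mul_apply, hp, hp]
  have hq2 : (r ^ 2) q ≠ p := hp2 ▸ (r ^ 2).injective.ne hpq.symm
  have hc2 := eq_swap_pow_apply hr hc (i := 2) (by omega)
  rw [hp2] at hc2
  have hcomm := h.comm 0 2 le_rfl (by omega)
  rw [hc, hc2] at hcomm
  refine h.head_ne_two hm h01 ?_
  rw [hc, hc2, ← eq_of_commute_swap hpq.symm hq2 hcomm]

theorem IsBraidSeq.exists_head_eq_swap_apply (h : IsBraidSeq m c) (hm : 4 ≤ m)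
    (hr : ∀ i, i + 1 < m → SemiconjBy r (c i) (c (i + 1))) (h01 : c 0 ≠ c 1)
    (hs : (c 0).IsSwap) : ∃ p, r p ≠ p ∧ c 0 = swap p (r p) := by
  obtain ⟨a, b, hab, hc⟩ := hs
  have hc' := hc.trans (swap_comm a b)
  have hra := h.apply_ne_of_head_eq_swap hm hr h01 hab hc
  have hrb := h.apply_ne_of_head_eq_swap hm hr h01 hab.symm hc'
  by_cases hb : b = r a
  · exact ⟨a, hra, hb ▸ hc⟩
  by_cases ha : a = r b
  · exact ⟨b, hrb, ha ▸ hc'⟩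
  have hc1 := eq_swap_pow_apply hr hc (i := 1) (by omega)
  rw [pow_one] at hc1
  have hdisj : Perm.Disjoint (c 0) (c 1) := fun y => by
    rw [hc, hc1]
    by_cases hya : y = a
    · subst hya
      exact Or.inr (swap_apply_of_ne_of_ne hra.symm ha)
    by_cases hyb : y = b
    · subst hyb
      exact Or.inr (swap_apply_of_ne_of_ne hb hrb.symm)
    · exact Or.inl (swap_apply_of_ne_of_ne hya hyb)
  exact absurd (eq_of_commute_of_braid hdisj.commute (h.braid 0 (by omega))) h01

theorem sameCycle_of_closure_eq_top {p : X} (hgen : Subgroup.closure {r, swap p (r p)} = ⊤)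
    (y : X) : r.SameCycle p y := by
  have huniv := eq_univ_of_closure_eq_top hgen (s := {y | r.SameCycle p y})
    ⟨p, SameCycle.refl r p⟩ (Set.pair_subset
      (mem_stabilizer_set.2 fun x => sameCycle_apply_right)
      (mem_stabilizer_set.2 fun x => by
        change r.SameCycle p (swap p (r p) x) ↔ r.SameCycle p x
        rw [swap_apply_def]
        split_ifs with h₁ h₂
        · simp [h₁, SameCycle.refl]
        · simp [h₂, SameCycle.refl]
        · rfl))
  exact huniv.ge (Set.mem_univ y)

theorem IsBraidSeq.exists_equiv_eq_swap {n : ℕ} [Fintype X] (hn : 5 ≤ n)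
    (hX : Fintype.card X = n) (h : IsBraidSeq (n - 1) c)
    (hr : ∀ i, i + 1 < n - 1 → SemiconjBy r (c i) (c (i + 1)))
    (hgen : Subgroup.closure {r, c 0} = ⊤) (hs : (c 0).IsSwap) :
    ∃ e : Fin n ≃ X, ∀ i (hi : i + 1 < n), c i = swap (e ⟨i, by omega⟩) (e ⟨i + 1, hi⟩) := by
  have h01 : c 0 ≠ c 1 := ne_of_closure_eq_top (by omega) (hr 0 (by omega)) hgen
  obtain ⟨p, hp, hc⟩ := h.exists_head_eq_swap_apply (by omega) hr h01 hs
  have hbij : Function.Bijective fun i : Fin n => (r ^ (i : ℕ)) p := by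
    refine (Fintype.bijective_iff_surjective_and_card _).2 ⟨fun y => ?_, by simp [hX]⟩
    obtain ⟨i, hi, hiy⟩ :=
      (sameCycle_of_closure_eq_top (hc ▸ hgen) y).exists_pow_eq_of_mem_support (mem_support.2 hp)
    exact ⟨⟨i, hi.trans_le (hX ▸ Finset.card_le_univ _)⟩, hiy⟩
  refine ⟨Equiv.ofBijective _ hbij, fun i hi => ?_⟩
  rw [eq_swap_pow_apply hr hc (by omega)]
  simp only [ofBijective_apply, pow_succ, mul_apply]

end Coordinates

end

/-! ### The Artin group of type `Bₙ` -/

/-- The terms `c 0, …, c (n - 1)` satisfy the Artin relations of type `Bₙ`; the later terms of `c`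
are unconstrained. -/
structure IsArtinBSeq {G : Type*} [Group G] (n : ℕ) (c : ℕ → G) : Prop where
  braid : ∀ i, i + 2 < n → c i * c (i + 1) * c i = c (i + 1) * c i * c (i + 1)
  comm : ∀ i j, i + 2 ≤ j → j < n → Commute (c i) (c j)
  braid_four : ∀ i, i + 2 = n →
    c i * c (i + 1) * c i * c (i + 1) = c (i + 1) * c i * c (i + 1) * c i

theorem semiconjBy_prod_range {G : Type*} [Group G] {c d : ℕ → G} {r : G} {k : ℕ}
    (hr : ∀ i < k, SemiconjBy r (c i) (d i)) :
    SemiconjBy r ((List.range k).map c).prod ((List.range k).map d).prod := by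
  induction k with
  | zero => simp
  | succ k ih =>
    rw [List.prod_range_succ, List.prod_range_succ]
    exact (ih fun i hi => hr i (by omega)).mul_right (hr k (by omega))

namespace IsArtinBSeq

variable {G : Type*} [Group G] {n : ℕ} {c : ℕ → G}

theorem isBraidSeq (h : IsArtinBSeq n c) : IsBraidSeq (n - 1) c where
  braid i hi := h.braid i (by omega)
  comm i j hij hj := h.comm i j hij (by omega)

theorem prod_semiconjBy (h : IsArtinBSeq n c) {i : ℕ} (hi : i + 2 < n) :
    SemiconjBy ((List.range n).map c).prod (c i) (c (i + 1)) := by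
  obtain ⟨k, rfl⟩ : ∃ k, n = k + 1 := ⟨n - 1, by omega⟩
  rw [List.prod_range_succ]
  exact (h.isBraidSeq.prod_range_semiconjBy (by omega) le_rfl).mul_left
    (h.comm i k (by omega) (by omega)).symm

theorem prod_sq_semiconjBy {k : ℕ} (h : IsArtinBSeq (k + 2) c) :
    SemiconjBy (((List.range (k + 2)).map c).prod ^ 2) (c k) (c 0) := by
  have hshift := (semiconjBy_prod_range (k := k) (c := c) (d := fun i => c (i + 1))
    fun i hi => h.prod_semiconjBy (by omega)).eq
  have hhead : c 0 * ((List.range k).map fun i => c (i + 1)).prod =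
      ((List.range k).map c).prod * c k := by
    rw [← List.prod_range_succ, List.prod_range_succ' c]
  have hlast : Commute (c (k + 1)) ((List.range k).map c).prod :=
    Commute.list_prod_right _ _ fun x hx => by
      obtain ⟨i, hi, rfl⟩ := List.mem_map.1 hx
      exact (h.comm i (k + 1) (by have := List.mem_range.1 hi; omega) (by omega)).symm
  have hfour := h.braid_four k rfl
  rw [List.prod_range_succ, List.prod_range_succ] at hshift ⊢
  generalize ((List.range k).map c).prod = p at *
  generalize ((List.range k).map fun i => c (i + 1)).prod = q at *
  refine Eq.symm ?_
  calc c 0 * (p * c k * c (k + 1)) ^ 2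
      = c 0 * (p * c k * c (k + 1) * p) * (c k * c (k + 1)) := by
        simp only [pow_two, mul_assoc]
    _ = c 0 * q * p * (c k * c (k + 1) * c k * c (k + 1)) := by
        rw [hshift]
        simp only [mul_assoc]
    _ = p * c k * (p * c (k + 1)) * c k * c (k + 1) * c k := by
        rw [hhead, hfour]
        simp only [mul_assoc]
    _ = (p * c k * c (k + 1)) ^ 2 * c k := by
        rw [← hlast.eq, pow_two]
        simp only [mul_assoc]

end IsArtinBSeq

namespace ArtinB

variable {n : ℕ} {G : Type*} [Group G]

theorem rB_succ {i : ℕ} (hi : i < n) : rB n (i + 1) = PresentedGroup.of ⟨i, hi⟩ := by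
  simp [rB, hi]

theorem isArtinBSeq_rB (n : ℕ) : IsArtinBSeq n fun i => rB n (i + 1) where
  braid i hi := by
    rw [rB_succ (show i < n by omega), rB_succ (show i + 1 < n by omega)]
    exact PresentedGroup.mk_eq_mk_of_mul_inv_mem (Or.inl ⟨_, _, rfl, hi, rfl⟩)
  comm i j hij hj := by
    rw [rB_succ (show i < n by omega), rB_succ hj]
    exact PresentedGroup.mk_eq_mk_of_mul_inv_mem (Or.inr (Or.inr ⟨_, _, hij, rfl⟩))
  braid_four i hi := by
    rw [rB_succ (show i < n by omega), rB_succ (show i + 1 < n by omega)]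
    exact PresentedGroup.mk_eq_mk_of_mul_inv_mem (Or.inr (Or.inl ⟨_, _, hi, hi, rfl⟩))

/-- The homomorphism `A[Bₙ] → G` with `r_{i+1} ↦ c i`, for a sequence `c` satisfying the Artin
relations. -/
def lift {c : ℕ → G} (h : IsArtinBSeq n c) : ArtinB n →* G :=
  PresentedGroup.toGroup (f := fun i : Fin n => c i) (by
    rintro w (⟨i, j, hij, hj, rfl⟩ | ⟨i, j, hi, hj, rfl⟩ | ⟨i, j, hij, rfl⟩) <;>
      simp only [map_mul, map_inv, FreeGroup.lift_apply_of, mul_inv_eq_one]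
    · exact hij ▸ h.braid i (by omega)
    · exact (show (i : ℕ) + 1 = j by omega) ▸ h.braid_four i hi
    · exact h.comm i j hij j.2)

theorem lift_rB {c : ℕ → G} (h : IsArtinBSeq n c) {i : ℕ} (hi : i < n) :
    lift h (rB n (i + 1)) = c i := by
  rw [rB_succ hi, lift, PresentedGroup.toGroup.of]

theorem hom_ext_s12 {f g : ArtinB n →* G} (h : ∀ i < n, f (rB n (i + 1)) = g (rB n (i + 1))) :
    f = g :=
  PresentedGroup.ext fun i => rB_succ i.2 ▸ h i i.2

theorem eq_top_of_rB_mem {K : Subgroup (ArtinB n)} (h : ∀ i < n, rB n (i + 1) ∈ K) : K = ⊤ :=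
  eq_top_iff.2 fun x _ => PresentedGroup.generated_by _ K (fun i => rB_succ i.2 ▸ h i i.2) x

theorem rB_induction {p : ArtinB n → Prop} (one : p 1) (mul : ∀ x y, p x → p y → p (x * y))
    (inv : ∀ x, p x → p x⁻¹) (rB : ∀ i < n, p (rB n (i + 1))) (g : ArtinB n) : p g := by
  let K : Subgroup (ArtinB n) :=
    { carrier := {x | p x}
      one_mem' := one
      mul_mem' := fun hx hy => mul _ _ hx hy
      inv_mem' := fun hx => inv _ hx }
  exact (eq_top_of_rB_mem (K := K) rB).ge (Subgroup.mem_top g)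

theorem tB_eq_rB {i : ℕ} (h0 : 0 < i) (hi : i < n) : tB n i = rB n i := by
  rw [tB, Nat.mod_eq_of_lt hi, if_neg (by omega)]

theorem tB_add_self (n i : ℕ) : tB n (i + n) = tB n i := by
  simp only [tB, Nat.add_mod_right]

theorem tB_mod (n i : ℕ) : tB n (i % n) = tB n i := by
  simp only [tB, Nat.mod_mod]

theorem ρB_semiconjBy_tB (hn : 2 ≤ n) (i : ℕ) : SemiconjBy (ρB n) (tB n i) (tB n (i + 1)) := by
  have hsucc : tB n (i + 1) = tB n (i % n + 1) := by
    rw [← tB_mod n (i + 1), ← Nat.mod_add_mod, tB_mod]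
  rw [hsucc, ← tB_mod n i]
  have hi := Nat.mod_lt i (show 0 < n by omega)
  generalize i % n = j at hi
  rcases Nat.eq_zero_or_pos j with rfl | hj
  · obtain ⟨k, rfl⟩ : ∃ k, n = k + 2 := ⟨n - 2, by omega⟩
    have hsq : ρB (k + 2) ^ 2 * rB (k + 2) (k + 2 - 1) = rB (k + 2) 1 * ρB (k + 2) ^ 2 :=
      (isArtinBSeq_rB (k + 2)).prod_sq_semiconjBy
    rw [zero_add, tB_eq_rB one_pos (by omega), tB, if_pos (Nat.zero_mod _), SemiconjBy, ← mul_assoc,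
      ← mul_assoc, mul_inv_eq_iff_eq_mul, ← pow_two]
    simpa only [pow_two, mul_assoc] using hsq
  rcases Nat.lt_or_ge (j + 1) n with hjn | hjn
  · rw [tB_eq_rB hj hi, tB_eq_rB (by omega) hjn]
    obtain ⟨i, rfl⟩ : ∃ i, j = i + 1 := ⟨j - 1, by omega⟩
    exact (isArtinBSeq_rB n).prod_semiconjBy (by omega)
  · obtain rfl : n = j + 1 := by omega
    rw [tB_eq_rB hj hi, tB, if_pos (Nat.mod_self _), Nat.add_sub_cancel]
    exact (inv_mul_cancel_right _ _).symm

theorem ρB_pow_semiconjBy_tB (hn : 2 ≤ n) (i k : ℕ) :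
    SemiconjBy (ρB n ^ k) (tB n i) (tB n (i + k)) := by
  induction k with
  | zero => simp
  | succ k ih => exact pow_succ' (ρB n) k ▸ (ρB_semiconjBy_tB hn (i + k)).mul_left ih

theorem isConj_tB (hn : 2 ≤ n) (i : ℕ) : IsConj (tB n 1) (tB n i) := by
  have h0 : ∀ k, IsConj (tB n 0) (tB n k) := fun k =>
    isConj_iff.2 ⟨ρB n ^ k, mul_inv_eq_iff_eq_mul.2 (by
      simpa only [zero_add] using (ρB_pow_semiconjBy_tB hn 0 k).eq)⟩
  exact (h0 1).symm.trans (h0 i)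

theorem closure_ρB_tB (hn : 2 ≤ n) : Subgroup.closure {ρB n, tB n 1} = ⊤ := by
  have hρ : ρB n ∈ Subgroup.closure {ρB n, tB n 1} := Subgroup.subset_closure (by simp)
  have hr : ∀ i, i + 1 < n → rB n (i + 1) ∈ Subgroup.closure {ρB n, tB n 1} := fun i hi => by
    rw [← tB_eq_rB (by omega) hi, add_comm,
      ← mul_inv_eq_iff_eq_mul.2 (ρB_pow_semiconjBy_tB hn 1 i).eq]
    exact mul_mem (mul_mem (pow_mem hρ i) (Subgroup.subset_closure (by simp)))
      (inv_mem (pow_mem hρ i))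
  refine eq_top_of_rB_mem fun i hi => ?_
  rcases Nat.lt_or_ge (i + 1) n with hin | hin
  · exact hr i hin
  · obtain rfl : n = i + 1 := by omega
    have hprod : ρB (i + 1) = ((List.range i).map fun j => rB (i + 1) (j + 1)).prod *
        rB (i + 1) (i + 1) := List.prod_range_succ _ _
    refine (Subgroup.mul_mem_cancel_left _ (list_prod_mem fun x hx => ?_)).1
      (by rw [← hprod]; exact hρ)
    obtain ⟨j, hj, rfl⟩ := List.mem_map.1 hx
    exact hr j (by have := List.mem_range.1 hj; omega)

theorem ρB_pow_mem_center (hn : 2 ≤ n) : ρB n ^ n ∈ Subgroup.center (ArtinB n) := by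
  have hle : Subgroup.closure {ρB n, tB n 1} ≤ Subgroup.centralizer {ρB n ^ n} := by
    rw [Subgroup.closure_le]
    rintro x (rfl | rfl) <;> refine Subgroup.mem_centralizer_singleton_iff.2 ?_
    · exact (Commute.self_pow _ n).eq
    · exact (tB_add_self n 1 ▸ (ρB_pow_semiconjBy_tB hn 1 n).eq).symm
  rw [closure_ρB_tB hn] at hle
  exact Subgroup.mem_center_iff.2 fun g =>
    Subgroup.mem_centralizer_singleton_iff.1 (hle (Subgroup.mem_top g))

end ArtinB

/-! ### Linking data of braids -/

/-- Twice the pairwise linking numbers (`lk`), six times the triple invariants (`tri`) and the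
permutation of a braid on strands indexed by `ℕ`. The group law below makes `lk` and `tri`
coordinates on the quotient of the pure braid group by the third term of its lower central series,
extended by the symmetric group. -/
@[ext]
structure LinkData where
  lk : ℕ → ℕ → ℤ
  lk_comm : ∀ a b, lk a b = lk b a
  lk_self : ∀ a, lk a a = 0
  tri : ℕ → ℕ → ℕ → ℤ
  perm : Equiv.Perm ℕ

namespace LinkData

/-- The determinant with rows `(1, 1, 1)`, `(f pq, f qr, f rp)`, `(g pq, g qr, g rp)`; it vanishes
for all `p`, `q`, `r` exactly when pure braids with linking numbers `f` and `g` commute up to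
triple commutators. -/
def bracket (f g : ℕ → ℕ → ℤ) (p q r : ℕ) : ℤ :=
  (f q r * g r p - f r p * g q r) - (f p q * g r p - f r p * g p q) +
    (f p q * g q r - f q r * g p q)

instance : Mul LinkData where
  mul x y :=
    { lk := fun a b => x.lk a b + y.lk (x.perm.symm a) (x.perm.symm b)
      lk_comm := fun a b => by rw [x.lk_comm, y.lk_comm]
      lk_self := fun a => by rw [x.lk_self, y.lk_self, add_zero]
      tri := fun p q r => x.tri p q r + y.tri (x.perm.symm p) (x.perm.symm q) (x.perm.symm r) +
        3 * bracket x.lk (fun a b => y.lk (x.perm.symm a) (x.perm.symm b)) p q r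
      perm := x.perm * y.perm }

instance : One LinkData where
  one := ⟨fun _ _ => 0, fun _ _ => rfl, fun _ => rfl, fun _ _ _ => 0, 1⟩

instance : Inv LinkData where
  inv x :=
    { lk := fun a b => -x.lk (x.perm a) (x.perm b)
      lk_comm := fun a b => by rw [x.lk_comm]
      lk_self := fun a => by rw [x.lk_self, neg_zero]
      tri := fun p q r => -x.tri (x.perm p) (x.perm q) (x.perm r)
      perm := x.perm⁻¹ }

@[simp] theorem mul_lk (x y : LinkData) (a b : ℕ) :
    (x * y).lk a b = x.lk a b + y.lk (x.perm.symm a) (x.perm.symm b) := rfl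

@[simp] theorem mul_tri (x y : LinkData) (p q r : ℕ) :
    (x * y).tri p q r = x.tri p q r + y.tri (x.perm.symm p) (x.perm.symm q) (x.perm.symm r) +
      3 * bracket x.lk (fun a b => y.lk (x.perm.symm a) (x.perm.symm b)) p q r := rfl

@[simp] theorem mul_perm (x y : LinkData) : (x * y).perm = x.perm * y.perm := rfl

@[simp] theorem one_lk (a b : ℕ) : (1 : LinkData).lk a b = 0 := rfl

@[simp] theorem one_tri (p q r : ℕ) : (1 : LinkData).tri p q r = 0 := rfl

@[simp] theorem one_perm : (1 : LinkData).perm = 1 := rfl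

@[simp] theorem inv_lk (x : LinkData) (a b : ℕ) : x⁻¹.lk a b = -x.lk (x.perm a) (x.perm b) := rfl

@[simp] theorem inv_tri (x : LinkData) (p q r : ℕ) :
    x⁻¹.tri p q r = -x.tri (x.perm p) (x.perm q) (x.perm r) := rfl

@[simp] theorem inv_perm (x : LinkData) : x⁻¹.perm = x.perm⁻¹ := rfl

theorem one_symm_apply (a : ℕ) : (1 : Equiv.Perm ℕ).symm a = a := rfl

theorem mul_symm_apply (σ τ : Equiv.Perm ℕ) (a : ℕ) : (σ * τ).symm a = τ.symm (σ.symm a) := rfl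

instance : Group LinkData where
  mul_assoc x y z := by
    ext a b
    · simp only [mul_lk, mul_perm, mul_symm_apply, add_assoc]
    · simp only [mul_tri, mul_lk, mul_perm, mul_symm_apply, bracket]
      ring
    · rfl
  one_mul x := by
    ext a b
    · simp [one_symm_apply]
    · simp [bracket, one_symm_apply]
    · simp
  mul_one x := by
    ext a b
    · simp
    · simp [bracket]
    · simp
  inv_mul_cancel x := by
    ext a b
    · simp [Equiv.Perm.inv_def]
    · simp only [mul_tri, inv_tri, inv_lk, inv_perm, bracket, Equiv.Perm.inv_def, Equiv.symm_symm,
        one_tri]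
      ring
    · simp

/-- The indicator function of the point `i`. -/
def ind {X : Type*} [DecidableEq X] (i a : X) : ℤ := if a = i then 1 else 0

/-- The position of a point relative to the interval `[i, j]`: `1` to the right of it, `-1` to the
left of it, and `0` inside. -/
def side (i j a : ℕ) : ℤ := if j < a then 1 else if a < i then -1 else 0

/-- The linking data of the standard braid generator exchanging the strands `i` and `i + 1`. -/
def gen (i : ℕ) : LinkData where
  lk a b := ind i a * ind (i + 1) b + ind (i + 1) a * ind i b
  lk_comm a b := by ring
  lk_self a := by simp only [ind]; grind
  tri p q r := (ind i p * ind (i + 1) q - ind (i + 1) p * ind i q) * side i (i + 1) r +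
    (ind i q * ind (i + 1) r - ind (i + 1) q * ind i r) * side i (i + 1) p +
    (ind i r * ind (i + 1) p - ind (i + 1) r * ind i p) * side i (i + 1) q
  perm := Equiv.swap i (i + 1)

theorem gen_lk (i a b : ℕ) :
    (gen i).lk a b = ind i a * ind (i + 1) b + ind (i + 1) a * ind i b := rfl

theorem gen_perm (i : ℕ) : (gen i).perm = Equiv.swap i (i + 1) := rfl

theorem gen_perm_symm (i : ℕ) : (gen i).perm.symm = Equiv.swap i (i + 1) := Equiv.symm_swap _ _

theorem ind_swap (i j k a : ℕ) : ind i (Equiv.swap j k a) = ind (Equiv.swap j k i) a := by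
  simp only [ind, Equiv.swap_apply_eq_iff]

theorem swap_succ_apply_of_ne {i j : ℕ} (h1 : j ≠ i) (h2 : j ≠ i + 1) :
    Equiv.swap i (i + 1) j = j :=
  Equiv.swap_apply_of_ne_of_ne h1 h2

theorem side_succ_right (i a : ℕ) : side i (i + 1) a = side i (i + 2) a + ind (i + 2) a := by
  unfold side ind; grind

theorem side_succ_left (i a : ℕ) : side (i + 1) (i + 2) a = side i (i + 2) a - ind i a := by
  unfold side ind; grind

theorem side_swap {i j k : ℕ} (hi : i ≠ k + 1) (hj : j ≠ k) (a : ℕ) :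
    side i j (Equiv.swap k (k + 1) a) = side i j a := by
  rw [Equiv.swap_apply_def]; unfold side; grind

/-- The functions of `a` entering the braid relation only depend on which of the five classes
`i`, `i + 1`, `i + 2`, `i + 2 < a`, `a < i` contains `a`. -/
theorem exists_class (i a : ℕ) : ∃ k : Fin 5, ind i a = ind 0 k ∧ ind (i + 1) a = ind 1 k ∧
    ind (i + 2) a = ind 2 k ∧ side i (i + 2) a = ind 3 k - ind 4 k := by
  unfold ind side
  by_cases h : a < i
  · exact ⟨4, by grind⟩
  by_cases h' : i + 2 < a
  · exact ⟨3, by grind⟩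
  obtain rfl | rfl | rfl : a = i ∨ a = i + 1 ∨ a = i + 2 := by omega
  · exact ⟨0, by grind⟩
  · exact ⟨1, by grind⟩
  · exact ⟨2, by grind⟩

theorem gen_braid (i : ℕ) : gen i * gen (i + 1) * gen i = gen (i + 1) * gen i * gen (i + 1) := by
  have e₁ : Equiv.swap i (i + 1) i = i + 1 := Equiv.swap_apply_left _ _
  have e₂ : Equiv.swap i (i + 1) (i + 1) = i := Equiv.swap_apply_right _ _
  have e₃ : Equiv.swap i (i + 1) (i + 2) = i + 2 := swap_succ_apply_of_ne (by omega) (by omega)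
  have e₄ : Equiv.swap (i + 1) (i + 2) i = i := swap_succ_apply_of_ne (by omega) (by omega)
  have e₅ : Equiv.swap (i + 1) (i + 2) (i + 1) = i + 2 := Equiv.swap_apply_left _ _
  have e₆ : Equiv.swap (i + 1) (i + 2) (i + 2) = i + 1 := Equiv.swap_apply_right _ _
  have s₁ := side_swap (i := i) (j := i + 2) (k := i) (by omega) (by omega)
  have s₂ := side_swap (i := i) (j := i + 2) (k := i + 1) (by omega) (by omega)
  ext a b c
  · simp only [mul_lk, mul_perm, mul_symm_apply, gen, Equiv.symm_swap, ind_swap, e₁, e₂, e₃, e₄,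
      e₅, e₆, add_assoc, Nat.reduceAdd]
    ring
  · simp only [mul_tri, mul_lk, mul_perm, mul_symm_apply, gen, bracket, Equiv.symm_swap,
      add_assoc i, Nat.reduceAdd, side_succ_right i, side_succ_left i, ind_swap, s₁, s₂, e₁, e₂,
      e₃, e₄, e₅, e₆]
    obtain ⟨p, hp0, hp1, hp2, hp3⟩ := exists_class i a
    obtain ⟨q, hq0, hq1, hq2, hq3⟩ := exists_class i b
    obtain ⟨r, hr0, hr1, hr2, hr3⟩ := exists_class i c
    simp only [hp0, hp1, hp2, hp3, hq0, hq1, hq2, hq3, hr0, hr1, hr2, hr3]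
    clear hp0 hp1 hp2 hp3 hq0 hq1 hq2 hq3 hr0 hr1 hr2 hr3
    revert p q r
    decide +kernel
  · simp only [mul_perm, gen_perm, Equiv.Perm.mul_apply, Equiv.swap_apply_def]
    grind

variable {i j : ℕ}

theorem ind_swap_of_ne (h : i ≠ j) (h' : i ≠ j + 1) (a : ℕ) :
    ind i (Equiv.swap j (j + 1) a) = ind i a := by
  rw [ind_swap, swap_succ_apply_of_ne h h']

theorem gen_lk_swap (h : i + 2 ≤ j ∨ j + 2 ≤ i) (a b : ℕ) :
    (gen i).lk (Equiv.swap j (j + 1) a) (Equiv.swap j (j + 1) b) = (gen i).lk a b := by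
  simp only [gen, ind_swap_of_ne (show i ≠ j by omega) (by omega),
    ind_swap_of_ne (show i + 1 ≠ j by omega) (by omega)]

theorem gen_tri_swap (h : i + 2 ≤ j ∨ j + 2 ≤ i) (a b c : ℕ) :
    (gen i).tri (Equiv.swap j (j + 1) a) (Equiv.swap j (j + 1) b) (Equiv.swap j (j + 1) c) =
      (gen i).tri a b c := by
  simp only [gen, ind_swap_of_ne (show i ≠ j by omega) (by omega),
    ind_swap_of_ne (show i + 1 ≠ j by omega) (by omega),
    side_swap (show i ≠ j + 1 by omega) (show i + 1 ≠ j by omega)]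

theorem bracket_gen_gen (h : i + 2 ≤ j ∨ j + 2 ≤ i) (p q r : ℕ) :
    bracket (gen i).lk (gen j).lk p q r = 0 := by
  have hmul : ∀ a b c, (gen i).lk a b * (gen j).lk b c = 0 := fun a b c => by
    simp only [gen, ind]; grind
  have hmul' : ∀ a b c, (gen i).lk a b * (gen j).lk c a = 0 := fun a b c => by
    rw [(gen i).lk_comm, (gen j).lk_comm, hmul]
  simp only [bracket, hmul, hmul', sub_zero, add_zero]

theorem gen_comm (h : i + 2 ≤ j) : Commute (gen i) (gen j) := by
  rw [commute_iff_eq]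
  ext a b c
  · rw [mul_lk, mul_lk, gen_perm_symm, gen_perm_symm, gen_lk_swap (Or.inl h),
      gen_lk_swap (Or.inr h), add_comm]
  · simp only [mul_tri, gen_perm_symm, gen_lk_swap (Or.inl h), gen_lk_swap (Or.inr h),
      gen_tri_swap (Or.inl h), gen_tri_swap (Or.inr h), bracket_gen_gen (Or.inl h),
      bracket_gen_gen (Or.inr h)]
    ring
  · simp only [mul_perm, gen_perm, Equiv.Perm.mul_apply, Equiv.swap_apply_def]
    grind

end LinkData

/-! ### Linking numbers, permutations and exponent sums in `A[Bₙ]` -/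

namespace IsArtinBSeq

variable {G H : Type*} [Group G] [Group H] {n : ℕ} {c : ℕ → G}

theorem map (h : IsArtinBSeq n c) (f : G →* H) : IsArtinBSeq n fun i => f (c i) where
  braid i hi := by simpa only [map_mul] using congrArg f (h.braid i hi)
  comm i j hij hj := (h.comm i j hij hj).map f
  braid_four i hi := by simpa only [map_mul] using congrArg f (h.braid_four i hi)

theorem of_map_injective {f : G →* H} (hf : Function.Injective f)
    (h : IsArtinBSeq n fun i => f (c i)) : IsArtinBSeq n c where
  braid i hi := hf (by simpa only [map_mul] using h.braid i hi)
  comm i j hij hj := hf (by simpa only [map_mul] using (h.comm i j hij hj).eq)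
  braid_four i hi := hf (by simpa only [map_mul] using h.braid_four i hi)

theorem of_commGroup {G : Type*} [CommGroup G] (n : ℕ) (u v : G) :
    IsArtinBSeq n fun i => if i + 1 < n then u else v where
  braid i hi := by simp only [show i + 1 < n by omega, show i + 1 + 1 < n by omega]
  comm _ _ _ _ := Commute.all _ _
  braid_four _ _ := by rw [mul_assoc, mul_comm (ite _ u v), ← mul_assoc]

end IsArtinBSeq

/-- This is the embedding of `A[Bₙ]` into the braid group on `n + 1` strands, as the subgroup of
braids whose last strand is pure. -/
theorem IsBraidSeq.isArtinBSeq_sq_last {G : Type*} [Group G] {n : ℕ} {c : ℕ → G}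
    (h : IsBraidSeq n c) : IsArtinBSeq n fun i => if i + 1 < n then c i else c i ^ 2 where
  braid i hi := by
    simpa only [show i + 1 < n by omega, show i + 1 + 1 < n by omega, if_true] using
      h.braid i (by omega)
  comm i j hij hj := by
    rw [if_pos (by omega)]
    split_ifs
    exacts [h.comm i j hij hj, (h.comm i j hij hj).pow_right 2]
  braid_four i hi := by
    rw [if_pos (by omega), if_neg (by omega)]
    have hbraid := h.braid i (by omega)
    generalize c i = a at hbraid ⊢
    generalize c (i + 1) = b at hbraid ⊢
    calc a * b ^ 2 * a * b ^ 2 = a * b * (b * a * b) * b := by simp only [pow_two, mul_assoc]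
      _ = a * b * (a * b * a) * b := by rw [hbraid]
      _ = a * b * a * (b * a * b) := by simp only [mul_assoc]
      _ = b * a * b * (a * b * a) := by rw [hbraid]
      _ = b * (a * b * a) * b * a := by simp only [mul_assoc]
      _ = b ^ 2 * a * b ^ 2 * a := by rw [hbraid]; simp only [pow_two, mul_assoc]

namespace LinkData

theorem isBraidSeq_gen (n : ℕ) : IsBraidSeq n gen where
  braid i _ := gen_braid i
  comm _ _ hij _ := gen_comm hij

/-- The underlying permutation, as a homomorphism. -/
def permHom : LinkData →* Equiv.Perm ℕ where
  toFun := perm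
  map_one' := one_perm
  map_mul' := mul_perm

theorem gen_sq_perm (i : ℕ) : (gen i ^ 2).perm = 1 := by
  rw [pow_two, mul_perm, gen_perm, Equiv.swap_mul_self]

theorem gen_sq_lk (i a b : ℕ) : (gen i ^ 2).lk a b = 2 * (gen i).lk a b := by
  rw [pow_two, mul_lk, gen_perm_symm, gen_lk, gen_lk, ind_swap, ind_swap, ind_swap, ind_swap,
    Equiv.swap_apply_left, Equiv.swap_apply_right]
  ring

theorem sum_ind {n i : ℕ} (hi : i < n) : ∑ a : Fin n, ind i (a : ℕ) = 1 := by
  rw [Finset.sum_eq_single ⟨i, hi⟩] <;> simp [ind, Fin.ext_iff]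

theorem ind_eq_zero {i a : ℕ} (h : a ≠ i) : ind i a = 0 := if_neg h

theorem ind_self (i : ℕ) : ind i i = 1 := if_pos rfl

end LinkData

theorem viaEmbeddingHom_swap {X Y : Type*} [DecidableEq X] [DecidableEq Y] (f : X ↪ Y) (a b : X) :
    Equiv.Perm.viaEmbeddingHom f (Equiv.swap a b) = Equiv.swap (f a) (f b) := by
  ext y
  rw [Equiv.Perm.viaEmbeddingHom_apply]
  by_cases hy : y ∈ Set.range f
  · obtain ⟨x, rfl⟩ := hy
    rw [Equiv.Perm.viaEmbedding_apply, f.injective.swap_apply]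
  · rw [Equiv.Perm.viaEmbedding_apply_of_notMem _ _ _ hy, Equiv.swap_apply_of_ne_of_ne] <;>
      rintro rfl <;> exact hy ⟨_, rfl⟩

namespace ArtinB

variable {n : ℕ}

/-- The linking data of an element of `A[Bₙ]`, viewed as a braid on the `n` free strands
`0, …, n - 1` and the pure strand `n`. -/
def link : ArtinB n →* LinkData := lift (LinkData.isBraidSeq_gen n).isArtinBSeq_sq_last

theorem link_rB {i : ℕ} (hi : i < n) : link (rB n (i + 1)) =
    if i + 1 < n then LinkData.gen i else LinkData.gen i ^ 2 :=
  lift_rB _ hi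

/-- The transposition of the free strands `i` and `i + 1`, or `1` if there are no such strands. -/
def freeSwap (n i : ℕ) : Equiv.Perm (Fin n) :=
  if h : i + 1 < n then Equiv.swap ⟨i, by omega⟩ ⟨i + 1, h⟩ else 1

theorem viaEmbeddingHom_freeSwap (n i : ℕ) :
    Equiv.Perm.viaEmbeddingHom Fin.valEmbedding (freeSwap n i) =
      LinkData.permHom (if i + 1 < n then LinkData.gen i else LinkData.gen i ^ 2) := by
  unfold freeSwap
  split_ifs
  · exact viaEmbeddingHom_swap _ _ _
  · exact (map_one _).trans (LinkData.gen_sq_perm i).symm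

theorem isArtinBSeq_freeSwap (n : ℕ) : IsArtinBSeq n (freeSwap n) :=
  .of_map_injective (Equiv.Perm.viaEmbeddingHom_injective Fin.valEmbedding) <| by
    simpa only [viaEmbeddingHom_freeSwap] using
      (LinkData.isBraidSeq_gen n).isArtinBSeq_sq_last.map LinkData.permHom

/-- The permutation of the `n` free strands. -/
def perm : ArtinB n →* Equiv.Perm (Fin n) := lift (isArtinBSeq_freeSwap n)

theorem perm_rB {i : ℕ} (hi : i < n) : perm (rB n (i + 1)) = freeSwap n i := lift_rB _ hi

theorem freeSwap_of_lt {i : ℕ} (hi : i + 1 < n) :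
    freeSwap n i = Equiv.swap ⟨i, by omega⟩ ⟨i + 1, hi⟩ :=
  dif_pos hi

/-- The exponent sum, with weight `u` on `r_1, …, r_{n-1}` and `v` on `r_n`. -/
def weight (u v : ℤ) : ArtinB n →* Multiplicative ℤ :=
  lift (.of_commGroup n (Multiplicative.ofAdd u) (Multiplicative.ofAdd v))

theorem weight_rB (u v : ℤ) {i : ℕ} (hi : i < n) : weight u v (rB n (i + 1)) =
    if i + 1 < n then Multiplicative.ofAdd u else Multiplicative.ofAdd v :=
  lift_rB _ hi

theorem perm_surjective : Function.Surjective (perm (n := n)) := by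
  rcases n with - | m
  · exact Function.surjective_to_subsingleton _
  have h : Submonoid.closure (Set.range fun i : Fin m => Equiv.swap i.castSucc i.succ) ≤
      (perm (n := m + 1)).range.toSubmonoid := by
    rw [Submonoid.closure_le]
    rintro _ ⟨i, rfl⟩
    exact ⟨rB _ (i + 1), (perm_rB (by omega)).trans (freeSwap_of_lt (by omega))⟩
  rw [Equiv.Perm.mclosure_swap_castSucc_succ] at h
  exact fun σ => h (Submonoid.mem_top σ)

theorem link_perm (g : ArtinB n) :
    (link g).perm = Equiv.Perm.viaEmbeddingHom Fin.valEmbedding (perm g) := by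
  have h : LinkData.permHom.comp link =
      (Equiv.Perm.viaEmbeddingHom Fin.valEmbedding).comp (perm (n := n)) :=
    hom_ext_s12 fun i hi => by
      rw [MonoidHom.comp_apply, MonoidHom.comp_apply, link_rB hi, perm_rB hi,
        viaEmbeddingHom_freeSwap]
  exact DFunLike.congr_fun h g

theorem link_perm_apply (g : ArtinB n) (a : Fin n) : (link g).perm a = (perm g a : Fin n) := by
  rw [link_perm]
  exact Equiv.Perm.viaEmbedding_apply _ Fin.valEmbedding a

theorem link_perm_symm_apply (g : ArtinB n) (a : Fin n) :
    (link g).perm.symm a = ((perm g).symm a : Fin n) := by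
  rw [Equiv.symm_apply_eq, link_perm_apply, Equiv.apply_symm_apply]

theorem link_perm_symm_last (g : ArtinB n) : (link g).perm.symm n = n := by
  rw [Equiv.symm_apply_eq, link_perm]
  refine (Equiv.Perm.viaEmbedding_apply_of_notMem _ Fin.valEmbedding _ ?_).symm
  rintro ⟨b, hb⟩
  exact b.2.ne hb

theorem link_perm_eq_one {g : ArtinB n} (hg : perm g = 1) : (link g).perm = 1 := by
  rw [link_perm, hg, map_one]

theorem exists_link_perm_symm_eq_swap {a b : ℕ} (ha : a < n) (hb : b < n) :
    ∃ g : ArtinB n, (link g).perm.symm = Equiv.swap a b := by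
  obtain ⟨g, hg⟩ := perm_surjective (Equiv.swap (⟨a, ha⟩ : Fin n) ⟨b, hb⟩)
  refine ⟨g, ?_⟩
  rw [link_perm, hg, viaEmbeddingHom_swap]
  exact Equiv.symm_swap _ _

theorem link_rB_lk_last {i : ℕ} (hi : i < n) (a : Fin n) :
    (link (rB n (i + 1))).lk a n = if i + 1 < n then 0 else 2 * LinkData.ind i (a : ℕ) := by
  rw [link_rB hi]
  split_ifs with h
  · simp [LinkData.gen_lk, LinkData.ind_eq_zero hi.ne', LinkData.ind_eq_zero h.ne']
  · obtain rfl : n = i + 1 := by omega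
    simp [LinkData.gen_sq_lk, LinkData.gen_lk, LinkData.ind_eq_zero a.2.ne, LinkData.ind_self]

theorem link_mul_lk_last (x y : ArtinB n) (a : Fin n) :
    (link (x * y)).lk a n = (link x).lk a n + (link y).lk ((perm x).symm a : Fin n) n := by
  rw [map_mul, LinkData.mul_lk, link_perm_symm_apply, link_perm_symm_last]

theorem sum_link_lk_last (g : ArtinB n) :
    ∑ a : Fin n, (link g).lk a n = 2 * (weight 0 1 g).toAdd := by
  let f : ArtinB n →* Multiplicative ℤ :=
    .mk' (fun g => .ofAdd (∑ a : Fin n, (link g).lk a n)) fun x y => by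
      rw [← ofAdd_add, ← Equiv.sum_comp (perm x).symm fun a : Fin n => (link y).lk a n,
        ← Finset.sum_add_distrib]
      simp only [link_mul_lk_last]
  have h : f = weight 0 1 ^ 2 := hom_ext_s12 fun i hi => by
    change Multiplicative.ofAdd (∑ a : Fin n, (link (rB n (i + 1))).lk a n) = _
    rw [MonoidHom.pow_apply, weight_rB _ _ hi]
    simp only [link_rB_lk_last hi]
    split_ifs
    · simp
    · rw [← Finset.mul_sum, LinkData.sum_ind hi]
      rfl
  have := congrArg Multiplicative.toAdd (DFunLike.congr_fun h g)
  rwa [MonoidHom.pow_apply, toAdd_pow, nsmul_eq_mul] at this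

theorem sum_link_lk (g : ArtinB n) :
    ∑ a : Fin n, ∑ b : Fin n, (link g).lk a b = 2 * (weight 1 0 g).toAdd := by
  let f : ArtinB n →* Multiplicative ℤ :=
    .mk' (fun g => .ofAdd (∑ a : Fin n, ∑ b : Fin n, (link g).lk a b)) fun x y => by
      rw [← ofAdd_add,
        ← Equiv.sum_comp (perm x).symm fun a : Fin n => ∑ b : Fin n, (link y).lk a b,
        ← Finset.sum_add_distrib]
      refine congrArg _ (Finset.sum_congr rfl fun a _ => ?_)
      rw [← Equiv.sum_comp (perm x).symm fun b : Fin n => (link y).lk ((perm x).symm a : Fin n) b,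
        ← Finset.sum_add_distrib]
      simp only [map_mul, LinkData.mul_lk, link_perm_symm_apply]
  have h : f = weight 1 0 ^ 2 := hom_ext_s12 fun i hi => by
    change Multiplicative.ofAdd (∑ a : Fin n, ∑ b : Fin n, (link (rB n (i + 1))).lk a b) = _
    rw [MonoidHom.pow_apply, weight_rB _ _ hi, link_rB hi]
    split_ifs with h
    · simp only [LinkData.gen_lk, Finset.sum_add_distrib, ← Finset.mul_sum, ← Finset.sum_mul,
        LinkData.sum_ind hi, LinkData.sum_ind h]
      rfl
    · have h0 (a : Fin n) : LinkData.ind (i + 1) (a : ℕ) = 0 := LinkData.ind_eq_zero (by omega)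
      simp [LinkData.gen_sq_lk, LinkData.gen_lk, h0]
  have := congrArg Multiplicative.toAdd (DFunLike.congr_fun h g)
  rwa [MonoidHom.pow_apply, toAdd_pow, nsmul_eq_mul] at this

theorem even_link_lk_last (g : ArtinB n) (a : Fin n) : Even ((link g).lk a n) := by
  induction g using ArtinB.rB_induction generalizing a with
  | one => simp
  | mul x y hx hy => exact link_mul_lk_last x y a ▸ (hx a).add (hy _)
  | inv x hx =>
    have h := link_mul_lk_last x x⁻¹ (perm x a)
    rw [mul_inv_cancel, map_one, LinkData.one_lk, Equiv.symm_apply_apply] at h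
    exact (Int.even_add.1 (h ▸ Even.zero)).1 (hx _)
  | rB i hi =>
    rw [link_rB_lk_last hi]
    split_ifs
    exacts [Even.zero, even_two_mul _]

theorem toAdd_weight (u v : ℤ) (g : ArtinB n) : (weight u v g).toAdd =
    u * (weight 1 0 g).toAdd + v * (weight 0 1 g).toAdd := by
  have h : weight (n := n) u v = weight 1 0 ^ u * weight 0 1 ^ v := hom_ext_s12 fun i hi => by
    simp only [MonoidHom.mul_apply, MonoidHom.zpow_apply, weight_rB _ _ hi]
    split_ifs <;> simp [← ofAdd_zsmul]
  simp [h]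

theorem sign_perm (g : ArtinB n) :
    Equiv.Perm.sign (perm g) = (-1) ^ (weight 1 0 g).toAdd := by
  have h : Equiv.Perm.sign.comp (perm (n := n)) = (zpowersHom _ (-1)).comp (weight 1 0) :=
    hom_ext_s12 fun i hi => by
      rw [MonoidHom.comp_apply, MonoidHom.comp_apply, perm_rB hi, weight_rB _ _ hi, freeSwap]
      split_ifs
      · rw [Equiv.Perm.sign_swap (by simp)]
        simp
      · simp
  exact DFunLike.congr_fun h g

theorem weight_ρB (u v : ℤ) (hn : 0 < n) : (weight u v (ρB n)).toAdd = (n - 1) * u + v := by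
  obtain ⟨m, rfl⟩ : ∃ m, n = m + 1 := ⟨n - 1, by omega⟩
  have hrest : ∀ x ∈ (List.range m).map fun i => weight u v (rB (m + 1) (i + 1)),
      x = Multiplicative.ofAdd u := by
    intro x hx
    obtain ⟨i, hi, rfl⟩ := List.mem_map.1 hx
    rw [weight_rB _ _ (by have := List.mem_range.1 hi; omega),
      if_pos (by have := List.mem_range.1 hi; omega)]
  rw [ρB, map_list_prod, List.map_map, List.prod_range_succ]
  change ((List.map (fun i => weight u v (rB (m + 1) (i + 1))) _).prod * _).toAdd = _
  rw [List.prod_eq_pow_card _ _ hrest, Function.comp_apply, weight_rB _ _ (by omega),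
    if_neg (by omega)]
  simp

theorem weight_tB (u v : ℤ) (hn : 2 ≤ n) (i : ℕ) :
    weight u v (tB n i) = Multiplicative.ofAdd u := by
  rw [← isConj_iff_eq.1 ((weight u v).map_isConj (isConj_tB hn i)),
    tB_eq_rB one_pos (by omega), ← zero_add 1, weight_rB _ _ (by omega), if_pos (by omega)]

end ArtinB

theorem center_perm_eq_bot {X : Type*} [Fintype X] (hX : 2 < Fintype.card X) :
    Subgroup.center (Equiv.Perm X) = ⊥ := by
  classical
  refine (Subgroup.eq_bot_iff_forall _).2 fun σ hσ => Equiv.ext fun a => ?_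
  by_contra ha
  rw [Equiv.Perm.one_apply] at ha
  obtain ⟨b, -, hb⟩ : ∃ b ∈ Finset.univ, b ∉ ({a, σ a} : Finset X) :=
    Finset.exists_mem_notMem_of_card_lt_card (Finset.card_le_two.trans_lt hX)
  simp only [Finset.mem_insert, Finset.mem_singleton, not_or] at hb
  have h := DFunLike.congr_fun (Subgroup.mem_center_iff.1 hσ (Equiv.swap (σ a) b)) a
  rw [Equiv.Perm.mul_apply, Equiv.Perm.mul_apply, Equiv.swap_apply_left,
    Equiv.swap_apply_of_ne_of_ne (Ne.symm ha) (Ne.symm hb.1)] at h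
  exact hb.2 h

namespace ArtinB

variable {n : ℕ} {z : ArtinB n}

/-! ### Linking data of central elements -/

theorem perm_eq_one_of_mem_center (hn : 3 ≤ n) (hz : z ∈ Subgroup.center (ArtinB n)) :
    perm z = 1 := by
  have h : perm z ∈ Subgroup.center (Equiv.Perm (Fin n)) := by
    refine Subgroup.mem_center_iff.2 fun σ => ?_
    obtain ⟨g, rfl⟩ := perm_surjective σ
    rw [← map_mul, ← map_mul, Subgroup.mem_center_iff.1 hz g]
  rwa [center_perm_eq_bot (by rwa [Fintype.card_fin]), Subgroup.mem_bot] at h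

theorem link_perm_eq_one_of_mem_center (hn : 3 ≤ n) (hz : z ∈ Subgroup.center (ArtinB n)) :
    (link z).perm = 1 :=
  link_perm_eq_one (perm_eq_one_of_mem_center hn hz)

theorem link_mul_comm_of_mem_center (hz : z ∈ Subgroup.center (ArtinB n)) (g : ArtinB n) :
    link g * link z = link z * link g := by
  rw [← map_mul, ← map_mul, Subgroup.mem_center_iff.1 hz g]

theorem link_lk_swap_of_mem_center (hn : 3 ≤ n) (hz : z ∈ Subgroup.center (ArtinB n))
    {c d : ℕ} (hc : c < n) (hd : d < n) (a b : ℕ) :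
    (link z).lk (Equiv.swap c d a) (Equiv.swap c d b) = (link z).lk a b := by
  obtain ⟨g, hg⟩ := exists_link_perm_symm_eq_swap hc hd
  have h := congrArg (fun x => LinkData.lk x a b) (link_mul_comm_of_mem_center hz g)
  simp only [LinkData.mul_lk, link_perm_eq_one_of_mem_center hn hz, LinkData.one_symm_apply, hg]
    at h
  linarith

/-- Two pure braids commute only if their brackets vanish; the braid commuting with `z` is `r_n`,
which only links the strands `n - 1` and `n`. -/
theorem link_lk_last_eq_of_mem_center (hn : 3 ≤ n) (hz : z ∈ Subgroup.center (ArtinB n))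
    {j : ℕ} (hj : j < n - 1) : (link z).lk n j = (link z).lk j (n - 1) := by
  obtain ⟨m, rfl⟩ : ∃ m, n = m + 1 := ⟨n - 1, by omega⟩
  rw [Nat.add_sub_cancel] at hj ⊢
  have h := congrArg (fun x => LinkData.tri x j m (m + 1))
    (link_mul_comm_of_mem_center hz (rB (m + 1) (m + 1)))
  simp only [link_rB m.lt_succ_self, lt_irrefl, if_false, LinkData.mul_tri,
    link_perm_eq_one_of_mem_center hn hz, LinkData.gen_sq_perm, LinkData.one_symm_apply,
    LinkData.bracket, LinkData.gen_sq_lk, LinkData.gen_lk, LinkData.ind_self,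
    LinkData.ind_eq_zero hj.ne, LinkData.ind_eq_zero (hj.trans m.lt_succ_self).ne,
    LinkData.ind_eq_zero m.lt_succ_self.ne, LinkData.ind_eq_zero m.lt_succ_self.ne'] at h
  linarith

theorem exists_link_lk_eq_of_mem_center (hn : 3 ≤ n) (hz : z ∈ Subgroup.center (ArtinB n)) :
    ∃ p : ℤ, ∀ a ≤ n, ∀ b ≤ n, a ≠ b → (link z).lk a b = p := by
  have hlast : ∀ a < n, (link z).lk a n = (link z).lk (n - 1) n := fun a ha => by
    have h := link_lk_swap_of_mem_center hn hz ha (d := n - 1) (by omega) a n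
    rwa [Equiv.swap_apply_left, Equiv.swap_apply_of_ne_of_ne (by omega) (by omega), eq_comm] at h
  have hlast' : ∀ a < n - 1, (link z).lk a (n - 1) = (link z).lk (n - 1) n := fun a ha => by
    rw [← link_lk_last_eq_of_mem_center hn hz ha, LinkData.lk_comm, hlast a (by omega)]
  refine ⟨(link z).lk (n - 1) n, fun a ha b hb hab => ?_⟩
  wlog hle : a < b generalizing a b
  · rw [LinkData.lk_comm, this b hb a ha hab.symm (by omega)]
  rcases hb.lt_or_eq with hb | rfl
  · have h := link_lk_swap_of_mem_center hn hz hb (d := n - 1) (by omega) a b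
    rw [Equiv.swap_apply_left, Equiv.swap_apply_of_ne_of_ne hab (by omega)] at h
    rw [← h, hlast' a (by omega)]
  · exact hlast a hle

theorem dvd_weight_of_mem_center (hn : 3 ≤ n) (hz : z ∈ Subgroup.center (ArtinB n)) :
    (n : ℤ) ∣ (weight 0 1 z).toAdd := by
  obtain ⟨p, hp⟩ := exists_link_lk_eq_of_mem_center hn hz
  obtain ⟨q, hq⟩ := even_link_lk_last z ⟨0, by omega⟩
  have h := sum_link_lk_last z
  rw [Finset.sum_congr rfl fun (a : Fin n) _ => hp a a.2.le n le_rfl a.2.ne, Finset.sum_const,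
    Finset.card_fin, nsmul_eq_mul, ← hp 0 (by omega) n le_rfl (by omega), hq] at h
  exact ⟨q, by linarith⟩

theorem weight_eq_one_of_mem_center (hn : 3 ≤ n) (hz : z ∈ Subgroup.center (ArtinB n)) :
    weight 1 (1 - n) z = 1 := by
  obtain ⟨p, hp⟩ := exists_link_lk_eq_of_mem_center hn hz
  have hrow (a : Fin n) : ∑ b : Fin n, (link z).lk a b = (n - 1) * p := by
    rw [← Finset.add_sum_erase _ _ (Finset.mem_univ a), LinkData.lk_self, zero_add,
      Finset.sum_congr rfl fun (b : Fin n) hb =>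
        hp a a.2.le b b.2.le (Fin.val_ne_of_ne (Finset.ne_of_mem_erase hb).symm)]
    simp [Finset.card_erase_of_mem, Nat.cast_sub (show 1 ≤ n by omega)]
  have hlast := sum_link_lk_last z
  rw [Finset.sum_congr rfl fun (a : Fin n) _ => hp a a.2.le n le_rfl a.2.ne] at hlast
  have hfree := sum_link_lk z
  rw [Finset.sum_congr rfl fun (a : Fin n) _ => hrow a] at hfree
  simp only [Finset.sum_const, Finset.card_fin, nsmul_eq_mul] at hlast hfree
  apply Multiplicative.toAdd.injective
  rw [toAdd_one, toAdd_weight]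
  refine (mul_eq_zero.1 ?_).resolve_left (two_ne_zero (α := ℤ))
  linear_combination (n - 1) * hlast - hfree

/-! ### Pure braids that commute modulo the centre -/

variable {u v : ArtinB n}

theorem link_conj_lk (hu : perm u = 1) (h : ArtinB n) (a b : ℕ) :
    (link (h * u * h⁻¹)).lk a b = (link u).lk ((link h).perm.symm a) ((link h).perm.symm b) := by
  simp only [map_mul, map_inv, LinkData.mul_lk, LinkData.inv_lk, LinkData.mul_perm,
    link_perm_eq_one hu, mul_one, Equiv.apply_symm_apply]
  ring

theorem link_mul_lk (hu : perm u = 1) (v : ArtinB n) (a b : ℕ) :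
    (link (u * v)).lk a b = (link u).lk a b + (link v).lk a b := by
  rw [map_mul, LinkData.mul_lk, link_perm_eq_one hu]
  rfl

theorem exists_mem_center_of_commute_πB (huv : Commute (πB n u) (πB n v)) :
    ∃ z ∈ Subgroup.center (ArtinB n), u * v = z * (v * u) := by
  refine ⟨u * v * (v * u)⁻¹, (QuotientGroup.eq_one_iff _).1 ?_, by group⟩
  change πB n (u * v * (v * u)⁻¹) = 1
  rw [map_mul, map_inv, map_mul, map_mul, huv.eq, mul_inv_cancel]

/-- The commutator of `h` and `u` has exponent sum zero, hence no linking with the last strand. -/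
theorem link_lk_perm_symm_of_commute (hn : 3 ≤ n) (hu : perm u = 1) {h : ArtinB n}
    (huh : Commute (πB n h) (πB n u)) {a b : ℕ} (ha : a ≤ n) (hb : b ≤ n) (hab : a ≠ b) :
    (link u).lk ((link h).perm.symm a) ((link h).perm.symm b) = (link u).lk a b := by
  obtain ⟨z, hz, hzu⟩ := exists_mem_center_of_commute_πB huh
  obtain ⟨p, hp⟩ := exists_link_lk_eq_of_mem_center hn hz
  have hweight : (weight 0 1 z).toAdd = 0 := by
    have := congrArg (fun x => (weight 0 1 x).toAdd) hzu
    simp only [map_mul, toAdd_mul] at this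
    linarith
  have hp0 : p = 0 := by
    have hsum := sum_link_lk_last z
    rw [Finset.sum_congr rfl fun (a : Fin n) _ => hp a a.2.le n le_rfl a.2.ne, hweight] at hsum
    simpa [show n ≠ 0 by omega] using hsum
  have hconj : h * u * h⁻¹ = z * u := by rw [hzu, ← mul_assoc, mul_inv_cancel_right]
  rw [← link_conj_lk hu, hconj, link_mul_lk (perm_eq_one_of_mem_center hn hz), hp a ha b hb hab,
    hp0, zero_add]

theorem link_lk_eq_zero_of_commutator (hn : 3 ≤ n) (hu : perm u = 1) (hv : perm v = 1)
    (hz : z ∈ Subgroup.center (ArtinB n)) (huv : u * v = z * (v * u)) (a b : ℕ) :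
    (link z).lk a b = 0 := by
  have h := congrArg (fun x => (link x).lk a b) huv
  simp only [link_mul_lk hu, link_mul_lk hv,
    link_mul_lk (perm_eq_one_of_mem_center hn hz)] at h
  linarith

theorem link_tri_of_commutator (hn : 3 ≤ n) (hu : perm u = 1) (hv : perm v = 1)
    (hz : z ∈ Subgroup.center (ArtinB n)) (huv : u * v = z * (v * u)) (a b c : ℕ) :
    (link z).tri a b c = 6 * LinkData.bracket (link u).lk (link v).lk a b c := by
  have h := congrArg (fun x => (link x).tri a b c) huv
  simp only [map_mul, LinkData.mul_tri, LinkData.mul_lk, link_perm_eq_one hu, link_perm_eq_one hv,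
    link_perm_eq_one_of_mem_center hn hz, LinkData.one_symm_apply, LinkData.bracket,
    link_lk_eq_zero_of_commutator hn hu hv hz huv] at h
  simp only [LinkData.bracket]
  linarith

/-- The bracket is antisymmetric in `p` and `q`, whereas the triple invariants of a central element
without linking are symmetric under permutations of the free strands. -/
theorem bracket_eq_zero (hn : 3 ≤ n) (hu : perm u = 1) (hv : perm v = 1)
    (huv : Commute (πB n u) (πB n v)) {p q r : ℕ} (hp : p < n) (hq : q < n)
    (hpr : p ≠ r) (hqr : q ≠ r) : LinkData.bracket (link u).lk (link v).lk p q r = 0 := by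
  obtain ⟨z, hz, hzuv⟩ := exists_mem_center_of_commute_πB huv
  obtain ⟨g, hg⟩ := exists_link_perm_symm_eq_swap hp hq
  have h := congrArg (fun x => LinkData.tri x p q r) (link_mul_comm_of_mem_center hz g)
  simp only [LinkData.mul_tri, link_perm_eq_one_of_mem_center hn hz, hg, LinkData.one_symm_apply,
    Equiv.swap_apply_left, Equiv.swap_apply_right,
    Equiv.swap_apply_of_ne_of_ne hpr.symm hqr.symm, LinkData.bracket,
    link_lk_eq_zero_of_commutator hn hu hv hz hzuv, link_tri_of_commutator hn hu hv hz hzuv] at h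
  rw [(link u).lk_comm q p, (link u).lk_comm p r, (link u).lk_comm r q, (link v).lk_comm q p,
    (link v).lk_comm p r, (link v).lk_comm r q] at h
  simp only [LinkData.bracket]
  linarith

/-! ### Lifts of braid sequences from `Ā` -/

theorem four_mul_weight_of_link_lk_last_eq {g : ArtinB n} {γ : ℤ}
    (h : ∀ a < n, (link (g ^ 2)).lk a n = γ) : 4 * (weight 0 1 g).toAdd = n * γ := by
  have hsum := sum_link_lk_last (g ^ 2)
  rw [Finset.sum_congr rfl fun (a : Fin n) _ => h a a.2, Finset.sum_const, Finset.card_fin,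
    nsmul_eq_mul, map_pow, toAdd_pow, nsmul_eq_mul] at hsum
  push_cast at hsum
  linarith

theorem link_sq_lk_last (g : ArtinB n) (a : Fin n) :
    (link (g ^ 2)).lk a n = (link g).lk a n + (link g).lk ((perm g).symm a : Fin n) n := by
  rw [pow_two, link_mul_lk_last]

section StandardPermutations

variable {l : ℕ → ArtinB n} (hn : 5 ≤ n) (hl : IsBraidSeq (n - 1) fun i => πB n (l i))
  (hperm : ∀ i, i + 1 < n → perm (l i) = freeSwap n i)

theorem link_perm_symm_of_perm_eq_freeSwap {g : ArtinB n} {i : ℕ} (hi : i + 1 < n)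
    (hg : perm g = freeSwap n i) : (link g).perm.symm = Equiv.swap i (i + 1) := by
  rw [link_perm, hg, viaEmbeddingHom_freeSwap, if_pos hi]
  exact LinkData.gen_perm_symm i

include hn hperm

theorem perm_head_sq : perm (l 0 ^ 2) = 1 := by
  rw [map_pow, hperm 0 (by omega), freeSwap_of_lt (by omega), pow_two, Equiv.swap_mul_self]

include hl

theorem link_sq_lk_swap {k a b : ℕ} (hk : k + 1 < n) (hk1 : k ≠ 1) (ha : a ≤ n) (hb : b ≤ n)
    (hab : a ≠ b) : (link (l 0 ^ 2)).lk (Equiv.swap k (k + 1) a) (Equiv.swap k (k + 1) b) =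
      (link (l 0 ^ 2)).lk a b := by
  have hcomm : Commute (πB n (l k)) (πB n (l 0)) := by
    rcases Nat.eq_zero_or_pos k with rfl | h0
    · exact Commute.refl _
    · exact (hl.comm 0 k (by omega) (by omega)).symm
  rw [← link_perm_symm_of_perm_eq_freeSwap hk (hperm k hk)]
  refine link_lk_perm_symm_of_commute (by omega) (perm_head_sq hn hperm) ?_ ha hb hab
  rw [map_pow]
  exact hcomm.pow_right 2

theorem link_sq_lk_last_of_two_le {i : ℕ} (hi : 2 ≤ i) (hin : i < n) :
    (link (l 0 ^ 2)).lk i n = (link (l 0 ^ 2)).lk 2 n := by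
  induction i, hi using Nat.le_induction with
  | base => rfl
  | succ k hk ih =>
    have h := link_sq_lk_swap hn hl hperm hin (by omega) (show k ≤ n by omega) le_rfl (by omega)
    rwa [Equiv.swap_apply_left, Equiv.swap_apply_of_ne_of_ne (by omega) (by omega),
      ih (by omega)] at h

theorem link_sq_lk_one_last : (link (l 0 ^ 2)).lk 1 n = (link (l 0 ^ 2)).lk 0 n := by
  have h := link_sq_lk_swap hn hl hperm (k := 0) (by omega) (by omega) n.zero_le le_rfl (by omega)
  rwa [Equiv.swap_apply_left, Equiv.swap_apply_of_ne_of_ne (by omega) (by omega)] at h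

theorem link_sq_lk_zero_four : (link (l 0 ^ 2)).lk 0 4 = (link (l 0 ^ 2)).lk 0 2 := by
  have h2 := link_sq_lk_swap hn hl hperm (k := 2) (a := 0) (b := 2) (by omega) (by omega)
    (by omega) (by omega) (by omega)
  have h3 := link_sq_lk_swap hn hl hperm (k := 3) (a := 0) (b := 3) (by omega) (by omega)
    (by omega) (by omega) (by omega)
  rw [Equiv.swap_apply_left, Equiv.swap_apply_of_ne_of_ne (by omega) (by omega)] at h2 h3
  exact h3.trans h2

/-- `l 1 * l 0 * l 2 * l 1` conjugates `l 0` to `l 2` modulo the centre, and exchanges the strands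
`0` and `2`. -/
theorem bracket_sq_eq_zero {p q r : ℕ} (hp : p < n) (hq : q < n) (hpr : p ≠ r) (hqr : q ≠ r) :
    let τ := fun a => Equiv.swap 1 2 (Equiv.swap 2 3 (Equiv.swap 0 1 (Equiv.swap 1 2 a)))
    LinkData.bracket (link (l 0 ^ 2)).lk (fun a b => (link (l 0 ^ 2)).lk (τ a) (τ b)) p q r =
      0 := by
  set s := l 1 * l 0 * l 2 * l 1
  have hconj : πB n (s * l 0 ^ 2 * s⁻¹) = πB n (l 2) ^ 2 := by
    rw [map_mul, map_inv, mul_inv_eq_iff_eq_mul, map_mul, map_pow]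
    simpa only [map_mul, s] using ((hl.semiconjBy_zero_two (by omega)).pow_right 2).eq
  have hcomm : Commute (πB n (l 0 ^ 2)) (πB n (s * l 0 ^ 2 * s⁻¹)) := by
    rw [hconj, map_pow]
    exact (hl.comm 0 2 le_rfl (by omega)).pow_pow 2 2
  have hu := perm_head_sq hn hperm
  have hv : perm (s * l 0 ^ 2 * s⁻¹) = 1 := by
    rw [map_mul, map_mul, hu, mul_one, map_inv, mul_inv_cancel]
  have hs (a : ℕ) : (link s).perm.symm a =
      Equiv.swap 1 2 (Equiv.swap 2 3 (Equiv.swap 0 1 (Equiv.swap 1 2 a))) := by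
    simp only [s, map_mul, LinkData.mul_perm, LinkData.mul_symm_apply,
      link_perm_symm_of_perm_eq_freeSwap (show 0 + 1 < n by omega) (hperm 0 (by omega)),
      link_perm_symm_of_perm_eq_freeSwap (show 1 + 1 < n by omega) (hperm 1 (by omega)),
      link_perm_symm_of_perm_eq_freeSwap (show 2 + 1 < n by omega) (hperm 2 (by omega))]
  have h := bracket_eq_zero (by omega) hu hv hcomm hp hq hpr hqr
  simpa only [LinkData.bracket, link_conj_lk hu, hs] using h

theorem link_sq_lk_zero_last : (link (l 0 ^ 2)).lk 0 n = (link (l 0 ^ 2)).lk 2 n := by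
  have h024 := bracket_sq_eq_zero hn hl hperm (p := 0) (q := 2) (r := 4) (by omega) (by omega)
    (by omega) (by omega)
  have h02n := bracket_sq_eq_zero hn hl hperm (p := 0) (q := 2) (r := n) (by omega) (by omega)
    (by omega) (by omega)
  have h04n := bracket_sq_eq_zero hn hl hperm (p := 0) (q := 4) (r := n) (by omega) (by omega)
    (by omega) (by omega)
  have hn4 : Equiv.swap 1 2 (Equiv.swap 2 3 (Equiv.swap 0 1 (Equiv.swap 1 2 n))) = n := by
    have hfix (i j : ℕ) (hi : i < 4) (hj : j < 4) : Equiv.swap i j n = n :=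
      Equiv.swap_apply_of_ne_of_ne (by omega) (by omega)
    rw [hfix 1 2, hfix 0 1, hfix 2 3, hfix 1 2] <;> norm_num
  simp only [LinkData.bracket, hn4,
    show Equiv.swap 1 2 (Equiv.swap 2 3 (Equiv.swap 0 1 (Equiv.swap 1 2 0))) = 2 by decide,
    show Equiv.swap 1 2 (Equiv.swap 2 3 (Equiv.swap 0 1 (Equiv.swap 1 2 2))) = 0 by decide,
    show Equiv.swap 1 2 (Equiv.swap 2 3 (Equiv.swap 0 1 (Equiv.swap 1 2 4))) = 4 by decide,
    LinkData.lk_comm _ 2 0, LinkData.lk_comm _ 4 0, LinkData.lk_comm _ 4 2, LinkData.lk_comm _ n,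
    link_sq_lk_zero_four hn hl hperm,
    link_sq_lk_last_of_two_le hn hl hperm (i := 4) (by omega) (by omega)] at h024 h02n h04n
  generalize (link (l 0 ^ 2)).lk 0 2 = δ, (link (l 0 ^ 2)).lk 2 4 = ε,
    (link (l 0 ^ 2)).lk 0 n = β, (link (l 0 ^ 2)).lk 2 n = γ at h024 h02n h04n ⊢
  obtain rfl : ε = δ :=
    sub_eq_zero.1 (pow_eq_zero_iff two_ne_zero |>.1 (by linear_combination h024))
  have hβγ : (γ - β) * (γ + β - 2 * ε) = 0 := by linear_combination h02n
  have hγε : (γ - β) * (γ - ε) = 0 := by linear_combination h04n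
  rcases mul_eq_zero.1 hβγ with h | h
  · linarith
  rcases mul_eq_zero.1 hγε with h' | h' <;> linarith

theorem link_sq_lk_last_eq {a : ℕ} (ha : a < n) :
    (link (l 0 ^ 2)).lk a n = (link (l 0 ^ 2)).lk 2 n := by
  have h0 := link_sq_lk_zero_last hn hl hperm
  rcases a with - | - | a
  · exact h0
  · exact (link_sq_lk_one_last hn hl hperm).trans h0
  · exact link_sq_lk_last_of_two_le hn hl hperm (by omega) ha

theorem dvd_weight_of_perm_eq_freeSwap : (n : ℤ) ∣ (weight 0 1 (l 0)).toAdd := by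
  have h4 := four_mul_weight_of_link_lk_last_eq fun a ha => link_sq_lk_last_eq hn hl hperm ha
  let two : Fin n := ⟨2, by omega⟩
  have hfix : (perm (l 0)).symm two = two := by
    rw [hperm 0 (by omega), freeSwap_of_lt (by omega), Equiv.symm_swap]
    exact Equiv.swap_apply_of_ne_of_ne (by simp [two]) (by simp [two])
  obtain ⟨w, hw⟩ := even_link_lk_last (l 0) two
  have h2 := link_sq_lk_last (l 0) two
  rw [hfix, hw] at h2
  rw [show (link (l 0 ^ 2)).lk 2 n = _ from h2] at h4
  exact ⟨w, by linarith⟩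

end StandardPermutations

section ExoticPermutations

variable {l : ℕ → ArtinB 6} (hl : IsBraidSeq 5 fun i => πB 6 (l i))
  (h : IsExotic (perm (l 0)) (perm (l 0 * (l 2 * l 3))))

include h

theorem odd_weight_of_isExotic : Odd (weight 1 0 (l 0)).toAdd := by
  have hsign : Equiv.Perm.sign (perm (l 0)) = -1 := by
    rw [← h.pow_three, map_pow, h.isCycle.sign, h.support_eq, Finset.card_fin]
    decide
  rw [sign_perm] at hsign
  rw [← Int.not_even_iff_odd]
  intro heven
  rw [heven.neg_one_zpow] at hsign
  exact absurd hsign (by decide)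

include hl

theorem link_sq_lk_last_eq_of_isExotic (a b : Fin 6) :
    (link (l 0 ^ 2)).lk a 6 = (link (l 0 ^ 2)).lk b 6 := by
  set e := perm (l 0 * (l 2 * l 3))
  have he6 : e ^ 6 = 1 := by
    have := pow_orderOf_eq_one e
    rwa [h.isCycle.orderOf, h.support_eq, Finset.card_fin] at this
  have hu : perm (l 0 ^ 2) = 1 := by rw [map_pow, ← h.pow_three, ← pow_mul, he6]
  have hcomm : Commute (πB 6 (l 0 * (l 2 * l 3))) (πB 6 (l 0 ^ 2)) := by
    rw [map_mul, map_mul, map_pow]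
    exact ((Commute.refl _).mul_left ((hl.comm 0 2 le_rfl (by omega)).mul_right
      (hl.comm 0 3 (by omega) (by omega))).symm).pow_right 2
  have hinv (a : Fin 6) : (link (l 0 ^ 2)).lk (e a : Fin 6) 6 = (link (l 0 ^ 2)).lk a 6 := by
    have := link_lk_perm_symm_of_commute (by omega) hu hcomm (e a).2.le le_rfl (e a).2.ne
    rwa [link_perm_symm_apply, Equiv.symm_apply_apply, link_perm_symm_last, eq_comm] at this
  have hmove (x : Fin 6) : e x ≠ x := Equiv.Perm.mem_support.1 (h.support_eq ▸ Finset.mem_univ x)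
  obtain ⟨k, rfl⟩ := h.isCycle.exists_pow_eq (hmove b) (hmove a)
  induction k with
  | zero => rfl
  | succ k ih => rw [pow_succ' e, Equiv.Perm.mul_apply, hinv, ih]

theorem dvd_weight_or_even_of_isExotic :
    6 ∣ (weight 0 1 (l 0)).toAdd ∨ Even (weight 1 (1 - 6) (l 0)).toAdd := by
  have h4 := four_mul_weight_of_link_lk_last_eq fun a ha =>
    link_sq_lk_last_eq_of_isExotic hl h ⟨a, ha⟩ 0
  obtain ⟨v, hv⟩ := even_link_lk_last (l 0) 0
  obtain ⟨w, hw⟩ := even_link_lk_last (l 0) ((perm (l 0)).symm 0)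
  rw [link_sq_lk_last, hv, hw] at h4
  have hweight := toAdd_weight 1 (1 - 6) (l 0)
  obtain ⟨k, hk⟩ := odd_weight_of_isExotic h
  rcases Int.even_or_odd (v + w) with ⟨m, hm⟩ | ⟨m, hm⟩
  · exact .inl ⟨m, by push_cast at h4; linarith⟩
  · exact .inr ⟨k - 15 * m - 7, by push_cast at h4; linarith⟩

end ExoticPermutations

/-! ### Surjective endomorphisms of `Ā` -/

theorem eq_conj_freeSwap_or_isExotic (hn : 5 ≤ n) {f : ArtinB n →* Equiv.Perm (Fin n)}
    (hf : Function.Surjective f) :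
    (∃ σ, ∀ i, i + 1 < n → f (rB n (i + 1)) = σ * freeSwap n i * σ⁻¹) ∨
      IsExotic (f (rB n 1)) (f (rB n 1 * (rB n 3 * rB n 4))) := by
  have hbraid := (isArtinBSeq_rB n).isBraidSeq.map f
  have hr (i : ℕ) (hi : i + 1 < n - 1) :
      SemiconjBy (f (ρB n)) (f (rB n (i + 1))) (f (rB n (i + 1 + 1))) :=
    ((isArtinBSeq_rB n).prod_semiconjBy (by omega)).map f
  have hgen : Subgroup.closure {f (ρB n), f (rB n (0 + 1))} = ⊤ := by
    rw [← Set.image_pair, ← MonoidHom.map_closure, zero_add, ← tB_eq_rB one_pos (by omega),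
      closure_ρB_tB (by omega), Subgroup.map_top_of_surjective f hf]
  refine (hbraid.isSwap_or_isExotic hn (Fintype.card_fin n) hr hgen).imp (fun hs => ?_) fun he => ?_
  · obtain ⟨σ, hσ⟩ := hbraid.exists_equiv_eq_swap hn (Fintype.card_fin n) hr hgen hs
    exact ⟨σ, fun i hi => by rw [hσ i hi, Equiv.swap_apply_apply, freeSwap_of_lt hi]⟩
  · rwa [map_mul, map_mul]

theorem dvd_weight_of_perm_eq_conj_freeSwap (hn : 5 ≤ n) {l : ℕ → ArtinB n}
    (hl : IsBraidSeq (n - 1) fun i => πB n (l i)) {σ : Equiv.Perm (Fin n)}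
    (hperm : ∀ i, i + 1 < n → perm (l i) = σ * freeSwap n i * σ⁻¹) :
    (n : ℤ) ∣ (weight 0 1 (l 0)).toAdd := by
  obtain ⟨g, rfl⟩ := perm_surjective σ
  have h := dvd_weight_of_perm_eq_freeSwap hn (l := fun i => g⁻¹ * l i * g)
    (by simpa [MulAut.conj_apply] using hl.map (MulAut.conj (πB n g)⁻¹).toMonoidHom)
    fun i hi => by
      rw [map_mul, map_mul, map_inv, hperm i hi]
      group
  have hweight : weight 0 1 (g⁻¹ * l 0 * g) = weight 0 1 (l 0) :=
    (isConj_iff_eq.1 ((weight 0 1).map_isConj (isConj_iff.2 ⟨g⁻¹, by rw [inv_inv]⟩))).symm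
  rwa [hweight] at h

/-- The permutation of the free strands, as a homomorphism on `Ā`. -/
def permBar (hn : 3 ≤ n) : AbarB n →* Equiv.Perm (Fin n) :=
  QuotientGroup.lift _ perm fun _ hz => perm_eq_one_of_mem_center hn hz

/-- The homomorphism `Ā → ℤ` with `t̄_i ↦ 1` and `ρ̄ ↦ 0`. -/
def weightBar (hn : 3 ≤ n) : AbarB n →* Multiplicative ℤ :=
  QuotientGroup.lift _ (weight 1 (1 - n)) fun _ hz => weight_eq_one_of_mem_center hn hz

/-- The exponent sum of `r_n` modulo `n`, as a homomorphism on `Ā`. -/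
def weightMod (hn : 3 ≤ n) : AbarB n →* Multiplicative (ZMod n) :=
  QuotientGroup.lift _ ((Int.castAddHom (ZMod n)).toMultiplicative.comp (weight 0 1)) fun _ hz =>
    (ZMod.intCast_zmod_eq_zero_iff_dvd _ n).2 (dvd_weight_of_mem_center hn hz)

theorem weightMod_πB_eq_one_iff (hn : 3 ≤ n) {g : ArtinB n} :
    weightMod hn (πB n g) = 1 ↔ (n : ℤ) ∣ (weight 0 1 g).toAdd :=
  ZMod.intCast_zmod_eq_zero_iff_dvd _ n

theorem weightBar_tbar (hn : 3 ≤ n) (i : ℕ) : weightBar hn (tbar n i) = Multiplicative.ofAdd 1 :=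
  weight_tB 1 (1 - n) (by omega) i

theorem πB_surjective : Function.Surjective (πB n) :=
  QuotientGroup.mk'_surjective _

theorem permBar_surjective (hn : 3 ≤ n) : Function.Surjective (permBar hn) := fun σ =>
  (perm_surjective σ).imp' (πB n) fun _ hg => hg

theorem closure_ρbar_tbar (hn : 2 ≤ n) : Subgroup.closure {ρbar n, tbar n 1} = ⊤ := by
  rw [ρbar, tbar, ← Set.image_pair, ← MonoidHom.map_closure, closure_ρB_tB hn,
    Subgroup.map_top_of_surjective _ πB_surjective]

theorem ρbar_pow (hn : 2 ≤ n) : ρbar n ^ n = 1 :=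
  (QuotientGroup.eq_one_iff _).2 (ρB_pow_mem_center hn)

theorem map_mem_zpowers_map_tbar (hn : 2 ≤ n) (χ : AbarB n →* Multiplicative ℤ) (x : AbarB n) :
    χ x ∈ Subgroup.zpowers (χ (tbar n 1)) := by
  have hρ : χ (ρbar n) = 1 :=
    (pow_eq_one_iff_left (by omega)).1 (by rw [← map_pow, ρbar_pow hn, map_one] : _ ^ n = _)
  have htop : (Subgroup.zpowers (χ (tbar n 1))).comap χ = ⊤ := by
    rw [eq_top_iff, ← closure_ρbar_tbar hn, Subgroup.closure_le]
    exact Set.pair_subset (by simp [hρ, one_mem]) (Subgroup.mem_zpowers (χ (tbar n 1)))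
  exact htop.ge (Subgroup.mem_top x)

theorem odd_weightBar_map_tbar (hn : 3 ≤ n) {φ : AbarB n →* AbarB n}
    (hφ : Function.Surjective φ) : Odd (weightBar hn (φ (tbar n 1))).toAdd := by
  obtain ⟨y, hy⟩ := hφ (tbar n 1)
  obtain ⟨k, hk⟩ := map_mem_zpowers_map_tbar (by omega) ((weightBar hn).comp φ) y
  have h1 : k * (weightBar hn (φ (tbar n 1))).toAdd = 1 := by
    simpa [hy, weightBar_tbar] using congrArg Multiplicative.toAdd hk
  exact (Int.odd_mul.1 (h1 ▸ odd_one)).2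

theorem weightMod_map_tbar (hn : 5 ≤ n) {φ : AbarB n →* AbarB n} (hφ : Function.Surjective φ) :
    weightMod (by omega) (φ (tbar n 1)) = 1 := by
  have hn3 : 3 ≤ n := by omega
  have hf : Function.Surjective ((permBar hn3).comp (φ.comp (πB n))) :=
    (permBar_surjective hn3).comp (hφ.comp πB_surjective)
  choose l hl using fun i => πB_surjective (φ (πB n (rB n (i + 1))))
  have hperm (i : ℕ) : perm (l i) = permBar hn3 (φ (πB n (rB n (i + 1)))) :=
    congrArg (permBar hn3) (hl i)
  have hbraid : IsBraidSeq (n - 1) fun i => πB n (l i) := by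
    simp only [hl]
    exact (isArtinBSeq_rB n).isBraidSeq.map (φ.comp (πB n))
  rw [tbar, tB_eq_rB one_pos (by omega), ← zero_add 1, ← hl 0, weightMod_πB_eq_one_iff]
  rcases eq_conj_freeSwap_or_isExotic hn hf with ⟨σ, hσ⟩ | he
  · exact dvd_weight_of_perm_eq_conj_freeSwap hn hbraid fun i hi => (hperm i).trans (hσ i hi)
  obtain rfl : n = 6 := by rw [← he.card_eq, Fintype.card_fin]
  refine (dvd_weight_or_even_of_isExotic hbraid ?_).resolve_right fun heven => ?_
  · simpa only [map_mul, hperm, MonoidHom.comp_apply, zero_add] using he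
  · refine Int.not_even_iff_odd.2 (odd_weightBar_map_tbar hn3 hφ) ?_
    rwa [tbar, tB_eq_rB one_pos (by omega), ← zero_add 1, ← hl 0]

/-! ### The subgroup generated by the `t̄_i` -/

/-- The subgroup `H` of `Ā` generated by `t̄_0, …, t̄_{n-1}`. -/
def tbarSubgroup (n : ℕ) : Subgroup (AbarB n) :=
  Subgroup.closure {x | ∃ i < n, x = tbar n i}

theorem tbarSubgroup_eq_closure_range (hn : 0 < n) :
    tbarSubgroup n = Subgroup.closure (Set.range (tbar n)) := by
  refine congrArg _ (Set.Subset.antisymm ?_ ?_)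
  · rintro _ ⟨i, -, rfl⟩
    exact ⟨i, rfl⟩
  · rintro _ ⟨i, rfl⟩
    exact ⟨i % n, Nat.mod_lt i hn, congrArg (πB n) (tB_mod n i).symm⟩

theorem tbar_mem_tbarSubgroup (hn : 0 < n) (i : ℕ) : tbar n i ∈ tbarSubgroup n :=
  tbarSubgroup_eq_closure_range hn ▸ Subgroup.subset_closure ⟨i, rfl⟩

theorem ρbar_conj_tbar (hn : 2 ≤ n) (i : ℕ) : ρbar n * tbar n i * (ρbar n)⁻¹ = tbar n (i + 1) :=
  mul_inv_eq_iff_eq_mul.2 ((ρB_semiconjBy_tB hn i).map (πB n)).eq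

theorem ρbar_mem_normalizer (hn : 2 ≤ n) :
    ρbar n ∈ Subgroup.normalizer (tbarSubgroup n : Set (AbarB n)) := by
  rw [tbarSubgroup_eq_closure_range (by omega)]
  refine Subgroup.normalizer_le_normalizer_closure _
    (Subgroup.mem_set_normalizer_iff.2 fun x => ⟨?_, ?_⟩)
  · rintro ⟨i, rfl⟩
    exact ⟨i + 1, (ρbar_conj_tbar hn i).symm⟩
  · rintro ⟨i, hi⟩
    refine ⟨i + n - 1, mul_left_cancel (a := ρbar n) (mul_right_cancel (b := (ρbar n)⁻¹) ?_)⟩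
    rw [ρbar_conj_tbar hn, Nat.sub_add_cancel (by omega), ← hi, tbar, tB_add_self, tbar]

theorem tbarSubgroup_normal (hn : 2 ≤ n) : (tbarSubgroup n).Normal := by
  rw [← Subgroup.normalizer_eq_top_iff, eq_top_iff, ← closure_ρbar_tbar hn, Subgroup.closure_le]
  exact Set.pair_subset (ρbar_mem_normalizer hn)
    (Subgroup.le_normalizer (tbar_mem_tbarSubgroup (by omega) 1))

theorem tbarSubgroup_sup_zpowers (hn : 2 ≤ n) :
    tbarSubgroup n ⊔ Subgroup.zpowers (ρbar n) = ⊤ := by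
  rw [eq_top_iff, ← closure_ρbar_tbar hn, Subgroup.closure_le]
  exact Set.pair_subset (Subgroup.mem_sup_right (Subgroup.mem_zpowers _))
    (Subgroup.mem_sup_left (tbar_mem_tbarSubgroup (by omega) 1))

theorem tbarSubgroup_eq_ker (hn : 3 ≤ n) : tbarSubgroup n = (weightMod hn).ker := by
  have hle : tbarSubgroup n ≤ (weightMod hn).ker := by
    rw [tbarSubgroup, Subgroup.closure_le]
    rintro _ ⟨i, -, rfl⟩
    exact (weightMod_πB_eq_one_iff hn).2 (by simp [weight_tB 0 1 (show 2 ≤ n by omega) i])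
  refine le_antisymm hle fun x hx => ?_
  have := tbarSubgroup_normal (n := n) (by omega)
  obtain ⟨h, hh, _, ⟨k, rfl⟩, rfl⟩ := Subgroup.mem_sup_of_normal_left.1
    ((tbarSubgroup_sup_zpowers (by omega)).ge (Subgroup.mem_top x))
  have hk : weightMod hn (πB n (ρB n ^ k)) = 1 := by
    rwa [MonoidHom.mem_ker, map_mul, hle hh, one_mul] at hx
  rw [weightMod_πB_eq_one_iff, map_zpow, toAdd_zpow, weight_ρB _ _ (by omega)] at hk
  obtain ⟨m, rfl⟩ : (n : ℤ) ∣ k := by simpa using hk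
  simpa [zpow_mul, ρbar_pow (show 2 ≤ n by omega)] using hh

theorem map_tbarSubgroup_le (hn : 5 ≤ n) {φ : AbarB n →* AbarB n} (hφ : Function.Surjective φ) :
    (tbarSubgroup n).map φ ≤ tbarSubgroup n := by
  rw [tbarSubgroup_eq_ker (by omega), Subgroup.map_le_iff_le_comap, MonoidHom.comap_ker,
    ← tbarSubgroup_eq_ker (by omega), tbarSubgroup, Subgroup.closure_le]
  rintro _ ⟨i, -, rfl⟩
  have hconj := ((weightMod (by omega)).comp (φ.comp (πB n))).map_isConj (isConj_tB (by omega) i)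
  exact (isConj_iff_eq.1 hconj).symm.trans (weightMod_map_tbar hn hφ)

end ArtinB

/-- the subgroup of `Ā = A[Bₙ]/Z(A[Bₙ])` generated by
`t̄_0, …, t̄_{n-1}` is characteristic but not fully characteristic, for `n ≥ 5`. -/
theorem tilde_A_characteristic_not_fully (n : ℕ) (hn : 5 ≤ n) :
    (∀ φ : MulAut (AbarB n),
      Subgroup.map φ.toMonoidHom (Subgroup.closure {x | ∃ i < n, x = tbar n i}) =
        Subgroup.closure {x | ∃ i < n, x = tbar n i}) ∧
    ∃ ψ : AbarB n →* AbarB n,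
      ¬ Subgroup.map ψ (Subgroup.closure {x | ∃ i < n, x = tbar n i}) ≤
        Subgroup.closure {x | ∃ i < n, x = tbar n i} := by
  refine ⟨fun φ => le_antisymm (ArtinB.map_tbarSubgroup_le hn φ.surjective) fun x hx => ?_, ?_⟩
  · exact ⟨φ⁻¹ x, ArtinB.map_tbarSubgroup_le hn (φ := (φ⁻¹ : MulAut _).toMonoidHom)
      φ⁻¹.surjective ⟨x, hx, rfl⟩, φ.apply_symm_apply x⟩
  have hn3 : 3 ≤ n := by omega
  refine ⟨(zpowersHom _ (ρbar n)).comp (ArtinB.weightBar hn3), fun h => ?_⟩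
  have hρ : ρbar n ∈ ArtinB.tbarSubgroup n := by
    have := h ⟨tbar n 1, ArtinB.tbar_mem_tbarSubgroup (by omega) 1, rfl⟩
    rwa [MonoidHom.comp_apply, ArtinB.weightBar_tbar, zpowersHom_apply, toAdd_ofAdd,
      zpow_one] at this
  rw [ArtinB.tbarSubgroup_eq_ker hn3] at hρ
  have hdvd := (ArtinB.weightMod_πB_eq_one_iff hn3).1 hρ
  rw [ArtinB.weight_ρB _ _ (by omega), mul_zero, zero_add] at hdvd
  have := Int.le_of_dvd one_pos hdvd
  omega
end
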